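/- arXiv:hep-th/9407124 — 9 statements merged into one kernel-verified Lean document; each statement's English description precedes it below -/
import Mathlib

section
/- In the group algebra ℚ[Sₙ] (n ≥ 1), let θₙ := Σ_{k=0}^{n−1} (−1)^k Σ_{σ : Des(σ) = {1,2,…,k}} σ, the alternating sum of the sums of permutations whose descent set is exactly the initial segment {1,…,k} (the k = 0 term being the identity permutation, whose descent set is empty). Then θₙ · θₙ = n · θₙ (Dynkin's theorem; this is the group-algebra form of the internal-product identity Ψ_n ∗ Ψ_n = nΨ_n for noncommutative symmetric functions). -/
open Finset

namespace Descents10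

noncomputable section

/-- The descent set of a permutation `σ` of `{0,…,n}`: the set of `i ∈ Fin n`
(representing the position `i+1 ∈ {1,…,n}`) with `σ(i) > σ(i+1)`. -/
def Des {n : ℕ} (σ : Equiv.Perm (Fin (n + 1))) : Finset (Fin n) :=
  Finset.univ.filter fun i => σ i.succ < σ i.castSucc

/-- Dynkin's element `θ = ∑_{k=0}^{n−1} (−1)^k ∑_{Des(σ) = {1,…,k}} σ` in the group
algebra of the symmetric group on `n+1` letters. -/
def theta (n : ℕ) : MonoidAlgebra ℚ (Equiv.Perm (Fin (n + 1))) :=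
  ∑ k ∈ Finset.range (n + 1),
    ((-1 : ℚ) ^ k) •
      ∑ σ ∈ Finset.univ.filter
          (fun σ : Equiv.Perm (Fin (n + 1)) =>
            Des σ = Finset.univ.filter fun i : Fin n => (i : ℕ) < k),
        MonoidAlgebra.single σ (1 : ℚ)

/-- free associative algebra -/
abbrev FA (X : Type) := MonoidAlgebra ℚ (FreeMonoid X)

/-- letter -/
def lt {X : Type} (a : X) : FA X := MonoidAlgebra.single (FreeMonoid.of a) 1

/-- word -/
def wd {X : Type} (l : List X) : FA X := MonoidAlgebra.single (FreeMonoid.ofList l) 1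

theorem wd_cons {X : Type} (a : X) (l : List X) : wd (a :: l) = lt a * wd l := by
  simp [wd, lt, FreeMonoid.ofList_cons]

theorem wd_append {X : Type} (l l' : List X) : wd (l ++ l') = wd l * wd l' := by
  simp [wd, FreeMonoid.ofList_append]

theorem wd_single {X : Type} (a : X) : wd [a] = lt a := by
  simp [wd, lt, FreeMonoid.ofList_singleton]

/-- left bracketing -/
def L {X : Type} : List X → FA X
  | [] => 0
  | a :: l => l.foldl (fun x b => x * lt b - lt b * x) (lt a)

theorem L_one {X : Type} (a : X) : L [a] = lt a := rfl

theorem L_snoc {X : Type} (a : X) (l : List X) (b : X) :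
    L (a :: (l ++ [b])) = L (a :: l) * lt b - lt b * L (a :: l) := by
  simp [L]

/-- Dynkin operator -/
def D {X : Type} : FA X →ₗ[ℚ] FA X :=
  (Finsupp.linearCombination ℚ (fun w : FreeMonoid X => L w.toList)) ∘ₗ
    (MonoidAlgebra.coeffLinearEquiv ℚ).toLinearMap

theorem D_wd {X : Type} (l : List X) : D (wd l) = L l := by
  simp [D, wd]

theorem fa_ind {X : Type} {f g : FA X →ₗ[ℚ] FA X} (h : ∀ l, f (wd l) = g (wd l)) : f = g := by
  ext w : 2
  exact h w.toList

theorem D_cons_snoc {X : Type} (b a : X) (y : FA X) :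
    D (lt b * (y * lt a)) = D (lt b * y) * lt a - lt a * D (lt b * y) := by
  have : D ∘ₗ LinearMap.mulLeft ℚ (lt b) ∘ₗ LinearMap.mulRight ℚ (lt a) =
      (LinearMap.mulRight ℚ (lt a) - LinearMap.mulLeft ℚ (lt a)) ∘ₗ
        D ∘ₗ LinearMap.mulLeft ℚ (lt b) := by
    apply fa_ind
    intro l
    simp only [LinearMap.comp_apply, LinearMap.mulLeft_apply, LinearMap.mulRight_apply,
      LinearMap.sub_apply]
    rw [← wd_single a, ← wd_append, ← wd_cons, ← wd_cons, D_wd, D_wd, L_snoc, wd_single]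
  exact LinearMap.congr_fun this y

theorem D_cons_L {X : Type} (b a : X) (l : List X) : ∀ (y : FA X),
    D (lt b * (y * L (a :: l))) = D (lt b * y) * L (a :: l) - L (a :: l) * D (lt b * y) := by
  induction l using List.reverseRecOn with
  | nil => intro y; exact D_cons_snoc b a y
  | append_singleton l c ih =>
    intro y
    rw [L_snoc]
    have h1 := D_cons_snoc b c (y * L (a :: l))
    have h2 := ih (y * lt c)
    rw [ih y] at h1
    rw [D_cons_snoc] at h2
    have : lt b * (y * (L (a :: l) * lt c - lt c * L (a :: l))) =
      lt b * (y * L (a :: l) * lt c) - lt b * (y * lt c * L (a :: l)) := by noncomm_ring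
    rw [this, map_sub, h1, h2]
    noncomm_ring

theorem D_L_mul {X : Type} (a c : X) (l : List X) : ∀ (y : FA X),
    D (L (a :: l) * y * lt c) = D (L (a :: l) * y) * lt c - lt c * D (L (a :: l) * y) := by
  induction l using List.reverseRecOn with
  | nil => intro y; rw [L_one, mul_assoc]; exact D_cons_snoc a c y
  | append_singleton l b ih =>
    intro y
    rw [L_snoc]
    have h1 := ih (lt b * y)
    have h2 := D_cons_snoc b c (L (a :: l) * y)
    have e1 : (L (a :: l) * lt b - lt b * L (a :: l)) * y * lt c =
      L (a :: l) * (lt b * y) * lt c - lt b * (L (a :: l) * y * lt c) := by noncomm_ring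
    have e2 : (L (a :: l) * lt b - lt b * L (a :: l)) * y =
      L (a :: l) * (lt b * y) - lt b * (L (a :: l) * y) := by noncomm_ring
    rw [e1, e2, map_sub, map_sub, h1, h2]
    noncomm_ring

theorem D_L {X : Type} (a : X) (l : List X) :
    D (L (a :: l)) = ((l.length + 1 : ℚ)) • L (a :: l) := by
  induction l using List.reverseRecOn with
  | nil => rw [L_one, ← wd_single, D_wd, L_one, wd_single]; simp
  | append_singleton l c ih =>
    rw [L_snoc, map_sub]
    have h1 := D_L_mul a c l 1
    have h2 := D_cons_L c a l 1
    rw [mul_one, ih] at h1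
    rw [one_mul, mul_one] at h2
    have h3 : D (lt c) = lt c := by rw [← wd_single, D_wd, L_one, wd_single]
    rw [h1, h2, h3]
    simp only [List.length_append, List.length_singleton, smul_mul_assoc, mul_smul_comm]
    push_cast
    module

/-- relabelling -/
def rel {X Y : Type} (f : X → Y) : FA X →ₐ[ℚ] FA Y :=
  MonoidAlgebra.mapDomainAlgHom ℚ ℚ (FreeMonoid.map f)

theorem rel_wd {X Y : Type} (f : X → Y) (l : List X) : rel f (wd l) = wd (l.map f) := by
  simp [rel, wd, FreeMonoid.ofList_map]

theorem rel_L {X Y : Type} (f : X → Y) (l : List X) : rel f (L l) = L (l.map f) := by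
  have hl : ∀ a, rel f (lt a) = lt (f a) := by
    intro a; rw [← wd_single, rel_wd]; exact wd_single _
  cases l with
  | nil => simp [L]
  | cons a l =>
    induction l using List.reverseRecOn with
    | nil => simp [L_one, hl]
    | append_singleton l c ih =>
      rw [L_snoc, map_sub, map_mul, map_mul, ih, hl]
      simp only [List.map_cons, List.map_append, List.map_nil, L_snoc]

/-- signed V-shape indicator -/
def cV {X : Type} [LinearOrder X] : List X → ℚ
  | [] => 0
  | [_] => 1
  | a :: b :: w => if b < a then - cV (b :: w) else
      if (a :: b :: w).IsChain (fun x y => ¬ y < x) then 1 else 0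

theorem cV_max_cons {X : Type} [LinearOrder X] (m : X) (v : List X) (hv : v ≠ [])
    (h : ∀ x ∈ v, x < m) : cV (m :: v) = - cV v := by
  cases v with
  | nil => exact absurd rfl hv
  | cons b w => simp [cV, h b (by simp)]

theorem cV_snoc_max {X : Type} [LinearOrder X] (m : X) (v : List X) (hv : v ≠ [])
    (h : ∀ x ∈ v, x < m) : cV (v ++ [m]) = cV v := by
  induction v with
  | nil => exact absurd rfl hv
  | cons a w ih =>
    cases w with
    | nil => 
      have := h a (by simp)
      simp [cV, this.le]
    | cons b w =>
      have ih := ih (by simp) (fun x hx => h x (by simp_all))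
      have hc : ((a :: b :: w) ++ [m]).IsChain (fun x y => ¬ y < x) ↔
          (a :: b :: w).IsChain (fun x y => ¬ y < x) := by
        rw [List.isChain_append]
        constructor
        · exact fun h => h.1
        · intro h'
          refine ⟨h', by simp, ?_⟩
          intro x hx y hy
          have := h x (List.mem_of_getLast? hx)
          simp at hy
          subst hy
          exact not_lt.2 this.le
      simp only [List.cons_append] at ih hc ⊢
      simp only [cV, ih, hc]

theorem cV_mid {X : Type} [LinearOrder X] (m : X) (u v : List X) (hu : u ≠ []) (hv : v ≠ [])
    (h : ∀ x ∈ u, x < m) (h' : ∀ x ∈ v, x < m) : cV (u ++ m :: v) = 0 := by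
  obtain ⟨z, v, rfl⟩ := List.exists_cons_of_ne_nil hv
  have hz := h' z (by simp)
  induction u with
  | nil => exact absurd rfl hu
  | cons a w ih =>
    cases w with
    | nil => 
      have := h a (by simp)
      simp [cV, not_lt.2 this.le, hz]
    | cons b w =>
      have ih := ih (by simp) (fun x hx => h x (by simp_all))
      have hc : ¬ ((a :: b :: w) ++ m :: z :: v).IsChain (fun x y => ¬ y < x) := by
        rw [List.isChain_append]
        rintro ⟨-, h2, -⟩
        exact (List.isChain_cons_cons.1 h2).1 hz
      simp only [List.cons_append] at ih hc ⊢
      simp only [cV, ih, hc]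
      simp

theorem coeff_snoc {X : Type} (x : FA X) (m : X) (w : List X) :
    (x * lt m).coeff (FreeMonoid.ofList (w ++ [m])) = x.coeff (FreeMonoid.ofList w) := by
  rw [lt, MonoidAlgebra.coeff_mul_single_eq_coeff_mul (m₂ := FreeMonoid.ofList w)]
  · simp
  · intro a _
    rw [FreeMonoid.ofList_append, FreeMonoid.ofList_singleton]
    exact mul_left_inj _

theorem coeff_cons {X : Type} (x : FA X) (m : X) (w : List X) :
    (lt m * x).coeff (FreeMonoid.ofList (m :: w)) = x.coeff (FreeMonoid.ofList w) := by
  rw [lt, MonoidAlgebra.coeff_single_mul_eq_mul_coeff (m₂ := FreeMonoid.ofList w)]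
  · simp
  · intro a _
    rw [FreeMonoid.ofList_cons]
    exact mul_right_inj _

theorem coeff_snoc_no {X : Type} (x : FA X) (m : X) (w : List X) (h : ∀ w', w ≠ w' ++ [m]) :
    (x * lt m).coeff (FreeMonoid.ofList w) = 0 := by
  apply MonoidAlgebra.mul_single_apply_of_not_exists_mul
  rintro ⟨d, hd⟩
  exact h d.toList (by simpa using congrArg FreeMonoid.toList hd)

theorem coeff_cons_no {X : Type} (x : FA X) (m : X) (w : List X) (h : ∀ w', w ≠ m :: w') :
    (lt m * x).coeff (FreeMonoid.ofList w) = 0 := by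
  apply MonoidAlgebra.single_mul_apply_of_not_exists_mul
  rintro ⟨d, hd⟩
  exact h d.toList (by simpa using congrArg FreeMonoid.toList hd)

theorem coeff_L {X : Type} [LinearOrder X] (a : X) (t : List X) (hs : (a :: t).Pairwise (· < ·)) :
    ∀ w : List X, (L (a :: t)).coeff (FreeMonoid.ofList w) =
      if w.Perm (a :: t) then cV w else 0 := by
  induction t using List.reverseRecOn with
  | nil =>
    intro w
    classical
    rw [L_one, lt, MonoidAlgebra.coeff_single, Finsupp.single_apply]
    have : FreeMonoid.of a = FreeMonoid.ofList w ↔ w = [a] :=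
      ⟨fun h => (congrArg FreeMonoid.toList h).symm, fun h => by subst h; rfl⟩
    simp only [this, List.perm_singleton]
    split_ifs with h
    · subst h; rfl
    · rfl
  | append_singleton t m ih =>
    intro w
    have hs' : ((a :: t) ++ [m]).Pairwise (· < ·) := hs
    rw [List.pairwise_append] at hs'
    have ih := ih hs'.1
    have hm : ∀ x ∈ a :: t, x < m := fun x hx => hs'.2.2 x hx m (by simp)
    have hne : a :: t ≠ [] := by simp
    have hcons : a :: (t ++ [m]) = (a :: t) ++ [m] := rfl
    rw [L_snoc, hcons]
    generalize a :: t = l at *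
    rw [MonoidAlgebra.coeff_sub, Finsupp.sub_apply]
    by_cases hp : w.Perm (l ++ [m])
    · rw [if_pos hp]
      have hmw : m ∈ w := hp.mem_iff.2 (by simp)
      obtain ⟨u, v, rfl⟩ := List.append_of_mem hmw
      have hp2 : (u ++ v).Perm l := by
        have h1 : (m :: (u ++ v)).Perm (m :: l) :=
          (List.perm_middle.symm.trans hp).trans (List.perm_append_singleton m l)
        exact (List.perm_cons m).1 h1
      have hu : ∀ x ∈ u, x < m := fun x hx => hm x (hp2.mem_iff.1 (by simp [hx]))
      have hv : ∀ x ∈ v, x < m := fun x hx => hm x (hp2.mem_iff.1 (by simp [hx]))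
      have hno1 : v ≠ [] → ∀ w', u ++ m :: v ≠ w' ++ [m] := by
        intro hv0 w' he
        obtain ⟨v', z, rfl⟩ := List.eq_nil_or_concat v |>.resolve_left hv0
        have h3 : (u ++ m :: v') ++ [z] = w' ++ [m] := by simpa using he
        have h4 := (List.append_inj' h3 rfl).2
        simp only [List.cons.injEq, and_true] at h4
        exact (hv z (by simp)).ne h4
      have hno2 : u ≠ [] → ∀ w', u ++ m :: v ≠ m :: w' := by
        intro hu0 w' he
        obtain ⟨z, u, rfl⟩ := List.exists_cons_of_ne_nil hu0
        simp at he
        exact (hu z (by simp)).ne he.1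
      by_cases hu0 : u = []
      · subst hu0
        simp only [List.nil_append] at *
        have hv0 : v ≠ [] := by
          rintro rfl
          exact hne (List.nil_perm.1 hp2)
        rw [coeff_snoc_no _ _ _ (hno1 hv0), coeff_cons, ih, if_pos hp2, cV_max_cons m v hv0 hv]
        ring
      · rw [coeff_cons_no _ _ _ (hno2 hu0)]
        by_cases hv0 : v = []
        · subst hv0
          simp only [List.append_nil] at *
          rw [coeff_snoc, ih, if_pos hp2, cV_snoc_max m u hu0 hu]
          ring
        · rw [coeff_snoc_no _ _ _ (hno1 hv0), cV_mid m u v hu0 hv0 hu hv]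
          ring
    · rw [if_neg hp]
      have h1 : (L l * lt m).coeff (FreeMonoid.ofList w) = 0 := by
        by_cases h : ∃ w', w = w' ++ [m]
        · obtain ⟨w', rfl⟩ := h
          rw [coeff_snoc, ih, if_neg]
          exact fun h => hp (h.append_right _)
        · push Not at h
          exact coeff_snoc_no _ _ _ h
      have h2 : (lt m * L l).coeff (FreeMonoid.ofList w) = 0 := by
        by_cases h : ∃ w', w = m :: w'
        · obtain ⟨w', rfl⟩ := h
          rw [coeff_cons, ih, if_neg]
          exact fun h => hp ((h.cons m).trans (List.perm_append_singleton m l).symm)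
        · push Not at h
          exact coeff_cons_no _ _ _ h
      rw [h1, h2, sub_zero]

theorem cV_ofFn {X : Type} [LinearOrder X] (n : ℕ) : ∀ f : Fin (n + 1) → X,
    (∑ k ∈ Finset.range (n + 1), if (∀ i : Fin n, f i.succ < f i.castSucc ↔ (i : ℕ) < k)
      then (-1 : ℚ) ^ k else 0) = cV (List.ofFn f) := by
  induction n with
  | zero => intro f; simp [cV]
  | succ n ih =>
    intro f
    have ih := ih (fun i => f i.succ)
    have e : List.ofFn f = f 0 :: f 1 :: List.ofFn (fun i : Fin n => f i.succ.succ) := by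
      rw [List.ofFn_succ, List.ofFn_succ]; rfl
    have e' : List.ofFn (fun i => f (Fin.succ i)) =
        f 1 :: List.ofFn (fun i : Fin n => f i.succ.succ) := by
      rw [List.ofFn_succ]; rfl
    rw [Finset.sum_range_succ']
    have hch : (List.ofFn f).IsChain (fun x y => ¬ y < x) ↔
        ∀ i : Fin (n + 1), ¬ f i.succ < f i.castSucc := by
      rw [List.isChain_ofFn]
      constructor
      · intro h i
        exact h i (by omega)
      · intro h i hi
        exact h ⟨i, by omega⟩
    rw [e] at hch
    rw [e, cV, ← e', ← ih]
    rw [← e'] at hch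
    by_cases h0 : f 1 < f 0
    · rw [if_pos h0, if_neg, add_zero, ← Finset.sum_neg_distrib]
      · apply Finset.sum_congr rfl
        intro k _
        have hk : (∀ i : Fin (n + 1), f i.succ < f i.castSucc ↔ (i : ℕ) < k + 1) ↔
            ∀ i : Fin n, f i.succ.succ < f i.castSucc.succ ↔ (i : ℕ) < k := by
          rw [Fin.forall_fin_succ]
          simp [h0]
        simp only [hk]
        split_ifs
        · rw [pow_succ]; ring
        · simp
      · intro h
        have := (h 0).1 (by simpa using h0)
        simp at this
    · rw [if_neg h0, Finset.sum_eq_zero]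
      · simp only [hch]
        simp
      · intro k _
        rw [if_neg]
        intro h
        exact h0 (by simpa using (h 0).2 (by simp))

theorem theta_coeff (n : ℕ) (σ : Equiv.Perm (Fin (n + 1))) :
    (theta n).coeff σ = cV (List.ofFn σ) := by
  rw [← cV_ofFn, theta]
  simp only [MonoidAlgebra.coeff_sum, Finsupp.finsetSum_apply, MonoidAlgebra.coeff_smul,
    Finsupp.smul_apply, MonoidAlgebra.coeff_single, Finsupp.single_apply]
  apply Finset.sum_congr rfl
  intro k _
  rw [Finset.sum_ite_eq']
  simp only [Finset.mem_filter, Finset.mem_univ, true_and, Des, Finset.ext_iff]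
  simp

/-- words of permutations -/
def Phi (n : ℕ) : MonoidAlgebra ℚ (Equiv.Perm (Fin (n + 1))) →ₗ[ℚ] FA (Fin (n + 1)) :=
  MonoidAlgebra.mapDomainLinearMap ℚ ℚ (fun σ => FreeMonoid.ofList (List.ofFn σ))

theorem word_inj (n : ℕ) : Function.Injective
    (fun σ : Equiv.Perm (Fin (n + 1)) => FreeMonoid.ofList (List.ofFn σ)) := by
  intro σ τ h
  have := List.ofFn_injective (FreeMonoid.ofList.injective h)
  exact DFunLike.coe_injective this

theorem Phi_inj (n : ℕ) : Function.Injective (Phi n) :=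
  MonoidAlgebra.mapDomain_injective (word_inj n)

theorem Phi_single (n : ℕ) (σ : Equiv.Perm (Fin (n + 1))) :
    Phi n (MonoidAlgebra.single σ 1) = wd (List.ofFn σ) := by
  simp [Phi, wd]

theorem Phi_theta (n : ℕ) : Phi n (theta n) = L (List.ofFn (fun i : Fin (n + 1) => i)) := by
  ext w
  obtain ⟨w, rfl⟩ := FreeMonoid.ofList.surjective w
  have hs : (List.ofFn (fun i : Fin (n + 1) => i)).Pairwise (· < ·) := by
    rw [List.pairwise_ofFn]; exact fun i j h => h
  have hR : (L (List.ofFn (fun i : Fin (n + 1) => i))).coeff (FreeMonoid.ofList w) =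
      if w.Perm (List.ofFn (fun i : Fin (n + 1) => i)) then cV w else 0 := by
    rw [List.ofFn_succ] at hs ⊢
    exact coeff_L _ _ hs w
  rw [hR]
  change Finsupp.mapDomain _ (theta n).coeff _ = _
  split_ifs with h
  · have hlen : w.length = n + 1 := by simpa using h.length_eq
    have hnd : w.Nodup := h.nodup_iff.2 (List.nodup_ofFn.2 fun _ _ h => h)
    have hinj : Function.Injective (fun i : Fin (n + 1) => w.get (i.cast hlen.symm)) := by
      intro i j hij
      simpa using (List.nodup_iff_injective_get.1 hnd) hij
    let σ : Equiv.Perm (Fin (n + 1)) :=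
      Equiv.ofBijective _ (Finite.injective_iff_bijective.1 hinj)
    have hw : w = List.ofFn σ := by
      apply List.ext_get
      · simp [hlen]
      · intro i h1 h2; simp [σ, -List.ofFn_succ]
    rw [hw]
    exact (Finsupp.mapDomain_apply (word_inj n) _ σ).trans (theta_coeff n σ)
  · apply Finsupp.mapDomain_of_notMem_range
    rintro ⟨σ, hσ⟩
    apply h
    have : w = List.ofFn σ := (FreeMonoid.ofList.injective hσ).symm
    rw [this]
    exact Equiv.Perm.ofFn_comp_perm σ (fun i => i)

theorem Phi_mul_single (n : ℕ) (σ : Equiv.Perm (Fin (n + 1)))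
    (y : MonoidAlgebra ℚ (Equiv.Perm (Fin (n + 1)))) :
    Phi n (MonoidAlgebra.single σ 1 * y) = rel σ (Phi n y) := by
  have : Phi n ∘ₗ LinearMap.mulLeft ℚ (MonoidAlgebra.single σ 1) =
      (rel σ).toLinearMap ∘ₗ Phi n := by
    ext τ : 2
    simp [MonoidAlgebra.single_mul_single, Phi_single, rel_wd, List.map_ofFn, Function.comp_def]
  exact LinearMap.congr_fun this y

theorem Phi_mul_theta (n : ℕ) (x : MonoidAlgebra ℚ (Equiv.Perm (Fin (n + 1)))) :
    Phi n (x * theta n) = D (Phi n x) := by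
  have : Phi n ∘ₗ LinearMap.mulRight ℚ (theta n) = D ∘ₗ Phi n := by
    ext σ : 2
    simp [Phi_mul_single, Phi_single, Phi_theta, rel_L, D_wd, List.map_ofFn, Function.comp_def]
  exact LinearMap.congr_fun this x

/-- **Dynkin's theorem** (group-algebra form of `Ψ_n ∗ Ψ_n = n Ψ_n`): in `ℚ[S_{n+1}]`,
the element `θ = ∑_{k} (−1)^k ∑_{Des(σ)={1,…,k}} σ` satisfies `θ·θ = (n+1)·θ`. -/
theorem dynkin_idempotent (n : ℕ) :
    theta n * theta n = ((n + 1 : ℚ)) • theta n := by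
  apply Phi_inj n
  rw [Phi_mul_theta, map_smul, Phi_theta, List.ofFn_succ, D_L]
  simp

end

end Descents10
end

section
/- In the group algebra ℚ[Sₙ] (n ≥ 1), let φₙ := Σ_{σ ∈ Sₙ} (−1)^{d(σ)} C(n−1, d(σ))^{−1} σ, where d(σ) is the number of descents of σ and C(a,b) is the binomial coefficient. Then φₙ · φₙ = n · φₙ; equivalently, (1/n)φₙ is an idempotent of ℚ[Sₙ] (the first Eulerian idempotent; this is the group-algebra form of the internal-product identity Φ_n ∗ Φ_n = nΦ_n). -/
open Finset

namespace Descents11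

noncomputable section

/-- The descent set of a permutation `σ` of `{0,…,n}`: the set of `i ∈ Fin n`
(representing the position `i+1 ∈ {1,…,n}`) with `σ(i) > σ(i+1)`. -/
def Des {n : ℕ} (σ : Equiv.Perm (Fin (n + 1))) : Finset (Fin n) :=
  Finset.univ.filter fun i => σ i.succ < σ i.castSucc

/-- The first Eulerian element
`φ = ∑_{σ} (−1)^{d(σ)} C(n−1, d(σ))⁻¹ σ` in the group algebra of the symmetric group
on `n+1` letters (`d(σ)` = number of descents). -/
def phi (n : ℕ) : MonoidAlgebra ℚ (Equiv.Perm (Fin (n + 1))) :=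
  ∑ σ : Equiv.Perm (Fin (n + 1)),
    ((-1 : ℚ) ^ (Des σ).card / (Nat.choose n (Des σ).card : ℚ)) •
      MonoidAlgebra.single σ (1 : ℚ)

theorem sort_iff {N : ℕ} {α : Type*} [LinearOrder α] (σ : Equiv.Perm (Fin N)) (w : Fin N → α) :
    σ = Tuple.sort w ↔ StrictMono (fun i => toLex (w (σ i), σ i)) :=
  Tuple.eq_sort_iff'.trans Iff.rfl

theorem sort_equiv {N : ℕ} {α β : Type*} [LinearOrder α] [LinearOrder β] (e : α ≃o β)
    (w : Fin N → α) : Tuple.sort (fun i => e (w i)) = Tuple.sort w := by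
  symm
  have h := (sort_iff (Tuple.sort w) w).1 rfl
  rw [sort_iff]
  intro i j hij
  have := h hij
  simpa [Prod.Lex.toLex_lt_toLex] using this

theorem sort_mul {N : ℕ} {α β : Type*} [LinearOrder α] [LinearOrder β]
    (w : Fin N → α) (v : Fin N → β) :
    Tuple.sort w * Tuple.sort v =
      Tuple.sort (fun i => toLex (v ((Tuple.sort w).symm i), w i)) := by
  have h1 := (sort_iff (Tuple.sort w) w).1 rfl
  have h2 := (sort_iff (Tuple.sort v) v).1 rfl
  rw [sort_iff]
  intro i j hij
  have h3 := h2 hij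
  simp only [Prod.Lex.toLex_lt_toLex, Equiv.Perm.mul_apply, Equiv.symm_apply_apply] at h3 ⊢
  rcases h3 with h3 | ⟨h3, h4⟩
  · left; left; exact h3
  · have h5 := h1 h4
    simp only [Prod.Lex.toLex_lt_toLex] at h5
    rcases h5 with h5 | ⟨h5, h6⟩
    · left; right; exact ⟨h3, h5⟩
    · right; exact ⟨by rw [h3, h5], h6⟩

/-- sum of the sorting permutations over all words -/
def W (N : ℕ) (α : Type) [LinearOrder α] [Fintype α] : MonoidAlgebra ℚ (Equiv.Perm (Fin N)) :=
  ∑ w : Fin N → α, MonoidAlgebra.single (Tuple.sort w) (1 : ℚ)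

theorem W_congr (N : ℕ) {α β : Type} [LinearOrder α] [LinearOrder β] [Fintype α] [Fintype β]
    (e : α ≃o β) : W N α = W N β := by
  unfold W
  refine Fintype.sum_equiv (Equiv.arrowCongr (Equiv.refl _) e.toEquiv) _ _ fun w => ?_
  exact congrArg (fun s => MonoidAlgebra.single s (1 : ℚ)) (sort_equiv e w).symm

instance lexFintype (α β : Type) [Fintype α] [Fintype β] : Fintype (Lex (α × β)) :=
  inferInstanceAs (Fintype (α × β))

def wordEquiv (N : ℕ) (α β : Type) [LinearOrder α] [LinearOrder β] :
    ((Fin N → α) × (Fin N → β)) ≃ (Fin N → Lex (β × α)) where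
  toFun x := fun i => toLex (x.2 ((Tuple.sort x.1).symm i), x.1 i)
  invFun u := (fun i => (ofLex (u i)).2,
    fun i => (ofLex (u (Tuple.sort (fun i => (ofLex (u i)).2) i))).1)
  left_inv x := by
    ext i <;> simp
  right_inv u := by
    funext i; simp

theorem W_mul (N : ℕ) (α β : Type) [LinearOrder α] [LinearOrder β] [Fintype α] [Fintype β] :
    W N α * W N β = W N (Lex (β × α)) := by
  unfold W
  rw [Finset.sum_mul_sum, ← Fintype.sum_prod_type']
  refine Fintype.sum_equiv (wordEquiv N α β) _ _ fun x => ?_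
  rw [MonoidAlgebra.single_mul_single, sort_mul, one_mul]
  rfl

theorem W_mul_fin (N p q : ℕ) : W N (Fin p) * W N (Fin q) = W N (Fin (p * q)) := by
  rw [W_mul]
  exact W_congr N (Fintype.orderIsoFinOfCardEq _
    (by rw [Fintype.card_congr (ofLex : Lex (Fin q × Fin p) ≃ _)]; simp [mul_comm])).symm

/-- offset -/
def off {n : ℕ} (σ : Equiv.Perm (Fin (n + 1))) (i : Fin (n + 1)) : ℕ :=
  (univ.filter fun j : Fin n => j.castSucc < i ∧ j ∉ Des σ).card

theorem off_zero {n : ℕ} (σ : Equiv.Perm (Fin (n + 1))) : off σ 0 = 0 := by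
  simp [off]

theorem off_last {n : ℕ} (σ : Equiv.Perm (Fin (n + 1))) :
    off σ (Fin.last n) = n - (Des σ).card := by
  have : (univ.filter fun j : Fin n => j.castSucc < Fin.last n ∧ j ∉ Des σ) = (Des σ)ᶜ := by
    ext j; simp [Fin.castSucc_lt_last]
  rw [off, this, card_compl, Fintype.card_fin]

theorem off_succ {n : ℕ} (σ : Equiv.Perm (Fin (n + 1))) (i : Fin n) :
    off σ i.succ = off σ i.castSucc + if i ∈ Des σ then 0 else 1 := by
  unfold off
  split_ifs with h
  · rw [add_zero]
    congr 1
    ext j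
    simp only [mem_filter, mem_univ, true_and]
    refine and_congr_left fun hj => ?_
    have : j ≠ i := fun e => hj (e ▸ h)
    simp only [Fin.lt_def, Fin.val_castSucc, Fin.val_succ, ne_eq, Fin.ext_iff] at *
    omega
  · rw [← card_insert_of_notMem (a := i) (by simp)]
    congr 1
    ext j
    simp only [mem_filter, mem_univ, true_and, mem_insert]
    by_cases hj : j = i
    · subst hj; simp [h]
    · simp only [hj, false_or]
      refine and_congr_left fun _ => ?_
      simp only [Fin.lt_def, Fin.val_castSucc, Fin.val_succ, Fin.ext_iff] at *
      omega

theorem sort_iff_off {n p : ℕ} (σ : Equiv.Perm (Fin (n + 1))) (w : Fin (n + 1) → Fin p) :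
    σ = Tuple.sort w ↔ StrictMono (fun i => (w (σ i) : ℕ) + off σ i) := by
  rw [sort_iff, Fin.strictMono_iff_lt_succ, Fin.strictMono_iff_lt_succ]
  refine forall_congr' fun i => ?_
  rw [off_succ]
  have hne : σ i.castSucc ≠ σ i.succ := fun h => by
    have := σ.injective h
    simp [Fin.ext_iff] at this
  simp only [Prod.Lex.toLex_lt_toLex, Des, mem_filter, mem_univ, true_and]
  simp only [Fin.lt_def, Fin.ext_iff, ne_eq] at *
  split_ifs <;> omega

theorem mono_bound {n p : ℕ} (σ : Equiv.Perm (Fin (n + 1)))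
    (g : Fin (n + 1) ↪o Fin (p + (n - (Des σ).card))) (i : Fin (n + 1)) :
    off σ i ≤ g i ∧ (g i : ℕ) - off σ i < p := by
  have hs : ∀ i : Fin n, (g i.castSucc : ℕ) < g i.succ := fun i =>
    g.strictMono (Fin.castSucc_lt_succ)
  have h1 : ∀ i, off σ i ≤ g i := by
    intro i
    induction i using Fin.induction with
    | zero => simp [off_zero]
    | succ i ih =>
      have := hs i
      rw [off_succ]
      split_ifs <;> omega
  refine ⟨h1 i, ?_⟩
  have hm : Monotone fun i => (g i : ℕ) - off σ i := by
    rw [Fin.monotone_iff_le_succ]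
    intro i
    have := hs i
    have := h1 i.castSucc
    rw [off_succ]
    split_ifs <;> omega
  have h2 := hm (Fin.le_last i)
  have h3 := (g (Fin.last n)).isLt
  have h4 := h1 (Fin.last n)
  simp only [off_last] at h2 h4
  omega

theorem off_le {n : ℕ} (σ : Equiv.Perm (Fin (n + 1))) (i : Fin (n + 1)) :
    off σ i ≤ n - (Des σ).card := by
  rw [← off_last]
  unfold off
  apply card_le_card
  intro j
  simp +contextual [Fin.castSucc_lt_last]

def countEquiv {n : ℕ} (p : ℕ) (σ : Equiv.Perm (Fin (n + 1))) :
    {w : Fin (n + 1) → Fin p // σ = Tuple.sort w} ≃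
      (Fin (n + 1) ↪o Fin (p + (n - (Des σ).card))) where
  toFun w := OrderEmbedding.ofStrictMono
    (fun i => ⟨(w.1 (σ i) : ℕ) + off σ i, by
      have := off_le σ i
      have := (w.1 (σ i)).isLt
      omega⟩) (fun i j hij => (sort_iff_off σ w.1).1 w.2 hij)
  invFun g := ⟨fun j => ⟨(g (σ.symm j) : ℕ) - off σ (σ.symm j), (mono_bound σ g _).2⟩, by
    rw [sort_iff_off]
    intro i j hij
    have h1 := (mono_bound σ g i).1
    have h2 := (mono_bound σ g j).1
    have h3 : (g i : ℕ) < g j := g.strictMono hij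
    simp only [Equiv.symm_apply_apply]
    omega⟩
  left_inv w := by
    ext i
    change (w.1 (σ (σ.symm i)) : ℕ) + off σ (σ.symm i) - off σ (σ.symm i) = w.1 i
    simp
  right_inv g := by
    ext i
    have h1 := (mono_bound σ g i).1
    simp
    omega

theorem count {n : ℕ} (p : ℕ) (σ : Equiv.Perm (Fin (n + 1))) :
    (univ.filter fun w : Fin (n + 1) → Fin p => σ = Tuple.sort w).card =
      (p + (n - (Des σ).card)).choose (n + 1) := by
  rw [← Fintype.card_subtype, ← Nat.card_eq_fintype_card, Nat.card_congr (countEquiv p σ),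
    Nat.card_congr Set.powersetCard.ofFinEmbEquiv, Set.powersetCard.card, Nat.card_fin]

open Polynomial in
/-- the polynomial -/
def F (n d : ℕ) : ℚ[X] :=
  C ((1 : ℚ) / (n + 1).factorial) * ∏ i ∈ range (n + 1), (X + C (((n - d : ℕ) : ℚ) - i))

theorem F_eval (n d p : ℕ) : (F n d).eval (p : ℚ) = ((p + (n - d)).choose (n + 1) : ℕ) := by
  have h := descPochhammer_eval_eq_prod_range (n + 1) ((p + (n - d) : ℕ) : ℚ)
  rw [descPochhammer_eval_eq_descFactorial, Nat.descFactorial_eq_factorial_mul_choose] at h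
  simp only [F, Polynomial.eval_mul, Polynomial.eval_C, Polynomial.eval_prod, Polynomial.eval_add,
    Polynomial.eval_X]
  have h2 : ∏ x ∈ range (n + 1), ((p : ℚ) + (((n - d : ℕ) : ℚ) - x)) =
      ∏ j ∈ range (n + 1), (((p + (n - d) : ℕ) : ℚ) - j) := by
    refine prod_congr rfl fun x _ => ?_
    push_cast; ring
  rw [h2, ← h]
  have : ((n + 1).factorial : ℚ) ≠ 0 := by positivity
  push_cast
  field_simp

theorem F_coeff (n d : ℕ) (hd : d ≤ n) :
    (F n d).coeff 1 = (1 / (n + 1 : ℚ)) * ((-1 : ℚ) ^ d / (n.choose d : ℚ)) := by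
  obtain ⟨a, rfl⟩ := Nat.exists_eq_add_of_le' hd
  have e : a + d + 1 = a + (d + 1) := rfl
  have h1 : ∏ i ∈ range a, ((a : ℚ) - i) = a.factorial := by
    rw [← descPochhammer_eval_eq_prod_range, descPochhammer_eval_eq_descFactorial,
      Nat.descFactorial_self]
  have h2 : ∏ i ∈ range d, ((a : ℚ) - (a + (i + 1) : ℕ)) = (-1) ^ d * d.factorial := by
    rw [← Finset.prod_range_add_one_eq_factorial]
    push_cast
    rw [← card_range d, ← prod_const, card_range, ← prod_mul_distrib]
    refine prod_congr rfl fun x _ => ?_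
    ring
  rw [F, e, prod_range_add, prod_range_succ', Polynomial.coeff_C_mul, Nat.add_sub_cancel]
  simp only [add_zero, sub_self, map_zero]
  rw [← mul_assoc, Polynomial.coeff_mul_X, Polynomial.coeff_zero_eq_eval_zero]
  simp only [Polynomial.eval_mul, Polynomial.eval_prod, Polynomial.eval_add, Polynomial.eval_X,
    Polynomial.eval_C, zero_add]
  rw [h1, h2, Nat.cast_choose ℚ hd, Nat.add_sub_cancel, ← e, Nat.factorial_succ]
  have : ((a + d).factorial : ℚ) ≠ 0 := by positivity
  push_cast
  field_simp

theorem W_eq (n p : ℕ) : W (n + 1) (Fin p) =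
    ∑ σ : Equiv.Perm (Fin (n + 1)), MonoidAlgebra.single σ ((F n (Des σ).card).eval (p : ℚ)) := by
  unfold W
  rw [← Finset.sum_fiberwise univ (fun w : Fin (n + 1) → Fin p => Tuple.sort w)]
  refine sum_congr rfl fun σ _ => ?_
  rw [F_eval, ← count]
  rw [sum_congr rfl (g := fun _ => MonoidAlgebra.single σ (1 : ℚ))
    (fun w hw => by rw [(mem_filter.1 hw).2]), sum_const]
  simp only [eq_comm (a := σ)]
  rw [MonoidAlgebra.smul_single, nsmul_eq_mul, mul_one]

/-- element with given coefficients -/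
def A {G : Type} [Fintype G] (f : G → ℚ) : MonoidAlgebra ℚ G :=
  ∑ σ : G, MonoidAlgebra.single σ (f σ)

theorem A_coeff {G : Type} [Fintype G] (f : G → ℚ) (π : G) :
    (A f).coeff π = f π := by
  classical
  simp [A, MonoidAlgebra.coeff_sum, Finsupp.single_apply]

theorem A_mul {G : Type} [Fintype G] [Group G] (f g : G → ℚ) :
    A f * A g = A (fun π => ∑ σ, f σ * g (σ⁻¹ * π)) := by
  classical
  unfold A
  rw [Finset.sum_mul_sum]
  have : ∀ π : G, MonoidAlgebra.single π (∑ σ, f σ * g (σ⁻¹ * π)) =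
      ∑ σ, MonoidAlgebra.single π (f σ * g (σ⁻¹ * π)) := fun π =>
    map_sum (MonoidAlgebra.singleAddHom π) _ _
  simp_rw [this]
  rw [sum_comm (γ := G) (f := fun π σ => MonoidAlgebra.single π (f σ * g (σ⁻¹ * π)))]
  refine sum_congr rfl fun σ _ => ?_
  refine Fintype.sum_equiv (Equiv.mulLeft σ) _ _ fun τ => ?_
  simp

theorem key (n p q : ℕ) (π : Equiv.Perm (Fin (n + 1))) :
    ∑ σ : Equiv.Perm (Fin (n + 1)), (F n (Des σ).card).eval (p : ℚ) *
      (F n (Des (σ⁻¹ * π)).card).eval (q : ℚ) = (F n (Des π).card).eval ((p * q : ℕ) : ℚ) := by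
  have h := W_mul_fin (n + 1) p q
  rw [W_eq, W_eq, W_eq] at h
  change A _ * A _ = A _ at h
  rw [A_mul] at h
  have h2 := congrArg (fun x => x.coeff π) h
  simpa only [A_coeff] using h2

theorem poly_eq (P Q : Polynomial ℚ) (h : ∀ p : ℕ, P.eval (p : ℚ) = Q.eval (p : ℚ)) : P = Q := by
  apply Polynomial.eq_of_infinite_eval_eq
  exact (Set.infinite_range_of_injective (Nat.cast_injective (R := ℚ))).mono
    (by rintro _ ⟨p, rfl⟩; exact h p)

theorem key2 (n q : ℕ) (π : Equiv.Perm (Fin (n + 1))) :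
    ∑ σ : Equiv.Perm (Fin (n + 1)), (F n (Des σ).card).coeff 1 *
      (F n (Des (σ⁻¹ * π)).card).eval (q : ℚ) = (F n (Des π).card).coeff 1 * q := by
  have h := poly_eq (∑ σ : Equiv.Perm (Fin (n + 1)), F n (Des σ).card *
      Polynomial.C ((F n (Des (σ⁻¹ * π)).card).eval (q : ℚ)))
      ((F n (Des π).card).comp (Polynomial.C (q : ℚ) * Polynomial.X)) (fun p => by
        have := key n p q π
        simp only [Polynomial.eval_finsetSum, Polynomial.eval_mul, Polynomial.eval_C,
          Polynomial.eval_comp, Polynomial.eval_X]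
        rw [this]; push_cast; rw [mul_comm])
  have h2 := congrArg (fun P => P.coeff 1) h
  simpa only [Polynomial.finsetSum_coeff, Polynomial.coeff_mul_C, Polynomial.comp_C_mul_X_coeff,
    pow_one] using h2

theorem key3 (n : ℕ) (π : Equiv.Perm (Fin (n + 1))) :
    ∑ σ : Equiv.Perm (Fin (n + 1)), (F n (Des σ).card).coeff 1 *
      (F n (Des (σ⁻¹ * π)).card).coeff 1 = (F n (Des π).card).coeff 1 := by
  have h := poly_eq (∑ σ : Equiv.Perm (Fin (n + 1)), Polynomial.C ((F n (Des σ).card).coeff 1) *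
      (F n (Des (σ⁻¹ * π)).card))
      (Polynomial.C ((F n (Des π).card).coeff 1) * Polynomial.X) (fun q => by
        have := key2 n q π
        simpa only [Polynomial.eval_finsetSum, Polynomial.eval_mul, Polynomial.eval_C,
          Polynomial.eval_X] using this)
  have h2 := congrArg (fun P => P.coeff 1) h
  simpa [Polynomial.finsetSum_coeff, Polynomial.coeff_C_mul] using h2

theorem phi_eq (n : ℕ) :
    phi n = (n + 1 : ℚ) • A (fun σ : Equiv.Perm (Fin (n + 1)) => (F n (Des σ).card).coeff 1) := by
  unfold phi A
  rw [smul_sum]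
  refine sum_congr rfl fun σ _ => ?_
  have hd : (Des σ).card ≤ n := by simpa using card_le_univ (Des σ)
  beta_reduce
  rw [F_coeff n _ hd, MonoidAlgebra.smul_single, MonoidAlgebra.smul_single]
  congr 1
  have : (n + 1 : ℚ) ≠ 0 := by positivity
  simp only [smul_eq_mul]
  field_simp

/-- **The first Eulerian idempotent** (group-algebra form of `Φ_n ∗ Φ_n = n Φ_n`):
in `ℚ[S_{n+1}]`, the element `φ = ∑_σ (−1)^{d(σ)} C(n−1,d(σ))⁻¹ σ` satisfies
`φ·φ = (n+1)·φ`; equivalently, `φ/(n+1)` is idempotent. -/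
theorem eulerian_idempotent (n : ℕ) :
    phi n * phi n = ((n + 1 : ℚ)) • phi n := by
  rw [phi_eq, smul_mul_smul_comm, A_mul, smul_smul]
  simp_rw [key3]

end

end Descents11
end

section
/- In the group algebra ℚ[Sₙ] (n ≥ 1), let θₙ := Σ_{k=0}^{n−1} (−1)^k Σ_{σ : Des(σ) = {1,…,k}} σ (Dynkin's element) and φₙ := Σ_{σ ∈ Sₙ} (−1)^{d(σ)} C(n−1, d(σ))^{−1} σ. Then φₙ · θₙ = n · φₙ and θₙ · φₙ = n · θₙ (the group-algebra form of the internal-product identities Ψ_n ∗ Φ_n = nΦ_n and Φ_n ∗ Ψ_n = nΨ_n). -/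
open Finset

namespace Descents12

noncomputable section

/-- The descent set of a permutation `σ` of `{0,…,n}`: the set of `i ∈ Fin n`
(representing the position `i+1 ∈ {1,…,n}`) with `σ(i) > σ(i+1)`. -/
def Des {n : ℕ} (σ : Equiv.Perm (Fin (n + 1))) : Finset (Fin n) :=
  Finset.univ.filter fun i => σ i.succ < σ i.castSucc

/-- Dynkin's element `θ = ∑_{k=0}^{n−1} (−1)^k ∑_{Des(σ)={1,…,k}} σ` in `ℚ[S_{n+1}]`. -/
def theta (n : ℕ) : MonoidAlgebra ℚ (Equiv.Perm (Fin (n + 1))) :=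
  ∑ k ∈ Finset.range (n + 1),
    ((-1 : ℚ) ^ k) •
      ∑ σ ∈ Finset.univ.filter
          (fun σ : Equiv.Perm (Fin (n + 1)) =>
            Des σ = Finset.univ.filter fun i : Fin n => (i : ℕ) < k),
        MonoidAlgebra.single σ (1 : ℚ)

/-- The first Eulerian element `φ = ∑_σ (−1)^{d(σ)} C(n−1,d(σ))⁻¹ σ` in `ℚ[S_{n+1}]`. -/
def phi (n : ℕ) : MonoidAlgebra ℚ (Equiv.Perm (Fin (n + 1))) :=
  ∑ σ : Equiv.Perm (Fin (n + 1)),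
    ((-1 : ℚ) ^ (Des σ).card / (Nat.choose n (Des σ).card : ℚ)) •
      MonoidAlgebra.single σ (1 : ℚ)

section Helpers

open Polynomial

def ofFun {n : ℕ} (c : Equiv.Perm (Fin (n + 1)) → ℚ) :
    MonoidAlgebra ℚ (Equiv.Perm (Fin (n + 1))) :=
  ∑ σ : Equiv.Perm (Fin (n + 1)), c σ • MonoidAlgebra.single σ (1 : ℚ)

def BS {n : ℕ} (S : Finset (Fin n)) : MonoidAlgebra ℚ (Equiv.Perm (Fin (n + 1))) :=
  ofFun fun σ => if Des σ ⊆ S then 1 else 0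

def DS {n : ℕ} (S : Finset (Fin n)) : MonoidAlgebra ℚ (Equiv.Perm (Fin (n + 1))) :=
  ofFun fun σ => if Des σ = S then 1 else 0

lemma ofFun_mul {n : ℕ} (c e : Equiv.Perm (Fin (n + 1)) → ℚ) :
    ofFun c * ofFun e = ofFun (fun π => ∑ σ, c σ * e (σ⁻¹ * π)) := by
  unfold ofFun
  simp only [Finset.sum_mul, Finset.mul_sum, Finset.sum_smul]
  rw [Finset.sum_comm]
  conv_rhs => rw [Finset.sum_comm]
  refine Finset.sum_congr rfl fun σ _ => ?_
  conv_rhs => rw [← Equiv.sum_comp (Equiv.mulLeft σ)]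
  refine Finset.sum_congr rfl fun τ _ => ?_
  simp [MonoidAlgebra.single_mul_single]

lemma ofFun_sum {n : ℕ} {ι : Type*} (s : Finset ι) (c : ι → Equiv.Perm (Fin (n + 1)) → ℚ) :
    ofFun (fun σ => ∑ i ∈ s, c i σ) = ∑ i ∈ s, ofFun (c i) := by
  unfold ofFun
  simp only [Finset.sum_smul]
  rw [Finset.sum_comm]

lemma ofFun_smul {n : ℕ} (a : ℚ) (c : Equiv.Perm (Fin (n + 1)) → ℚ) :
    ofFun (fun σ => a * c σ) = a • ofFun c := by
  unfold ofFun
  simp only [Finset.smul_sum, mul_smul]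

lemma ofFun_zero {n : ℕ} : ofFun (fun _ : Equiv.Perm (Fin (n + 1)) => 0) = 0 := by
  simp [ofFun]

lemma theta_eq (n : ℕ) : theta n = ∑ k ∈ Finset.range (n + 1),
    ((-1 : ℚ) ^ k) • DS (Finset.univ.filter fun i : Fin n => (i : ℕ) < k) := by
  unfold theta DS ofFun
  refine Finset.sum_congr rfl fun k _ => ?_
  congr 1
  rw [Finset.sum_filter]
  refine Finset.sum_congr rfl fun σ _ => ?_
  beta_reduce
  by_cases h : Des σ = Finset.univ.filter fun i : Fin n => (i : ℕ) < k
  · rw [if_pos h, if_pos h, one_smul]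
  · rw [if_neg h, if_neg h, zero_smul]

lemma phi_ofFun (n : ℕ) : phi n = ofFun (fun σ =>
    ((-1 : ℚ) ^ (Des σ).card / (Nat.choose n (Des σ).card : ℚ))) := rfl

lemma phi_eq (n : ℕ) : phi n = ∑ T ∈ (Finset.univ : Finset (Fin n)).powerset,
    ((-1 : ℚ) ^ T.card / (Nat.choose n T.card : ℚ)) • DS T := by
  rw [phi_ofFun]
  simp only [DS, ← ofFun_smul, ← ofFun_sum]
  congr 1
  ext σ
  simp

lemma BS_eq {n : ℕ} (T : Finset (Fin n)) : BS T = ∑ S ∈ T.powerset, DS S := by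
  simp only [DS, BS, ← ofFun_sum]
  congr 1
  ext σ
  simp

lemma key_one {n : ℕ} {σ : Equiv.Perm (Fin (n + 1))} (h : StrictMono σ) : σ = 1 := by
  ext i
  have := Subsingleton.elim (StrictMono.orderIsoOfSurjective σ h σ.surjective) (OrderIso.refl _)
  have h2 := congrArg (fun e => e i) this
  simpa using congrArg Fin.val h2

lemma DS_empty {n : ℕ} : DS (∅ : Finset (Fin n)) = 1 := by
  have : ∀ σ : Equiv.Perm (Fin (n + 1)), Des σ = ∅ ↔ σ = 1 := by
    intro σ
    constructor
    · intro h
      apply key_one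
      rw [Fin.strictMono_iff_lt_succ]
      intro i
      by_contra hc
      have : i ∈ Des σ := by
        simp only [Des, mem_filter, mem_univ, true_and]
        refine lt_of_le_of_ne (not_lt.mp hc) fun h => ?_
        have := σ.injective h
        exact absurd this (Fin.castSucc_lt_succ).ne'
      simp [h] at this
    · rintro rfl
      ext i
      simp [Des, Fin.lt_def]
  simp [DS, ofFun, this, MonoidAlgebra.one_def]

lemma mul_DS {n : ℕ} (x : MonoidAlgebra ℚ (Equiv.Perm (Fin (n + 1))))
    (hx : ∀ S : Finset (Fin n), S.Nonempty → x * BS S = 0) (T : Finset (Fin n)) :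
    x * DS T = ((-1 : ℚ) ^ T.card) • x := by
  induction T using Finset.strongInduction with
  | H T ih =>
    rcases T.eq_empty_or_nonempty with rfl | hT
    · simp [DS_empty]
    · have h := hx T hT
      rw [BS_eq, Finset.mul_sum, ← Finset.insert_erase (Finset.mem_powerset_self T),
        Finset.sum_insert (by simp)] at h
      have h2 : ∑ S ∈ T.powerset.erase T, x * DS S
          = ∑ S ∈ T.powerset.erase T, ((-1 : ℚ) ^ S.card) • x := by
        refine Finset.sum_congr rfl fun S hS => ih S ?_
        simp only [mem_erase, mem_powerset] at hS
        exact lt_of_le_of_ne hS.2 hS.1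
      have h3 : ∑ S ∈ T.powerset, ((-1 : ℚ) ^ S.card) = 0 := by
        have := Finset.sum_powerset_neg_one_pow_card (x := T)
        rw [if_neg hT.ne_empty] at this
        exact_mod_cast this
      rw [← Finset.insert_erase (Finset.mem_powerset_self T),
        Finset.sum_insert (by simp)] at h3
      rw [h2, ← Finset.sum_smul] at h
      rw [eq_neg_of_add_eq_zero_left h, eq_neg_of_add_eq_zero_left h3, neg_smul]

lemma mul_theta {n : ℕ} (x : MonoidAlgebra ℚ (Equiv.Perm (Fin (n + 1))))
    (hx : ∀ S : Finset (Fin n), S.Nonempty → x * BS S = 0) :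
    x * theta n = (n + 1 : ℚ) • x := by
  rw [theta_eq, Finset.mul_sum]
  have : ∀ k ∈ Finset.range (n+1), x * (((-1 : ℚ) ^ k) • DS (Finset.univ.filter fun i : Fin n => (i : ℕ) < k)) = x := by
    intro k hk
    rw [mul_smul_comm, mul_DS x hx, smul_smul, Fin.card_filter_val_lt]
    have : min n k = k := by simp at hk; omega
    rw [this, ← mul_pow]; simp
  rw [Finset.sum_congr rfl this, Finset.sum_const, ← Nat.cast_smul_eq_nsmul ℚ]
  simp

lemma mul_phi {n : ℕ} (x : MonoidAlgebra ℚ (Equiv.Perm (Fin (n + 1))))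
    (hx : ∀ S : Finset (Fin n), S.Nonempty → x * BS S = 0) :
    x * phi n = (n + 1 : ℚ) • x := by
  rw [phi_eq, Finset.mul_sum]
  have : ∀ T ∈ (Finset.univ : Finset (Fin n)).powerset, x * (((-1 : ℚ) ^ T.card / (Nat.choose n T.card : ℚ)) • DS T) = (fun k : ℕ => (1 / (Nat.choose n k : ℚ)) • x) T.card := by
    intro T _
    rw [mul_smul_comm, mul_DS x hx, smul_smul, div_mul_eq_mul_div, ← mul_pow]; simp
  rw [Finset.sum_congr rfl this, Finset.sum_powerset_apply_card (fun k : ℕ => (1 / (Nat.choose n k : ℚ)) • x)]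
  have h2 : ∀ k ∈ Finset.range ((Finset.univ : Finset (Fin n)).card + 1), ((Finset.univ : Finset (Fin n)).card.choose k) • ((1 / (Nat.choose n k : ℚ)) • x) = x := by
    intro k hk
    have : (n.choose k : ℚ) ≠ 0 := by
      have := Nat.choose_pos (n := n) (k := k) (by simp at hk; omega)
      positivity
    rw [← Nat.cast_smul_eq_nsmul ℚ, smul_smul]
    simp [this]
  rw [Finset.sum_congr rfl h2, Finset.sum_const, ← Nat.cast_smul_eq_nsmul ℚ]
  simp

/-- Compatibility of a key with the blocks of `π` cut at `S`. -/
def Good {n : ℕ} {α : Type*} [LinearOrder α] (key : Fin (n + 1) → α) (S : Finset (Fin n))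
    (π : Equiv.Perm (Fin (n + 1))) : Prop :=
  ∀ i : Fin n, i ∉ S → key (π i.castSucc) < key (π i.succ)

instance {n : ℕ} {α : Type*} [LinearOrder α] (key : Fin (n + 1) → α) (S : Finset (Fin n))
    (π : Equiv.Perm (Fin (n + 1))) : Decidable (Good key S π) := Classical.propDecidable _

lemma good_empty {n : ℕ} {α : Type*} [LinearOrder α] (key : Fin (n + 1) → α)
    (π : Equiv.Perm (Fin (n + 1))) : Good key ∅ π ↔ StrictMono (key ∘ π) := by
  rw [Fin.strictMono_iff_lt_succ]; simp [Good]

lemma good_of {n : ℕ} {α : Type*} [LinearOrder α] (key : Fin (n + 1) → α) (S : Finset (Fin n))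
    (σ π : Equiv.Perm (Fin (n + 1))) (h : Good key ∅ σ) :
    Des (σ⁻¹ * π) ⊆ S ↔ Good key S π := by
  rw [good_empty] at h
  have h1 : ∀ a b, key a < key b ↔ σ⁻¹ a < σ⁻¹ b := by
    intro a b
    rw [← h.lt_iff_lt]; simp
  simp only [Good, h1, Des, Finset.subset_iff, mem_filter, mem_univ, true_and]
  refine forall_congr' fun i => ?_
  have : (σ⁻¹ * π) i.castSucc ≠ (σ⁻¹ * π) i.succ := fun h => by
    exact absurd ((σ⁻¹ * π).injective h) (Fin.castSucc_lt_succ).ne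
  simp only [Equiv.Perm.mul_apply] at this ⊢
  rw [← not_imp_not, not_lt, le_iff_lt_or_eq, or_iff_left this]

lemma good_unique {n : ℕ} {α : Type*} [LinearOrder α] (key : Fin (n + 1) → α)
    (hk : Function.Injective key) : ∃ σ, ∀ τ, Good key ∅ τ ↔ τ = σ := by
  have h0 : Good key ∅ (Tuple.sort key) := by
    rw [good_empty]
    exact (Tuple.monotone_sort key).strictMono_of_injective (hk.comp (Equiv.injective _))
  refine ⟨Tuple.sort key, fun τ => ⟨fun h => ?_, fun h => h ▸ h0⟩⟩
  rw [good_empty] at h h0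
  have : StrictMono ((Tuple.sort key)⁻¹ * τ) := by
    intro i j hij
    rw [← h0.lt_iff_lt]
    simpa using h hij
  have := key_one this
  exact (inv_mul_eq_one.mp this).symm

lemma key_sum {n : ℕ} {α : Type*} [LinearOrder α] (key : Fin (n + 1) → α)
    (hk : Function.Injective key) (S : Finset (Fin n)) (π : Equiv.Perm (Fin (n + 1))) :
    ∑ σ : Equiv.Perm (Fin (n + 1)), (if Good key ∅ σ then (1 : ℚ) else 0) *
      (if Des (σ⁻¹ * π) ⊆ S then 1 else 0) = if Good key S π then 1 else 0 := by
  obtain ⟨σ, hσ⟩ := good_unique key hk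
  simp only [hσ, ite_mul, one_mul, zero_mul, Finset.sum_ite_eq', mem_univ, if_true]
  simp only [good_of key S σ π ((hσ σ).2 rfl)]

/-- Master lemma. -/
lemma master {n : ℕ} {α ι : Type*} [LinearOrder α] (F : Finset ι) (w : ι → ℚ)
    (key : ι → Fin (n + 1) → α) (hk : ∀ f ∈ F, Function.Injective (key f)) (S : Finset (Fin n))
    (π : Equiv.Perm (Fin (n + 1))) :
    ∑ σ : Equiv.Perm (Fin (n + 1)), (∑ f ∈ F, w f * if Good (key f) ∅ σ then (1 : ℚ) else 0) *
      (if Des (σ⁻¹ * π) ⊆ S then 1 else 0) = ∑ f ∈ F, w f * if Good (key f) S π then 1 else 0 := by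
  simp only [Finset.sum_mul]
  rw [Finset.sum_comm]
  refine Finset.sum_congr rfl fun f hf => ?_
  rw [← key_sum (key f) (hk f hf) S π, Finset.mul_sum]
  simp only [mul_assoc]

/-- Signed key attached to a set of letters. -/
def fkey {n : ℕ} (L : Finset (Fin (n + 1))) (a : Fin (n + 1)) : ℤ :=
  if a ∈ L then -((a : ℕ) : ℤ) else ((a : ℕ) : ℤ)

lemma fkey_inj {n : ℕ} (L : Finset (Fin (n + 1))) : Function.Injective (fkey L) := by
  intro a b h
  unfold fkey at h
  by_cases hab : a = b
  · exact hab
  · exfalso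
    have h1 : (a : ℕ) ≠ b := fun h => hab (Fin.ext h)
    split_ifs at h <;> omega

def initS (n k : ℕ) : Finset (Fin n) := Finset.univ.filter fun i : Fin n => (i : ℕ) < k

lemma good_fkey {n : ℕ} (L : Finset (Fin (n + 1))) (h0 : (0 : Fin (n + 1)) ∉ L)
    (σ : Equiv.Perm (Fin (n + 1))) :
    Good (fkey L) ∅ σ ↔
      (Des σ = initS n (Des σ).card ∧ (Des σ).image (fun i => σ i.castSucc) = L) := by
  constructor
  · intro h
    rw [good_empty] at h
    obtain ⟨j, hj⟩ := σ.surjective 0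
    have hneg : ∀ a, fkey L a < 0 ↔ a ∈ L := by
      intro a
      unfold fkey
      by_cases ha : a ∈ L
      · have : (a : ℕ) ≠ 0 := fun h => h0 (by rwa [show a = 0 from Fin.ext h] at ha)
        simp only [ha, if_true, iff_true]; omega
      · simp only [ha, if_false, iff_false]; omega
    have hf0 : fkey L 0 = 0 := by simp [fkey, h0]
    have hL : ∀ i, σ i ∈ L ↔ i < j := by
      intro i
      rw [← hneg, ← h.lt_iff_lt]
      simp [hj, hf0]
    have hD : ∀ i : Fin n, i ∈ Des σ ↔ (i : ℕ) < j := by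
      intro i
      have hi := h (Fin.castSucc_lt_succ (i := i))
      simp only [Function.comp, fkey, hL, Fin.lt_def, Fin.val_castSucc, Fin.val_succ] at hi
      simp only [Des, mem_filter, mem_univ, true_and, Fin.lt_def]
      constructor
      · intro h1
        by_contra h2
        rw [if_neg h2, if_neg (by omega)] at hi
        omega
      · intro h1
        rw [if_pos h1] at hi
        by_cases h2 : (i : ℕ) + 1 < j
        · rw [if_pos h2] at hi; omega
        · have : i.succ = j := by ext; simp; omega
          rw [this, hj]
          have h3 : σ i.castSucc ≠ 0 := by
            rw [← hj]
            intro h4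
            have := congrArg Fin.val (σ.injective h4)
            simp at this; omega
          exact Nat.pos_of_ne_zero fun h => h3 (Fin.ext h)
    have hD' : Des σ = initS n j := by
      ext i; rw [hD]; simp [initS]
    constructor
    · rw [hD', initS, Fin.card_filter_val_lt]
      congr 1
      have := j.isLt
      rw [min_eq_right (by omega)]
    · ext a
      simp only [mem_image]
      constructor
      · rintro ⟨i, hi, rfl⟩
        rw [hL]; exact (hD i).1 hi
      · intro ha
        obtain ⟨i, rfl⟩ := σ.surjective a
        have hi := (hL i).1 ha
        have hlt : (i : ℕ) < n := by have := j.isLt; have : (i : ℕ) < j := hi; omega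
        exact ⟨⟨i, hlt⟩, (hD _).2 hi, rfl⟩
  · rintro ⟨h1, rfl⟩ i -
    set k := (Des σ).card
    have hD : ∀ i : Fin n, i ∈ Des σ ↔ (i : ℕ) < k := by
      intro i; rw [h1]; simp [initS]
    have hL : ∀ p : Fin (n + 1), σ p ∈ (Des σ).image (fun i => σ i.castSucc) → (p : ℕ) < k := by
      intro p hp
      simp only [mem_image] at hp
      obtain ⟨i, hi, hip⟩ := hp
      rw [← σ.injective hip]
      exact (hD i).1 hi
    by_cases hi : i ∈ Des σ
    · have h2 : σ i.castSucc ∈ (Des σ).image (fun i => σ i.castSucc) := mem_image_of_mem _ hi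
      have h3 : σ i.succ < σ i.castSucc := by simpa [Des] using hi
      rw [Fin.lt_def] at h3
      unfold fkey
      rw [if_pos h2]
      split_ifs <;> omega
    · have h2 : ¬ (i : ℕ) < k := fun h => hi ((hD i).2 h)
      have h3 : ¬ σ i.succ < σ i.castSucc := by simpa [Des] using hi
      have h4 : σ i.succ ≠ σ i.castSucc := fun h =>
        absurd (σ.injective h) (Fin.castSucc_lt_succ).ne'
      rw [Fin.lt_def] at h3
      have h5 : (σ i.succ : ℕ) ≠ σ i.castSucc := fun h => h4 (Fin.ext h)
      unfold fkey
      rw [if_neg (fun h => h2 (hL _ h)), if_neg (fun h => h2 (by have := hL _ h; simp at this; omega))]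
      omega

lemma theta_ofFun (n : ℕ) : theta n = ofFun (fun σ =>
    ∑ L ∈ ((Finset.univ : Finset (Fin (n + 1))).erase 0).powerset,
      (-1 : ℚ) ^ L.card * if Good (fkey L) ∅ σ then (1 : ℚ) else 0) := by
  rw [theta_eq]
  simp only [DS, ← ofFun_smul, ← ofFun_sum]
  congr 1
  ext σ
  have hcard : (Des σ).card ≤ n := by simpa using Finset.card_le_univ (Des σ)
  have e1 : ∀ k ∈ Finset.range (n + 1), (-1 : ℚ) ^ k *
      (if Des σ = Finset.univ.filter (fun i : Fin n => (i : ℕ) < k) then 1 else 0) =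
      if (Des σ).card = k then (if Des σ = initS n (Des σ).card then (-1 : ℚ) ^ (Des σ).card else 0)
        else 0 := by
    intro k hk
    have hk : k ≤ n := by simp at hk; omega
    by_cases h : Des σ = Finset.univ.filter (fun i : Fin n => (i : ℕ) < k)
    · have h2 : (Des σ).card = k := by rw [h, Fin.card_filter_val_lt]; omega
      rw [if_pos h, if_pos h2, if_pos (by rw [h2]; exact h), h2, mul_one]
    · rw [if_neg h, mul_zero]
      split_ifs with h2 h3
      · exact absurd (by rw [h2] at h3; exact h3) h
      · rfl
      · rfl
  rw [Finset.sum_congr rfl e1, Finset.sum_ite_eq, if_pos (by simp; omega)]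
  set L0 := (Des σ).image (fun i => σ i.castSucc) with hL0
  have hc : L0.card = (Des σ).card := by
    apply Finset.card_image_of_injective
    exact σ.injective.comp (Fin.castSucc_injective n)
  have h00 : (0 : Fin (n + 1)) ∉ L0 := by
    simp only [hL0, mem_image, not_exists, not_and]
    intro i hi h
    simp [Des, h] at hi
  have e2 : ∀ L ∈ ((Finset.univ : Finset (Fin (n + 1))).erase 0).powerset,
      ((-1 : ℚ) ^ L.card * if Good (fkey L) ∅ σ then (1 : ℚ) else 0) =
      if L0 = L then (if Des σ = initS n (Des σ).card then (-1 : ℚ) ^ (Des σ).card else 0)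
        else 0 := by
    intro L hL
    have h0 : (0 : Fin (n + 1)) ∉ L := by
      rw [Finset.mem_powerset] at hL
      intro h; simpa using hL h
    by_cases hg : Good (fkey L) ∅ σ
    · rw [if_pos hg]
      rw [good_fkey L h0] at hg
      rw [if_pos hg.2, if_pos hg.1, mul_one, ← hg.2, hc]
    · rw [if_neg hg, mul_zero]
      rw [good_fkey L h0] at hg
      split_ifs with h2 h3
      · exact absurd ⟨h3, h2⟩ hg
      · rfl
      · rfl
  have hmem : L0 ∈ ((Finset.univ : Finset (Fin (n + 1))).erase 0).powerset := by
    rw [Finset.mem_powerset]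
    intro a ha
    simp only [mem_erase, mem_univ, and_true, ne_eq]
    rintro rfl
    exact h00 ha
  rw [Finset.sum_congr rfl e2, Finset.sum_ite_eq, if_pos hmem]

lemma exists_locmin {n : ℕ} (S : Finset (Fin n)) (hS : S.Nonempty)
    (π : Equiv.Perm (Fin (n + 1))) : ∃ a : Fin (n + 1), a ≠ 0 ∧
      ∀ i, i ∉ S → (π i.castSucc = a → a < π i.succ) ∧ (π i.succ = a → a < π i.castSucc) := by
  obtain ⟨s, hs⟩ := hS
  obtain ⟨j, hj⟩ := π.surjective 0
  have main : ∀ Q : Finset (Fin (n + 1)), Q.Nonempty → j ∉ Q →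
      (∀ i, i ∉ S → (i.castSucc ∈ Q ↔ i.succ ∈ Q)) → ∃ a : Fin (n + 1), a ≠ 0 ∧
      ∀ i, i ∉ S → (π i.castSucc = a → a < π i.succ) ∧ (π i.succ = a → a < π i.castSucc) := by
    intro Q hQ hjQ hc
    obtain ⟨p, hp, hmin⟩ := Q.exists_min_image π hQ
    refine ⟨π p, fun h => hjQ ?_, fun i hi => ⟨fun h => ?_, fun h => ?_⟩⟩
    · rwa [π.injective (hj.trans h.symm)]
    · have h' := π.injective h
      subst h'
      refine lt_of_le_of_ne (hmin _ ((hc i hi).1 hp)) fun h => ?_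
      exact absurd (π.injective h) (Fin.castSucc_lt_succ).ne
    · have h' := π.injective h
      subst h'
      refine lt_of_le_of_ne (hmin _ ((hc i hi).2 hp)) fun h => ?_
      exact absurd (π.injective h) (Fin.castSucc_lt_succ).ne'
  by_cases hjs : j ≤ s.castSucc
  · refine main (Finset.univ.filter fun q => s.castSucc < q) ⟨s.succ, by simp⟩
      (by simpa using hjs) fun i hi => ?_
    have : (i : ℕ) ≠ s := fun h => hi (by rwa [Fin.ext h])
    simp only [mem_filter, mem_univ, true_and, Fin.lt_def, Fin.val_castSucc, Fin.val_succ]; omega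
  · refine main (Finset.univ.filter fun q => q ≤ s.castSucc) ⟨s.castSucc, by simp⟩
      (by simpa using hjs) fun i hi => ?_
    have : (i : ℕ) ≠ s := fun h => hi (by rwa [Fin.ext h])
    simp only [mem_filter, mem_univ, true_and, Fin.le_def, Fin.val_castSucc, Fin.val_succ]; omega

lemma theta_BS {n : ℕ} (S : Finset (Fin n)) (hS : S.Nonempty) : theta n * BS S = 0 := by
  rw [theta_ofFun, BS, ofFun_mul, ← ofFun_zero]
  congr 1
  ext π
  rw [master _ _ _ (fun L _ => fkey_inj L)]
  obtain ⟨a, ha0, ha⟩ := exists_locmin S hS π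
  rw [← Finset.insert_erase (show a ∈ (Finset.univ : Finset (Fin (n + 1))).erase 0 by simp [ha0]),
    Finset.sum_powerset_insert (by simp), ← Finset.sum_add_distrib]
  refine Finset.sum_eq_zero fun L hL => ?_
  have haL : a ∉ L := by
    rw [Finset.mem_powerset] at hL
    intro h; simpa using hL h
  have : Good (fkey (insert a L)) S π ↔ Good (fkey L) S π := by
    unfold Good
    refine forall_congr' fun i => imp_congr_right fun hi => ?_
    obtain ⟨h1, h2⟩ := ha i hi
    by_cases e1 : π i.castSucc = a
    · have h3 := h1 e1
      have h4 : π i.succ ≠ a := h3.ne'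
      rw [Fin.lt_def] at h3
      simp only [fkey, mem_insert, e1, h4, haL, true_or, false_or, if_true, if_false]
      split_ifs <;> omega
    · by_cases e2 : π i.succ = a
      · have h3 := h2 e2
        rw [Fin.lt_def] at h3
        simp only [fkey, mem_insert, e1, e2, haL, true_or, false_or, if_true, if_false]
        split_ifs <;> omega
      · simp only [fkey, mem_insert, e1, e2, false_or]
  simp only [this, Finset.card_insert_of_notMem haL, pow_succ]
  ring

open scoped Classical in
/-- Weak/strict chain condition. -/
def Ok (fr st : ℕ → Prop) (n m : ℕ) (g : Fin (n + 1) → Fin m) : Prop :=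
  ∀ i : Fin n, ¬ fr i → if st i then g i.castSucc < g i.succ else g i.castSucc ≤ g i.succ

open scoped Classical in
def GG (fr st : ℕ → Prop) (n m x : ℕ) : ℚ :=
  ∑ g : Fin (n + 1) → Fin m, if Ok fr st n m g ∧ (g (Fin.last n) : ℕ) < x then 1 else 0

open scoped Classical in
lemma Ok_snoc (fr st : ℕ → Prop) (n m : ℕ) (g : Fin (n + 1) → Fin m) (j : Fin m) :
    Ok fr st (n + 1) m (Fin.snoc (α := fun _ => Fin m) g j) ↔ Ok fr st n m g ∧ (g (Fin.last n) : ℕ) <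
      (if fr n then m else if st n then (j : ℕ) else j + 1) := by
  unfold Ok
  rw [Fin.forall_fin_succ']
  apply and_congr
  · refine forall_congr' fun i => ?_
    simp only [Fin.succ_castSucc, Fin.snoc_castSucc, Fin.val_castSucc]
  · simp only [Fin.succ_last, Fin.snoc_castSucc, Fin.snoc_last, Fin.val_last]
    by_cases h : fr n
    · simp [h]
    · by_cases h2 : st n
      · simp [h, h2]
      · simp only [h, h2, if_false, not_false_eq_true, true_imp_iff, Fin.le_def]; omega

open scoped Classical in
lemma GG_succ (fr st : ℕ → Prop) (n m x : ℕ) (hx : x ≤ m) :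
    GG fr st (n + 1) m x = ∑ j ∈ Finset.range x,
      GG fr st n m (if fr n then m else if st n then j else j + 1) := by
  unfold GG
  rw [← Equiv.sum_comp (Fin.snocEquiv (fun _ : Fin (n + 1 + 1) => Fin m)), Fintype.sum_prod_type]
  have : ∀ j : Fin m, (∑ g : Fin (n + 1) → Fin m, 
      if Ok fr st (n + 1) m (Fin.snocEquiv (fun _ : Fin (n + 1 + 1) => Fin m) (j, g)) ∧
        ((Fin.snocEquiv (fun _ : Fin (n + 1 + 1) => Fin m) (j, g)) (Fin.last (n + 1)) : ℕ) < x
        then (1 : ℚ) else 0) = (fun j : ℕ => if j < x then 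
        GG fr st n m (if fr n then m else if st n then j else j + 1) else 0) (j : ℕ) := by
    intro j
    by_cases hj : (j : ℕ) < x
    · simp only [GG, hj, if_true]
      refine Finset.sum_congr rfl fun g _ => ?_
      refine if_congr ?_ rfl rfl
      rw [← Ok_snoc]
      simp [Fin.snocEquiv, hj]
    · simp [Fin.snocEquiv, hj]
  refine (Finset.sum_congr rfl fun j _ => this j).trans ?_
  rw [Fin.sum_univ_eq_sum_range (fun j : ℕ => if j < x then 
        GG fr st n m (if fr n then m else if st n then j else j + 1) else 0) m, ← Finset.sum_filter]
  refine Finset.sum_congr ?_ fun _ _ => rfl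
  ext j; simp; omega

lemma GG_zero (fr st : ℕ → Prop) (m x : ℕ) (hx : x ≤ m) : GG fr st 0 m x = x := by
  unfold GG
  rw [← Equiv.sum_comp (Equiv.funUnique (Fin 1) (Fin m)).symm]
  simp only [Ok, IsEmpty.forall_iff, true_and, Equiv.funUnique_symm_apply, uniqueElim_const]
  rw [Fin.sum_univ_eq_sum_range (fun j : ℕ => if j < x then (1 : ℚ) else 0) m, ← Finset.sum_filter]
  have : (Finset.range m).filter (· < x) = Finset.range x := by ext j; simp; omega
  simp [this]

lemma hockey_weak (e d x : ℕ) :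
    ∑ j ∈ Finset.range x, ((j + 1 + e).choose (e + d + 1) : ℚ) = (x + (e + 1)).choose (e + 1 + d + 1) := by
  induction x with
  | zero => rw [Nat.choose_eq_zero_of_lt (by omega)]; simp
  | succ x ih =>
    rw [Finset.sum_range_succ, ih, show x + 1 + (e + 1) = (x + 1 + e) + 1 by ring,
      show e + 1 + d + 1 = (e + d + 1) + 1 by ring, Nat.choose_succ_succ,
      show x + (e + 1) = x + 1 + e by ring]
    push_cast; ring

lemma hockey_strict (e d x : ℕ) :
    ∑ j ∈ Finset.range x, ((j + e).choose (e + d + 1) : ℚ) = (x + e).choose (e + (d + 1) + 1) := by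
  induction x with
  | zero => rw [Nat.choose_eq_zero_of_lt (by omega)]; simp
  | succ x ih =>
    rw [Finset.sum_range_succ, ih, show x + 1 + e = (x + e) + 1 by ring,
      show e + (d + 1) + 1 = (e + d + 1) + 1 by ring, Nat.choose_succ_succ]
    push_cast; ring

/-- Polynomial whose value at `x` is `(e+d+1)! * C(x+e, e+d+1)`. -/
def RR (e d : ℕ) : ℚ[X] :=
  X * ((∏ a ∈ Finset.range e, (X + C ((a : ℚ) + 1))) * ∏ b ∈ Finset.range d, (X - C ((b : ℚ) + 1)))

lemma RR_eval (e d x : ℕ) :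
    (RR e d).eval (x : ℚ) = ((e + d + 1).factorial : ℚ) * ((x + e).choose (e + d + 1) : ℚ) := by
  induction d with
  | zero =>
    induction e with
    | zero => simp [RR]
    | succ e ih =>
      have h : (RR (e + 1) 0) = RR e 0 * (X + C ((e : ℚ) + 1)) := by
        simp only [RR, Finset.prod_range_succ]; ring
      rw [h, eval_mul, ih]
      have := Nat.add_one_mul_choose_eq (x + e) (e + 0 + 1)
      have h2 : ((x + e + 1 : ℕ) : ℚ) * ((x + e).choose (e + 0 + 1) : ℚ)
        = ((x + e + 1).choose (e + 0 + 1 + 1) : ℚ) * ((e + 0 + 1 + 1 : ℕ) : ℚ) := by exact_mod_cast this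
      rw [show e + 1 + 0 + 1 = (e + 0 + 1) + 1 by ring, Nat.factorial_succ (e + 0 + 1),
        show x + (e + 1) = x + e + 1 by ring]
      generalize (e + 0 + 1).factorial = F at *
      push_cast at h2 ⊢
      simp only [eval_add, eval_X, eval_C]
      linear_combination (F : ℚ) * h2
  | succ d ih =>
    have h : (RR e (d + 1)) = RR e d * (X - C ((d : ℚ) + 1)) := by
      simp only [RR, Finset.prod_range_succ]; ring
    rw [h, eval_mul, ih, show e + (d + 1) + 1 = (e + d + 1) + 1 by ring, Nat.factorial_succ (e + d + 1)]
    have h2 : ((x + e).choose (e + d + 1 + 1) : ℚ) * ((e + d + 1 + 1 : ℕ) : ℚ)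
        = ((x + e).choose (e + d + 1) : ℚ) * ((x : ℚ) - (d + 1)) := by
      by_cases hle : d + 1 ≤ x
      · have := Nat.choose_succ_right_eq (x + e) (e + d + 1)
        have h3 : x + e - (e + d + 1) = x - (d + 1) := by omega
        rw [h3] at this
        have h4 : ((x - (d + 1) : ℕ) : ℚ) = (x : ℚ) - (d + 1) := by
          rw [Nat.cast_sub hle]; push_cast; ring
        rw [← h4]; exact_mod_cast this
      · rw [Nat.choose_eq_zero_of_lt (by omega), Nat.choose_eq_zero_of_lt (by omega)]; simp
    generalize (e + d + 1).factorial = F at *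
    push_cast at h2 ⊢
    simp only [eval_sub, eval_X, eval_C]
    linear_combination (-(F : ℚ)) * h2

lemma RR_coeff (e d : ℕ) : (RR e d).coeff 1 = (-1) ^ d * (e.factorial : ℚ) * d.factorial := by
  unfold RR
  rw [show (1 : ℕ) = 0 + 1 from rfl, coeff_X_mul, coeff_zero_eq_eval_zero, eval_mul,
    eval_prod, eval_prod]
  have h1 : ∀ e : ℕ, ∏ a ∈ Finset.range e, eval (0 : ℚ) (X + C ((a : ℚ) + 1)) = e.factorial := by
    intro e
    induction e with
    | zero => simp
    | succ e ih => rw [Finset.prod_range_succ, ih, Nat.factorial_succ]; simp; ring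
  have h2 : ∀ e : ℕ, ∏ a ∈ Finset.range e, eval (0 : ℚ) (X - C ((a : ℚ) + 1)) = (-1) ^ e * e.factorial := by
    intro e
    induction e with
    | zero => simp
    | succ e ih => rw [Finset.prod_range_succ, ih, Nat.factorial_succ]; simp; ring
  rw [h1, h2]; ring

open scoped Classical in
lemma GG_poly (fr st : ℕ → Prop) (n : ℕ) : ∃ (Q : ℚ[X]) (e d : ℕ),
    (∀ m x, x ≤ m → GG fr st n m x = Q.eval (m : ℚ) * ((x + e).choose (e + d + 1) : ℚ)) ∧
    ((∃ i < n, fr i) → X ∣ Q) ∧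
    ((∀ i < n, ¬ fr i) → Q = 1 ∧ d = ((Finset.range n).filter st).card ∧ e + d = n) := by
  induction n with
  | zero => exact ⟨1, 0, 0, fun m x hx => by simp [GG_zero fr st m x hx], by simp, by simp⟩
  | succ n ih =>
    obtain ⟨Q, e, d, h1, h2, h3⟩ := ih
    by_cases hf : fr n
    · refine ⟨Q * (RR e d * C ((1 : ℚ) / (e + d + 1).factorial)), 0, 0, fun m x hx => ?_, fun _ => ?_,
        fun h => absurd hf (h n (by omega))⟩
      · rw [GG_succ _ _ _ _ _ hx]
        simp only [hf, if_true, h1 m m le_rfl, Finset.sum_const, Finset.card_range, eval_mul, RR_eval,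
          eval_C]
        have : ((e + d + 1).factorial : ℚ) ≠ 0 := by positivity
        simp
        field_simp
      · refine Dvd.dvd.mul_left (Dvd.dvd.mul_right ?_ _) _
        exact Dvd.intro _ rfl
    · have hex : (∃ i < n + 1, fr i) → X ∣ Q := by
        rintro ⟨i, hi, hfi⟩
        refine h2 ⟨i, ?_, hfi⟩
        rcases Nat.lt_succ_iff_lt_or_eq.1 hi with h | rfl
        · exact h
        · exact absurd hfi hf
      by_cases hs : st n
      · refine ⟨Q, e, d + 1, fun m x hx => ?_, hex, fun h => ?_⟩
        · rw [GG_succ _ _ _ _ _ hx, ← hockey_strict, Finset.mul_sum]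
          refine Finset.sum_congr rfl fun j hj => ?_
          simp only [mem_range] at hj
          simp only [hf, hs, if_true, if_false]
          rw [h1 _ _ (by omega)]
        · obtain ⟨a, b, c⟩ := h3 fun i hi => h i (by omega)
          refine ⟨a, ?_, by omega⟩
          rw [Finset.range_add_one, Finset.filter_insert, if_pos hs, Finset.card_insert_of_notMem (by simp), b]
      · refine ⟨Q, e + 1, d, fun m x hx => ?_, hex, fun h => ?_⟩
        · rw [GG_succ _ _ _ _ _ hx, ← hockey_weak, Finset.mul_sum]
          refine Finset.sum_congr rfl fun j hj => ?_
          simp only [mem_range] at hj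
          simp only [hf, hs, if_false]
          rw [h1 _ _ (by omega)]
        · obtain ⟨a, b, c⟩ := h3 fun i hi => h i (by omega)
          refine ⟨a, ?_, by omega⟩
          rw [Finset.range_add_one, Finset.filter_insert, if_neg hs, b]

/-- P-partition key. -/
def pkey {n m : ℕ} (f : Fin (n + 1) → Fin m) (a : Fin (n + 1)) : Fin m ×ₗ Fin (n + 1) :=
  toLex (f a, a)

lemma pkey_inj {n m : ℕ} (f : Fin (n + 1) → Fin m) : Function.Injective (pkey f) := by
  intro a b h
  exact congrArg (fun z => (ofLex z).2) h

lemma good_pkey {n m : ℕ} (S : Finset (Fin n)) (π : Equiv.Perm (Fin (n + 1)))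
    (f : Fin (n + 1) → Fin m) : Good (pkey f) S π ↔
    Ok (fun i => ∃ h : i < n, (⟨i, h⟩ : Fin n) ∈ S) (fun i => ∃ h : i < n, (⟨i, h⟩ : Fin n) ∈ Des π)
      n m (f ∘ π) := by
  unfold Good Ok
  refine forall_congr' fun i => ?_
  simp only [Fin.is_lt, Fin.eta, exists_true_left]
  refine imp_congr_right fun _ => ?_
  have hne : π i.castSucc ≠ π i.succ := fun h =>
    absurd (π.injective h) (Fin.castSucc_lt_succ).ne
  simp only [pkey, Prod.Lex.toLex_lt_toLex, Function.comp]
  split_ifs with h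
  · have h' : π i.succ < π i.castSucc := by simpa [Des] using h
    simp [h'.not_gt]
  · have h' : ¬ π i.succ < π i.castSucc := by simpa [Des] using h
    have : π i.castSucc < π i.succ := lt_of_le_of_ne (not_lt.1 h') hne
    simp [this, le_iff_lt_or_eq]

lemma count_poly {n : ℕ} (S : Finset (Fin n)) (π : Equiv.Perm (Fin (n + 1))) : ∃ P : ℚ[X],
    (∀ m : ℕ, (∑ f : Fin (n + 1) → Fin m, (1 : ℚ) * if Good (pkey f) S π then (1 : ℚ) else 0)
      = P.eval (m : ℚ)) ∧
    (S.Nonempty → P.coeff 1 = 0) ∧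
    (S = ∅ → P.coeff 1 = (-1 : ℚ) ^ (Des π).card / (Nat.choose n (Des π).card : ℚ) / (n + 1)) := by
  classical
  obtain ⟨Q, e, d, h1, h2, h3⟩ := GG_poly (fun i => ∃ h : i < n, (⟨i, h⟩ : Fin n) ∈ S)
    (fun i => ∃ h : i < n, (⟨i, h⟩ : Fin n) ∈ Des π) n
  have hne : ((e + d + 1).factorial : ℚ) ≠ 0 := by positivity
  refine ⟨C ((1 : ℚ) / (e + d + 1).factorial) * (Q * RR e d), fun m => ?_, fun hS => ?_, fun hS => ?_⟩
  · rw [eval_mul, eval_mul, eval_C, RR_eval]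
    have := h1 m m le_rfl
    rw [show (1 : ℚ) / (e + d + 1).factorial * (Q.eval (m : ℚ) * (((e + d + 1).factorial : ℚ) *
      ((m + e).choose (e + d + 1) : ℚ))) = Q.eval (m : ℚ) * ((m + e).choose (e + d + 1) : ℚ) by
        field_simp, ← this]
    unfold GG
    conv_rhs => rw [← Equiv.sum_comp (Equiv.arrowCongr π.symm (Equiv.refl (Fin m)))]
    refine Finset.sum_congr rfl fun f _ => ?_
    rw [one_mul]
    refine if_congr ?_ rfl rfl
    rw [good_pkey]
    have : (Equiv.arrowCongr π.symm (Equiv.refl (Fin m))) f = f ∘ π := by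
      ext; simp [Equiv.arrowCongr]
    rw [this]
    simp
  · obtain ⟨s, hs⟩ := hS
    obtain ⟨Q', rfl⟩ := h2 ⟨s, s.2, s.2, hs⟩
    rw [coeff_C_mul, RR, show X * Q' * (X * ((∏ a ∈ Finset.range e, (X + C ((a : ℚ) + 1))) * ∏ b ∈ Finset.range d, (X - C ((b : ℚ) + 1)))) = X * (X * (Q' * ((∏ a ∈ Finset.range e, (X + C ((a : ℚ) + 1))) * ∏ b ∈ Finset.range d, (X - C ((b : ℚ) + 1))))) by ring,
      show (1 : ℕ) = 0 + 1 from rfl, coeff_X_mul, coeff_X_mul_zero, mul_zero]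
  · subst hS
    obtain ⟨rfl, hd, hed⟩ := h3 (by simp)
    have hd' : (Des π).card = d := by
      rw [hd]
      rw [← Finset.card_map Fin.valEmbedding]
      congr 1
      ext i
      simp only [mem_map, mem_filter, mem_range, Fin.valEmbedding_apply]
      constructor
      · rintro ⟨a, ha, rfl⟩
        exact ⟨a.2, a.2, ha⟩
      · rintro ⟨_, h, ha⟩
        exact ⟨_, ha, rfl⟩
    rw [hd', one_mul, coeff_C_mul, RR_coeff]
    subst hed
    have := Nat.add_choose_mul_factorial_mul_factorial e d
    have h4 : ((e + d).choose d : ℚ) * e.factorial * d.factorial = (e + d).factorial := by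
      exact_mod_cast this
    have h5 : ((e + d).choose d : ℚ) ≠ 0 := by
      have := Nat.choose_pos (n := e + d) (k := d) (by omega)
      positivity
    have h6 : ((e : ℚ) + d + 1) ≠ 0 := by positivity
    rw [Nat.factorial_succ, Nat.cast_mul, ← h4]
    push_cast
    have h7 : (e.factorial : ℚ) ≠ 0 := by positivity
    have h8 : (d.factorial : ℚ) ≠ 0 := by positivity
    field_simp

lemma phi_BS {n : ℕ} (S : Finset (Fin n)) (hS : S.Nonempty) : phi n * BS S = 0 := by
  rw [phi_ofFun, BS, ofFun_mul, ← ofFun_zero]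
  congr 1
  ext π
  choose P hP hP1 hP2 using fun σ : Equiv.Perm (Fin (n + 1)) => count_poly (∅ : Finset (Fin n)) σ
  obtain ⟨R, hR, hR1, -⟩ := count_poly S π
  have key : ∑ σ, P σ * C (if Des (σ⁻¹ * π) ⊆ S then (1 : ℚ) else 0) = R := by
    apply Polynomial.eq_of_infinite_eval_eq
    refine Set.Infinite.mono ?_ (Set.infinite_range_of_injective (Nat.cast_injective (R := ℚ)))
    rintro _ ⟨m, rfl⟩
    simp only [Set.mem_ofPred_eq, eval_finsetSum, eval_mul, eval_C, ← hP, ← hR]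
    exact master Finset.univ (fun _ => 1) pkey (fun f _ => pkey_inj f) S π
  have h := congrArg (fun p => coeff p 1) key
  simp only [finsetSum_coeff, coeff_mul_C, hR1 hS, hP2 _ rfl] at h
  have hn : (n : ℚ) + 1 ≠ 0 := by positivity
  have h' := congrArg (fun z => ((n : ℚ) + 1) * z) h
  simp only [mul_zero, Finset.mul_sum] at h'
  refine Eq.trans ?_ h'
  refine Finset.sum_congr rfl fun σ _ => ?_
  field_simp

end Helpers

/-- Group-algebra form of the internal-product identities `Ψ_n ∗ Φ_n = n Φ_n` and
`Φ_n ∗ Ψ_n = n Ψ_n`: in `ℚ[S_{n+1}]`, `φ·θ = (n+1)·φ` and `θ·φ = (n+1)·θ`. -/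
theorem phi_theta_products (n : ℕ) :
    phi n * theta n = ((n + 1 : ℚ)) • phi n ∧
    theta n * phi n = ((n + 1 : ℚ)) • theta n := by
  exact ⟨mul_theta _ phi_BS, mul_phi _ theta_BS⟩

end

end Descents12
end

section
/- Let n ≥ 1 and let ζ ∈ ℂ be a primitive n-th root of unity. Then Klyachko's element κₙ(ζ) := (1/n) Σ_{σ ∈ Sₙ} ζ^{maj(σ)} σ of the group algebra ℂ[Sₙ] is idempotent: κₙ(ζ) · κₙ(ζ) = κₙ(ζ). -/
open Finset

namespace Descents13

noncomputable section

/-- The descent set of a permutation `σ` of `{0,…,n}`: the set of `i ∈ Fin n`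
(representing the position `i+1 ∈ {1,…,n}`) with `σ(i) > σ(i+1)`. -/
def Des {n : ℕ} (σ : Equiv.Perm (Fin (n + 1))) : Finset (Fin n) :=
  Finset.univ.filter fun i => σ i.succ < σ i.castSucc

/-- The major index `maj(σ) = ∑_{i ∈ Des(σ)} i` (positions counted `1,…,n`). -/
def maj {n : ℕ} (σ : Equiv.Perm (Fin (n + 1))) : ℕ :=
  ∑ i ∈ Des σ, ((i : ℕ) + 1)

/-- Klyachko's element `κ(ζ) = (1/n) ∑_{σ ∈ Sₙ} ζ^{maj(σ)} σ` of `ℂ[S_{n+1}]`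
(here the symmetric group on `n+1` letters). -/
def klyachko (n : ℕ) (ζ : ℂ) : MonoidAlgebra ℂ (Equiv.Perm (Fin (n + 1))) :=
  ((n + 1 : ℂ))⁻¹ •
    ∑ σ : Equiv.Perm (Fin (n + 1)),
      (ζ ^ maj σ) • MonoidAlgebra.single σ (1 : ℂ)


lemma pow_mod_aux {n : ℕ} {ζ : ℂ} (hζ : IsPrimitiveRoot ζ (n + 1)) (m : ℕ) :
    ζ ^ (m % (n + 1)) = ζ ^ m := by
  conv_rhs => rw [← Nat.mod_add_div m (n + 1), pow_add, pow_mul, hζ.pow_eq_one, one_pow, mul_one]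

/-- the additive character -/
def chi (n : ℕ) (ζ : ℂ) (k : Fin (n + 1)) : ℂ := ζ ^ (k : ℕ)

lemma chi_add {n : ℕ} {ζ : ℂ} (hζ : IsPrimitiveRoot ζ (n + 1)) (a b : Fin (n + 1)) :
    chi n ζ (a + b) = chi n ζ a * chi n ζ b := by
  unfold chi
  rw [← pow_add, Fin.val_add, pow_mod_aux hζ]

lemma chi_zero (n : ℕ) (ζ : ℂ) : chi n ζ 0 = 1 := by simp [chi]

lemma chi_one {n : ℕ} {ζ : ℂ} (hζ : IsPrimitiveRoot ζ (n + 1)) : chi n ζ 1 = ζ := by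
  unfold chi
  rw [Fin.val_one', pow_mod_aux hζ, pow_one]

lemma chi_ne {n : ℕ} {ζ : ℂ} (hζ : IsPrimitiveRoot ζ (n + 1)) (a : Fin (n + 1)) :
    chi n ζ a ≠ 0 := pow_ne_zero _ (hζ.ne_zero (by omega))

/-- translation -/
def tr {n : ℕ} (k : Fin (n + 1)) : Equiv.Perm (Fin (n + 1)) := Equiv.addRight k

lemma tr_apply {n : ℕ} (k i : Fin (n + 1)) : tr k i = i + k := rfl

lemma tr_mul {n : ℕ} (j k : Fin (n + 1)) : tr j * tr k = tr (j + k) := by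
  ext i
  simp [tr_apply, add_assoc, add_comm k j]

lemma tr_inj {n : ℕ} : Function.Injective (tr (n := n)) := by
  intro a b h
  have := congrArg (fun f => f 0) h
  simpa [tr_apply] using this

/-- cyclic descents -/
def cd {n : ℕ} (σ : Equiv.Perm (Fin (n + 1))) : Finset (Fin (n + 1)) :=
  Finset.univ.filter fun i => σ (i + 1) < σ i

lemma w_eq {n : ℕ} {ζ : ℂ} (hζ : IsPrimitiveRoot ζ (n + 1)) (σ : Equiv.Perm (Fin (n + 1))) :
    ζ ^ maj σ = ∏ i, if σ (i + 1) < σ i then chi n ζ (i + 1) else 1 := by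
  rw [Fin.prod_univ_castSucc]
  have : (if σ (Fin.last n + 1) < σ (Fin.last n) then chi n ζ (Fin.last n + 1) else 1) = 1 := by
    simp [Fin.last_add_one, chi_zero]
  rw [this, mul_one, maj, Des, ← Finset.prod_pow_eq_pow_sum, Finset.prod_filter]
  refine Finset.prod_congr rfl fun i _ => ?_
  rw [Fin.coeSucc_eq_succ]
  simp [chi]

lemma w_mul_tr {n : ℕ} {ζ : ℂ} (hζ : IsPrimitiveRoot ζ (n + 1)) (σ : Equiv.Perm (Fin (n + 1)))
    (k : Fin (n + 1)) :
    ζ ^ maj (σ * tr k) * chi n ζ k ^ (cd σ).card = ζ ^ maj σ := by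
  rw [w_eq hζ, w_eq hζ, ← Finset.prod_const, cd, Finset.prod_filter,
    ← Equiv.prod_comp (tr k) (fun i => if σ (i + 1) < σ i then chi n ζ k else 1),
    ← Equiv.prod_comp (tr k) (fun i => if σ (i + 1) < σ i then chi n ζ (i + 1) else 1),
    ← Finset.prod_mul_distrib]
  refine Finset.prod_congr rfl fun i _ => ?_
  have e : i + 1 + k = i + k + 1 := by abel
  change (if σ (i + 1 + k) < σ (i + k) then chi n ζ (i + 1) else 1) *
    (if σ (i + k + 1) < σ (i + k) then chi n ζ k else 1) =
    if σ (i + k + 1) < σ (i + k) then chi n ζ (i + k + 1) else 1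
  rw [e]
  split_ifs
  · rw [← chi_add hζ, e]
  · simp

lemma w_one_mul {n : ℕ} {ζ : ℂ} (hζ : IsPrimitiveRoot ζ (n + 1))
    (σ : Equiv.Perm (Fin (n + 1))) :
    ζ ^ maj (tr 1 * σ) * ζ = ζ ^ maj σ := by
  have key : ζ ^ maj (tr 1 * σ) * (∏ i, if σ i = Fin.last n then chi n ζ (i + 1) else 1) =
      ζ ^ maj σ * (∏ i, if σ (i + 1) = Fin.last n then chi n ζ (i + 1) else 1) := by
    rw [w_eq hζ, w_eq hζ, ← Finset.prod_mul_distrib, ← Finset.prod_mul_distrib]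
    refine Finset.prod_congr rfl fun i _ => ?_
    change (if σ (i + 1) + 1 < σ i + 1 then chi n ζ (i + 1) else 1) *
      (if σ i = Fin.last n then chi n ζ (i + 1) else 1) =
      (if σ (i + 1) < σ i then chi n ζ (i + 1) else 1) *
      (if σ (i + 1) = Fin.last n then chi n ζ (i + 1) else 1)
    generalize σ (i + 1) = b
    generalize σ i = a
    have hb : b ≤ Fin.last n := Fin.le_last b
    have ha : a ≤ Fin.last n := Fin.le_last a
    by_cases h1 : a = Fin.last n <;> by_cases h2 : b = Fin.last n
    · subst h1 h2; simp
    · subst h1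
      have : b < Fin.last n := lt_of_le_of_ne hb h2
      simp [h2, this]
    · subst h2
      have : 0 < a + 1 := by
        rw [Fin.pos_iff_ne_zero]
        intro h
        exact h1 (by rw [← Fin.last_add_one] at h; exact add_right_cancel h)
      simp [h1, this, ha]
    · have h3 : (b + 1 < a + 1) ↔ b < a := by
        have ha' := Fin.val_add_one_of_lt (lt_of_le_of_ne ha h1)
        have hb' := Fin.val_add_one_of_lt (lt_of_le_of_ne hb h2)
        rw [Fin.lt_def, Fin.lt_def, ha', hb']
        omega
      simp [h1, h2, h3]
  have e1 : (∏ i, if σ i = Fin.last n then chi n ζ (i + 1) else 1)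
      = chi n ζ (σ.symm (Fin.last n)) * ζ := by
    simp_rw [← Equiv.eq_symm_apply]
    rw [Finset.prod_ite_eq' Finset.univ]
    simp [chi_add hζ, chi_one hζ]
  have e2 : (∏ i, if σ (i + 1) = Fin.last n then chi n ζ (i + 1) else 1)
      = chi n ζ (σ.symm (Fin.last n)) := by
    refine (Equiv.prod_comp (tr 1) (fun i => if σ i = Fin.last n then chi n ζ i else 1)).trans ?_
    simp_rw [← Equiv.eq_symm_apply]
    rw [Finset.prod_ite_eq' Finset.univ]
    simp
  rw [e1, e2] at key
  have h0 := chi_ne hζ (σ.symm (Fin.last n))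
  apply mul_right_cancel₀ h0
  rw [← key]; ring

lemma w_tr_mul {n : ℕ} {ζ : ℂ} (hζ : IsPrimitiveRoot ζ (n + 1))
    (σ : Equiv.Perm (Fin (n + 1))) (k : Fin (n + 1)) :
    ζ ^ maj (tr k * σ) * chi n ζ k = ζ ^ maj σ := by
  induction k using Fin.induction with
  | zero =>
    have : tr (0 : Fin (n + 1)) = 1 := by ext i; simp [tr_apply]
    rw [this, one_mul, chi_zero, mul_one]
  | succ i ih =>
    rw [← ih, ← Fin.coeSucc_eq_succ, chi_add hζ, chi_one hζ, ← w_one_mul hζ (tr i.castSucc * σ),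
      ← mul_assoc (tr 1), tr_mul, add_comm 1]
    ring

lemma w_tr {n : ℕ} {ζ : ℂ} (hζ : IsPrimitiveRoot ζ (n + 1)) (k : Fin (n + 1)) :
    ζ ^ maj (tr k) * chi n ζ k = 1 := by
  have := w_tr_mul hζ 1 k
  rw [mul_one] at this
  rw [this]
  have : Des (1 : Equiv.Perm (Fin (n + 1))) = ∅ := by
    ext i; simp [Des, Fin.lt_def]
  simp [maj, this]

lemma eq_tr {n : ℕ} {ζ : ℂ} (hζ : IsPrimitiveRoot ζ (n + 1))
    (σ : Equiv.Perm (Fin (n + 1))) (h : ζ ^ (cd σ).card = ζ) : ∃ j, tr j = σ := by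
  rcases Nat.eq_zero_or_pos n with rfl | hn
  · exact ⟨0, Equiv.ext fun i => Subsingleton.elim (α := Fin 1) _ _⟩
  have hc : (cd σ).card ≤ n + 1 := by
    simpa using Finset.card_le_univ (cd σ)
  have h1 : (cd σ).card = 1 := by
    rcases Nat.lt_or_eq_of_le hc with hlt | heq
    · exact hζ.pow_inj hlt (by omega) (by rw [h, pow_one])
    · exfalso
      rw [heq, hζ.pow_eq_one] at h
      exact hζ.ne_one (by omega) h.symm
  obtain ⟨p, hp⟩ := Finset.card_eq_one.1 h1
  have hmono : StrictMono (σ * tr (p + 1) : Equiv.Perm (Fin (n + 1))) := by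
    rw [Fin.strictMono_iff_lt_succ]
    intro i
    have hne : i.castSucc + (p + 1) ≠ p := by
      intro hh
      have h2 : i.castSucc + 1 = 0 := by
        have : i.castSucc + 1 + p = 0 + p := by rw [zero_add]; nth_rw 2 [← hh]; abel
        exact add_right_cancel this
      rw [Fin.coeSucc_eq_succ] at h2
      exact Fin.succ_ne_zero i h2
    have hnot : i.castSucc + (p + 1) ∉ cd σ := by rw [hp]; simpa using hne
    simp only [cd, Finset.mem_filter, Finset.mem_univ, true_and, not_lt] at hnot
    simp only [Equiv.Perm.mul_apply, tr_apply, ← Fin.coeSucc_eq_succ]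
    have e : i.castSucc + 1 + (p + 1) = i.castSucc + (p + 1) + 1 := by abel
    rw [e]
    refine lt_of_le_of_ne hnot fun hh => ?_
    have h3 := σ.injective hh
    have h4 : (1 : Fin (n + 1)) = 0 := by simpa using h3
    have := congrArg Fin.val h4
    rw [Fin.val_one'] at this
    rw [Nat.mod_eq_of_lt (by omega)] at this
    simp at this
  have hid : σ * tr (p + 1) = 1 := by
    have := (StrictMono.range_inj hmono strictMono_id).1
      (by rw [(Equiv.surjective _).range_eq, Set.range_id])
    ext i
    rw [this]; rfl
  refine ⟨-(p + 1), ?_⟩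
  have h5 : tr (p + 1) * tr (-(p + 1)) = 1 := by
    rw [tr_mul]; ext i; simp [tr_apply]
  calc tr (-(p + 1)) = (σ * tr (p + 1)) * tr (-(p + 1)) := by rw [hid, one_mul]
    _ = σ := by rw [mul_assoc, h5, mul_one]

lemma tr_inv {n : ℕ} (k : Fin (n + 1)) : (tr k)⁻¹ = tr (-k) := by
  rw [inv_eq_iff_mul_eq_one, tr_mul]; ext i; simp [tr_apply]

lemma G_tr {n : ℕ} {ζ : ℂ} (hζ : IsPrimitiveRoot ζ (n + 1))
    (τ : Equiv.Perm (Fin (n + 1))) (k : Fin (n + 1)) :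
    ζ ^ maj (tr k) * ζ ^ maj ((tr k)⁻¹ * τ) = ζ ^ maj τ := by
  have h := w_tr_mul hζ ((tr k)⁻¹ * τ) k
  rw [mul_inv_cancel_left] at h
  have h2 := w_tr hζ k
  linear_combination (-ζ ^ maj (tr k)) * h + ζ ^ maj τ * h2

lemma G_zero {n : ℕ} {ζ : ℂ} (hζ : IsPrimitiveRoot ζ (n + 1))
    (τ σ : Equiv.Perm (Fin (n + 1))) (hσ : ζ ^ (cd σ).card ≠ ζ) :
    ∑ k, ζ ^ maj (σ * tr k) * ζ ^ maj ((σ * tr k)⁻¹ * τ) = 0 := by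
  have hz : ζ ≠ 0 := hζ.ne_zero (by omega)
  obtain ⟨d, hd⟩ : ∃ d, d = (cd σ).card := ⟨_, rfl⟩
  rw [← hd] at hσ
  have e : ∀ k : Fin (n + 1), ζ ^ maj (σ * tr k) * ζ ^ maj ((σ * tr k)⁻¹ * τ) =
      ζ ^ maj σ * ζ ^ maj (σ⁻¹ * τ) * (ζ / ζ ^ d) ^ (k : ℕ) := by
    intro k
    have h1 := w_mul_tr hζ σ k
    rw [← hd] at h1
    have h2 := w_tr_mul hζ ((σ * tr k)⁻¹ * τ) k
    rw [mul_inv_rev, mul_assoc, mul_inv_cancel_left] at h2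
    have h3 := chi_ne hζ k
    have h4 : (ζ / ζ ^ d) ^ (k : ℕ) = chi n ζ k / chi n ζ k ^ d := by
      rw [div_pow, chi, ← pow_mul, ← pow_mul, mul_comm d]
    rw [mul_inv_rev, mul_assoc, ← h1, ← h2, h4]
    field_simp
  rw [Finset.sum_congr rfl fun k _ => e k, ← Finset.mul_sum,
    Fin.sum_univ_eq_sum_range (fun k => (ζ / ζ ^ d) ^ k)]
  have hne : ζ / ζ ^ d ≠ 1 := by
    intro h
    rw [div_eq_one_iff_eq (pow_ne_zero _ hz)] at h
    exact hσ h.symm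
  rw [geom_sum_eq hne, div_pow, ← pow_mul, mul_comm d, pow_mul, hζ.pow_eq_one]
  simp

lemma w_conv {n : ℕ} {ζ : ℂ} (hζ : IsPrimitiveRoot ζ (n + 1)) (τ : Equiv.Perm (Fin (n + 1))) :
    ∑ σ : Equiv.Perm (Fin (n + 1)), ζ ^ maj σ * ζ ^ maj (σ⁻¹ * τ) = (n + 1) * ζ ^ maj τ := by
  have hN : ((n : ℂ) + 1) ≠ 0 := by exact_mod_cast Nat.succ_ne_zero n
  apply mul_left_cancel₀ hN
  have h1 : ∑ σ : Equiv.Perm (Fin (n + 1)), ∑ k : Fin (n + 1),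
      ζ ^ maj (σ * tr k) * ζ ^ maj ((σ * tr k)⁻¹ * τ) =
      (n + 1) * ∑ σ : Equiv.Perm (Fin (n + 1)), ζ ^ maj σ * ζ ^ maj (σ⁻¹ * τ) := by
    rw [Finset.sum_comm]
    refine (Finset.sum_congr rfl fun k _ => Equiv.sum_comp (Equiv.mulRight (tr k))
      (fun σ => ζ ^ maj σ * ζ ^ maj (σ⁻¹ * τ))).trans ?_
    simp
  rw [← h1, ← Finset.sum_of_injOn (s := Finset.univ) tr tr_inj.injOn (by simp)
    (f := fun _ => (n + 1) * ζ ^ maj τ)]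
  · simp
  · intro σ _ hσ
    apply G_zero hζ
    intro h
    obtain ⟨j, hj⟩ := eq_tr hζ σ h
    exact hσ ⟨j, by simp, hj⟩
  · intro j _
    rw [Finset.sum_congr rfl fun k _ => by rw [tr_mul, G_tr hζ]]
    simp

/-- **Klyachko's idempotent**: if `ζ ∈ ℂ` is a primitive `(n+1)`-st root of unity, then
`κ(ζ) = (1/(n+1)) ∑_σ ζ^{maj σ} σ` is an idempotent of the group algebra
`ℂ[S_{n+1}]`. -/
theorem klyachko_idempotent (n : ℕ) (ζ : ℂ) (hζ : IsPrimitiveRoot ζ (n + 1)) :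
    klyachko n ζ * klyachko n ζ = klyachko n ζ := by
  have hN : ((n : ℂ) + 1) ≠ 0 := by exact_mod_cast Nat.succ_ne_zero n
  have key : (∑ σ : Equiv.Perm (Fin (n + 1)), (ζ ^ maj σ) • MonoidAlgebra.single σ (1 : ℂ)) *
      (∑ σ : Equiv.Perm (Fin (n + 1)), (ζ ^ maj σ) • MonoidAlgebra.single σ (1 : ℂ)) =
      ((n : ℂ) + 1) • ∑ σ : Equiv.Perm (Fin (n + 1)),
        (ζ ^ maj σ) • MonoidAlgebra.single σ (1 : ℂ) := by
    rw [Finset.sum_mul]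
    have e : ∀ σ : Equiv.Perm (Fin (n + 1)), (ζ ^ maj σ) • MonoidAlgebra.single σ (1 : ℂ) *
        (∑ τ : Equiv.Perm (Fin (n + 1)), (ζ ^ maj τ) • MonoidAlgebra.single τ (1 : ℂ)) =
        ∑ τ : Equiv.Perm (Fin (n + 1)), (ζ ^ maj σ * ζ ^ maj (σ⁻¹ * τ)) •
          MonoidAlgebra.single τ (1 : ℂ) := by
      intro σ
      rw [Finset.mul_sum, ← Equiv.sum_comp (Equiv.mulLeft σ)
        (fun τ => (ζ ^ maj σ * ζ ^ maj (σ⁻¹ * τ)) • MonoidAlgebra.single τ (1 : ℂ))]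
      refine Finset.sum_congr rfl fun τ _ => ?_
      simp [smul_mul_smul_comm, MonoidAlgebra.single_mul_single]
    rw [Finset.sum_congr rfl fun σ _ => e σ, Finset.sum_comm, Finset.smul_sum]
    refine Finset.sum_congr rfl fun τ _ => ?_
    rw [← Finset.sum_smul, w_conv hζ, smul_smul]
  unfold klyachko
  rw [smul_mul_smul_comm, key, smul_smul, mul_assoc, inv_mul_cancel₀ hN, mul_one]

end

end Descents13
end

section
/- Let n ≥ 1 and let K = ℚ(q) be the field of rational functions in one variable q over ℚ. In the group algebra K[Sₙ], let κ := Σ_{σ ∈ Sₙ} q^{maj(σ)} σ and φₙ := Σ_{σ ∈ Sₙ} (−1)^{d(σ)} C(n−1, d(σ))^{−1} σ. Then φₙ · κ = (Π_{i=1}^{n−1} (1 − q^i)) · φₙ (the group-algebra form of the internal-product identity Kₙ(q) ∗ Φₙ = (q)_{n−1} Φₙ, where Kₙ(q) = Σ_{|C|=n} q^{maj(C)} R_C). -/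
open Finset

namespace Descents14

noncomputable section

/-- The descent set of a permutation `σ` of `{0,…,n}`: the set of `i ∈ Fin n`
(representing the position `i+1 ∈ {1,…,n}`) with `σ(i) > σ(i+1)`. -/
def Des {n : ℕ} (σ : Equiv.Perm (Fin (n + 1))) : Finset (Fin n) :=
  Finset.univ.filter fun i => σ i.succ < σ i.castSucc

/-- The major index `maj(σ) = ∑_{i ∈ Des(σ)} i` (positions counted `1,…,n`). -/
def maj {n : ℕ} (σ : Equiv.Perm (Fin (n + 1))) : ℕ :=
  ∑ i ∈ Des σ, ((i : ℕ) + 1)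

/-- `κ = ∑_σ q^{maj(σ)} σ` in the group algebra of `S_{n+1}` over `K = ℚ(q)`. -/
def kappa (n : ℕ) : MonoidAlgebra (RatFunc ℚ) (Equiv.Perm (Fin (n + 1))) :=
  ∑ σ : Equiv.Perm (Fin (n + 1)),
    ((RatFunc.X : RatFunc ℚ) ^ maj σ) • MonoidAlgebra.single σ (1 : RatFunc ℚ)

/-- The first Eulerian element `φ = ∑_σ (−1)^{d(σ)} C(n−1,d(σ))⁻¹ σ` over `K = ℚ(q)`. -/
def phi (n : ℕ) : MonoidAlgebra (RatFunc ℚ) (Equiv.Perm (Fin (n + 1))) :=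
  ∑ σ : Equiv.Perm (Fin (n + 1)),
    ((-1 : RatFunc ℚ) ^ (Des σ).card / (Nat.choose n (Des σ).card : RatFunc ℚ)) •
      MonoidAlgebra.single σ (1 : RatFunc ℚ)

/-- relation weights: `none` free, `some true` weak, `some false` strict -/
def wt (c : Option Bool) (a b : ℕ) : ℚ :=
  match c with
  | none => 1
  | some true => if a ≤ b then 1 else 0
  | some false => if a < b then 1 else 0

/-- weighted count with fixed last value -/
def VV (k n : ℕ) (c : Fin n → Option Bool) (j : Fin k) : ℚ :=
  ∑ f : Fin n → Fin k, ∏ i : Fin n,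
    wt (c i) ((Fin.snoc f j : Fin (n+1) → Fin k) i.castSucc)
      ((Fin.snoc f j : Fin (n+1) → Fin k) i.succ)

lemma sum_snoc {k n : ℕ} (F : (Fin (n+1) → Fin k) → ℚ) :
    ∑ f, F f = ∑ j : Fin k, ∑ f : Fin n → Fin k, F (Fin.snoc f j) := by
  rw [← Fintype.sum_prod_type']
  refine (Fintype.sum_equiv (Fin.snocEquiv fun _ => Fin k) _ _ ?_).symm
  rintro ⟨j, f⟩
  rfl

lemma VV_succ (k n : ℕ) (c : Fin (n+1) → Option Bool) (j : Fin k) :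
    VV k (n+1) c j = ∑ j' : Fin k, wt (c (Fin.last n)) j' j * VV k n (fun i => c i.castSucc) j' := by
  unfold VV
  rw [sum_snoc]
  refine Finset.sum_congr rfl fun j' _ => ?_
  rw [Finset.mul_sum]
  refine Finset.sum_congr rfl fun f _ => ?_
  rw [Fin.prod_univ_castSucc, mul_comm]
  congr 1
  · rw [Fin.succ_last, Fin.snoc_castSucc, Fin.snoc_last, Fin.snoc_last]
  · refine Finset.prod_congr rfl fun i _ => ?_
    rw [Fin.succ_castSucc, Fin.snoc_castSucc, Fin.snoc_castSucc, Fin.snoc_castSucc]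

lemma hockey (e r m : ℕ) (h : e ≤ r) :
    ∑ j ∈ Finset.range m, (j + e).choose r = (m + e).choose (r + 1) := by
  induction m with
  | zero => simp [Nat.choose_eq_zero_of_lt (Nat.lt_succ_of_le h)]
  | succ m ih =>
    rw [Finset.sum_range_succ, ih, show m + 1 + e = (m + e) + 1 by ring, Nat.choose_succ_succ]
    ring

open Polynomial in
/-- polynomial with values `C(k+e, e+s+1)` -/
def cp (e s : ℕ) : ℚ[X] :=
  C (((e + s + 1).factorial : ℚ)⁻¹) * (X * ((∏ i ∈ Finset.range e, (X + C ((i:ℚ)+1))) *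
    ∏ i ∈ Finset.range s, (X - C ((i:ℚ)+1))))

lemma cp_eval (e s k : ℕ) : (cp e s).eval (k:ℚ) = ((k + e).choose (e + s + 1) : ℚ) := by
  have key : (k:ℚ) * ((∏ i ∈ Finset.range e, ((k:ℚ) + ((i:ℚ)+1))) *
      ∏ i ∈ Finset.range s, ((k:ℚ) - ((i:ℚ)+1))) = ((k+e).descFactorial (e+s+1) : ℚ) := by
    induction s with
    | zero =>
      induction e with
      | zero => simp
      | succ e ih =>
        simp only [Finset.range_zero, Finset.prod_empty, mul_one] at ih ⊢
        rw [Finset.prod_range_succ, ← mul_assoc, ih,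
          show e + 1 + 0 + 1 = (e + 0 + 1) + 1 by ring, ← add_assoc k e 1,
          Nat.succ_descFactorial_succ]
        push_cast
        ring
    | succ s ih =>
      rw [Finset.prod_range_succ, ← mul_assoc, ← mul_assoc, mul_assoc (k:ℚ), ih]
      rw [show e + (s+1) + 1 = (e+s+1)+1 by ring, Nat.descFactorial_succ _ (e+s+1)]
      by_cases h : e + s + 1 ≤ k + e
      · push_cast [Nat.cast_sub h]
        ring
      · rw [Nat.descFactorial_eq_zero_iff_lt.2 (show k + e < e + s + 1 by omega)]
        simp
  unfold cp
  simp only [Polynomial.eval_mul, Polynomial.eval_C, Polynomial.eval_X, Polynomial.eval_prod,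
    Polynomial.eval_add, Polynomial.eval_sub]
  rw [key, Nat.descFactorial_eq_factorial_mul_choose]
  push_cast
  rw [inv_mul_cancel_left₀]
  exact_mod_cast Nat.factorial_ne_zero _

lemma cp_coeff_one (e s : ℕ) :
    ((e + s + 1 : ℕ):ℚ) * (cp e s).coeff 1 = (-1)^s / ((e+s).choose s : ℚ) := by
  have h1 : ∀ e : ℕ, ∏ i ∈ Finset.range e, ((i:ℚ)+1) = (e.factorial : ℚ) := by
    intro e
    rw [← Finset.prod_range_add_one_eq_factorial]
    push_cast
    rfl
  have h2 : ∏ i ∈ Finset.range s, (-((i:ℚ)+1)) = (-1)^s * (s.factorial : ℚ) := by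
    rw [← h1, Finset.prod_neg, Finset.card_range]
  have h3 : (cp e s).coeff 1 = ((e + s + 1).factorial : ℚ)⁻¹ *
      ((e.factorial : ℚ) * ((-1)^s * (s.factorial : ℚ))) := by
    unfold cp
    rw [Polynomial.coeff_C_mul, show (1:ℕ) = 0 + 1 from rfl, Polynomial.coeff_X_mul,
      Polynomial.coeff_zero_eq_eval_zero]
    simp only [Polynomial.eval_mul, Polynomial.eval_C, Polynomial.eval_X, Polynomial.eval_prod,
      Polynomial.eval_add, Polynomial.eval_sub, zero_add, zero_sub]
    rw [h1, h2]
  have h4 : (((e+s).choose s * e.factorial * s.factorial : ℕ):ℚ) = ((e+s).factorial : ℕ) := by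
    rw [← Nat.add_choose_mul_factorial_mul_factorial e s]
  push_cast at h4
  have hc : ((e+s).choose s : ℚ) ≠ 0 := by
    exact_mod_cast (Nat.choose_pos (Nat.le_add_left s e)).ne'
  have hf : ((e+s).factorial : ℚ) ≠ 0 := by exact_mod_cast Nat.factorial_ne_zero _
  have hn : ((e:ℚ)+s+1) ≠ 0 := by positivity
  rw [h3, Nat.factorial_succ]
  push_cast
  rw [eq_div_iff hc]
  field_simp
  rw [← h4]
  ring

lemma X_dvd_cp (e s : ℕ) : Polynomial.X ∣ cp e s :=
  Dvd.dvd.mul_left (dvd_mul_right _ _) _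

lemma VV_formula (n : ℕ) : ∀ c : Fin n → Option Bool, ∃ (Q : Polynomial ℚ) (e s : ℕ),
    ((∃ i, c i = none) → Polynomial.X ∣ Q) ∧
    ((∀ i, c i ≠ none) → Q = 1 ∧ e + s = n ∧
      s = (Finset.univ.filter fun i => c i = some false).card) ∧
    ∀ (k : ℕ) (j : Fin k), VV k n c j = Q.eval (k:ℚ) * (((j:ℕ) + e).choose (e + s) : ℚ) := by
  induction n with
  | zero =>
    intro c
    refine ⟨1, 0, 0, fun ⟨i, _⟩ => i.elim0, fun _ => ⟨rfl, rfl, by simp⟩, ?_⟩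
    intro k j
    simp [VV]
  | succ n ih =>
    intro c
    obtain ⟨Q, e, s, h1, h2, h3⟩ := ih (fun i => c i.castSucc)
    have hcard : (Finset.univ.filter fun i => c i = some false).card =
        (Finset.univ.filter fun i : Fin n => c i.castSucc = some false).card +
          if c (Fin.last n) = some false then 1 else 0 := by
      rw [Finset.card_filter, Finset.card_filter, Fin.sum_univ_castSucc]
    rcases hl : c (Fin.last n) with _ | _ | _
    · refine ⟨Q * cp e s, 0, 0, fun _ => (X_dvd_cp e s).mul_left _,
        fun h => absurd hl (h _), ?_⟩
      intro k j
      rw [VV_succ, hl]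
      simp only [wt, h3, one_mul]
      rw [← Finset.mul_sum, Fin.sum_univ_eq_sum_range (fun j => ((j + e).choose (e+s) : ℚ)),
        ← Nat.cast_sum, hockey _ _ _ (by omega), Polynomial.eval_mul, cp_eval]
      simp
    · refine ⟨Q, e, s + 1, ?_, ?_, ?_⟩
      · rintro ⟨i, hi⟩
        induction i using Fin.lastCases with
        | last => simp [hl] at hi
        | cast i => exact h1 ⟨i, hi⟩
      · intro h
        obtain ⟨a, b, d⟩ := h2 fun i => h _
        refine ⟨a, by omega, ?_⟩
        rw [hcard, hl, ← d]
        simp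
      · intro k j
        rw [VV_succ, hl]
        simp only [wt, h3]
        have : ∑ x : Fin k, (if (x:ℕ) < j then (1:ℚ) else 0) *
            (Q.eval (k:ℚ) * (((x:ℕ) + e).choose (e+s) : ℚ)) =
            ∑ x ∈ Finset.range j, (Q.eval (k:ℚ) * ((x + e).choose (e+s) : ℚ)) := by
          rw [Fin.sum_univ_eq_sum_range (fun x => (if x < j then (1:ℚ) else 0) *
            (Q.eval (k:ℚ) * ((x + e).choose (e+s) : ℚ)))]
          simp only [ite_mul, one_mul, zero_mul]
          rw [← Finset.sum_filter]
          refine Finset.sum_congr ?_ fun _ _ => rfl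
          ext x
          simp only [Finset.mem_filter, Finset.mem_range]
          omega
        rw [this, ← Finset.mul_sum, ← Nat.cast_sum, hockey _ _ _ (by omega)]
        rfl
    · refine ⟨Q, e + 1, s, ?_, ?_, ?_⟩
      · rintro ⟨i, hi⟩
        induction i using Fin.lastCases with
        | last => simp [hl] at hi
        | cast i => exact h1 ⟨i, hi⟩
      · intro h
        obtain ⟨a, b, d⟩ := h2 fun i => h _
        refine ⟨a, by omega, ?_⟩
        rw [hcard, hl, ← d]
        simp
      · intro k j
        rw [VV_succ, hl]
        simp only [wt, h3]
        have : ∑ x : Fin k, (if (x:ℕ) ≤ j then (1:ℚ) else 0) *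
            (Q.eval (k:ℚ) * (((x:ℕ) + e).choose (e+s) : ℚ)) =
            ∑ x ∈ Finset.range (j+1), (Q.eval (k:ℚ) * ((x + e).choose (e+s) : ℚ)) := by
          rw [Fin.sum_univ_eq_sum_range (fun x => (if x ≤ j then (1:ℚ) else 0) *
            (Q.eval (k:ℚ) * ((x + e).choose (e+s) : ℚ)))]
          simp only [ite_mul, one_mul, zero_mul]
          rw [← Finset.sum_filter]
          refine Finset.sum_congr ?_ fun _ _ => rfl
          ext x
          simp only [Finset.mem_filter, Finset.mem_range]
          omega
        rw [this, ← Finset.mul_sum, ← Nat.cast_sum, hockey _ _ _ (by omega)]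
        congr 3
        · ring
        · ring

/-- constraint code of `τ`, freed on `S` -/
def cc {n : ℕ} (τ : Equiv.Perm (Fin (n + 1))) (S : Finset (Fin n)) (i : Fin n) : Option Bool :=
  if i ∈ S then none else if i ∈ Des τ then some false else some true

lemma mem_Des {n : ℕ} (σ : Equiv.Perm (Fin (n + 1))) (i : Fin n) :
    i ∈ Des σ ↔ σ i.succ < σ i.castSucc := by
  simp [Des]

/-- lexicographic key -/
def key {n k : ℕ} (g : Fin (n+1) → Fin k) (i : Fin (n+1)) : Fin k ×ₗ Fin (n+1) :=
  toLex (g i, i)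

open Classical in
/-- number of compatible functions -/
def NN {n : ℕ} (k : ℕ) (τ : Equiv.Perm (Fin (n + 1))) (S : Finset (Fin n)) : ℚ :=
  ∑ g : Fin (n+1) → Fin k,
    if ∀ i, i ∉ S → key g (τ i.castSucc) < key g (τ i.succ) then 1 else 0

lemma NN_eq_VV {n : ℕ} (k : ℕ) (τ : Equiv.Perm (Fin (n + 1))) (S : Finset (Fin n)) :
    NN k τ S = ∑ j, VV k n (cc τ S) j := by
  classical
  unfold NN VV
  rw [← sum_snoc (fun f => ∏ i : Fin n, wt (cc τ S i) (f i.castSucc) (f i.succ))]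
  refine Fintype.sum_equiv (Equiv.arrowCongr τ.symm (Equiv.refl _)) _ _ ?_
  intro g
  trans (∏ i : Fin n, if (i ∉ S → key g (τ i.castSucc) < key g (τ i.succ)) then (1:ℚ) else 0)
  · rw [Finset.prod_boole]
    by_cases h : ∀ i, i ∉ S → key g (τ i.castSucc) < key g (τ i.succ)
    · rw [if_pos h, if_pos fun i _ => h i]
    · rw [if_neg h, if_neg fun h' => h fun i => h' i (Finset.mem_univ i)]
  refine Finset.prod_congr rfl fun i _ => ?_
  have hne : τ i.castSucc ≠ τ i.succ := fun h => by
    have := τ.injective h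
    simp [Fin.ext_iff] at this
  simp only [Equiv.arrowCongr_apply, Equiv.symm_symm, Function.comp, Equiv.coe_refl, id]
  unfold cc key
  by_cases hS : i ∈ S
  · simp [hS, wt]
  by_cases hD : i ∈ Des τ
  · have h' : ¬ τ i.castSucc < τ i.succ := by
      simp only [Des, Finset.mem_filter, Finset.mem_univ, true_and] at hD
      exact not_lt.2 hD.le
    simp [hS, hD, wt, Prod.Lex.toLex_lt_toLex, h']
  · have h' : τ i.castSucc < τ i.succ := by
      simp only [Des, Finset.mem_filter, Finset.mem_univ, true_and] at hD
      exact lt_of_le_of_ne (not_lt.1 hD) hne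
    simp [hS, hD, wt, Prod.Lex.toLex_lt_toLex, h', le_iff_lt_or_eq, Fin.ext_iff]

lemma NN_formula {n : ℕ} (τ : Equiv.Perm (Fin (n + 1))) (S : Finset (Fin n)) :
    ∃ P : Polynomial ℚ, (∀ k : ℕ, NN k τ S = P.eval (k:ℚ)) ∧
      (n + 1 : ℚ) * P.coeff 1 =
        if S = ∅ then (-1)^(Des τ).card / (n.choose (Des τ).card : ℚ) else 0 := by
  obtain ⟨Q, e, s, h1, h2, h3⟩ := VV_formula n (cc τ S)
  refine ⟨Q * cp e s, ?_, ?_⟩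
  · intro k
    rw [NN_eq_VV]
    simp only [h3]
    rw [← Finset.mul_sum, Fin.sum_univ_eq_sum_range (fun j => ((j + e).choose (e+s) : ℚ)),
        ← Nat.cast_sum, hockey _ _ _ (by omega), Polynomial.eval_mul, cp_eval]
  · split_ifs with hS
    · subst hS
      obtain ⟨rfl, hn, hs⟩ := h2 (by intro i; unfold cc; simp; split_ifs <;> simp)
      have : s = (Des τ).card := by
        rw [hs]
        congr 1
        ext i
        simp only [cc, Finset.mem_filter, Finset.mem_univ, true_and, Finset.notMem_empty, if_false]
        split_ifs with h <;> simp [h]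
      have h := cp_coeff_one e s
      rw [hn] at h
      push_cast at h
      rw [← this, one_mul, ← h]
    · obtain ⟨i, hi⟩ := Finset.nonempty_iff_ne_empty.2 hS
      obtain ⟨A, rfl⟩ := h1 ⟨i, by simp [cc, hi]⟩
      obtain ⟨B, hB⟩ := X_dvd_cp e s
      rw [hB, show Polynomial.X * A * (Polynomial.X * B) = Polynomial.X * (Polynomial.X * (A * B))
        by ring, show (1:ℕ) = 0 + 1 from rfl, Polynomial.coeff_X_mul, Polynomial.coeff_X_mul_zero,
        mul_zero]

lemma key_inj {n k : ℕ} (g : Fin (n+1) → Fin k) : Function.Injective (key g) := by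
  intro a b h
  have := congrArg (fun x => (ofLex x).2) h
  simpa [key] using this

open Classical in
lemma NN_sum {n : ℕ} (k : ℕ) (τ : Equiv.Perm (Fin (n + 1))) (S : Finset (Fin n)) :
    ∑ σ : Equiv.Perm (Fin (n+1)), (if Des (σ⁻¹ * τ) ⊆ S then NN k σ ∅ else 0) = NN k τ S := by
  have hstep : ∀ (g : Fin (n+1) → Fin k) (σ : Equiv.Perm (Fin (n+1))),
      (∀ i : Fin n, i ∉ (∅ : Finset (Fin n)) → key g (σ i.castSucc) < key g (σ i.succ)) ↔
        StrictMono (key g ∘ σ) := by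
    intro g σ
    rw [Fin.strictMono_iff_lt_succ]
    simp
  unfold NN
  simp only [hstep]
  rw [show (∑ σ : Equiv.Perm (Fin (n+1)), (if Des (σ⁻¹ * τ) ⊆ S then
    ∑ g : Fin (n+1) → Fin k, (if StrictMono (key g ∘ σ) then (1:ℚ) else 0) else 0)) =
    ∑ σ : Equiv.Perm (Fin (n+1)), ∑ g : Fin (n+1) → Fin k, (if Des (σ⁻¹ * τ) ⊆ S then
     (if StrictMono (key g ∘ σ) then (1:ℚ) else 0) else 0) from
     Finset.sum_congr rfl fun σ _ => by split_ifs <;> simp]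
  rw [Finset.sum_comm]
  refine Finset.sum_congr rfl fun g _ => ?_
  have hs : StrictMono (key g ∘ Tuple.sort (key g)) :=
    (Tuple.monotone_sort (key g)).strictMono_of_injective
      ((key_inj g).comp (Equiv.injective _))
  rw [Finset.sum_eq_single (Tuple.sort (key g))]
  · rw [if_pos hs]
    refine if_congr ?_ rfl rfl
    set σ := Tuple.sort (key g) with hσ
    have hlt : ∀ a b, σ⁻¹ a < σ⁻¹ b ↔ key g a < key g b := by
      intro a b
      rw [← hs.lt_iff_lt]
      simp
    have hD : ∀ i, i ∉ Des (σ⁻¹ * τ) ↔ key g (τ i.castSucc) < key g (τ i.succ) := by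
      intro i
      rw [← hlt]
      rw [mem_Des, not_lt, Equiv.Perm.mul_apply, Equiv.Perm.mul_apply]
      have hne : σ⁻¹ (τ i.castSucc) ≠ σ⁻¹ (τ i.succ) := fun h => by
        have := τ.injective (σ⁻¹.injective h)
        simp [Fin.ext_iff] at this
      exact ⟨fun h => lt_of_le_of_ne h hne, le_of_lt⟩
    constructor
    · intro h i hi
      exact (hD i).1 fun h' => hi (h h')
    · intro h i hi
      by_contra hn
      exact (hD i).2 (h i hn) hi
  · intro σ _ hne
    have : ¬ StrictMono (key g ∘ σ) := by
      intro h
      apply hne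
      have := Tuple.unique_monotone h.monotone hs.monotone
      ext i
      exact congrArg _ (key_inj g (congrFun this i))
    simp [this]
  · simp

/-- rational coefficient of phi -/
def aa {n : ℕ} (σ : Equiv.Perm (Fin (n + 1))) : ℚ :=
  (-1)^(Des σ).card / (n.choose (Des σ).card : ℚ)

lemma aa_sum {n : ℕ} (τ : Equiv.Perm (Fin (n + 1))) (S : Finset (Fin n)) :
    ∑ σ : Equiv.Perm (Fin (n+1)), (if Des (σ⁻¹ * τ) ⊆ S then aa σ else 0) =
      if S = ∅ then aa τ else 0 := by
  classical
  choose P hP hc using fun σ : Equiv.Perm (Fin (n+1)) => NN_formula σ ∅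
  obtain ⟨R, hR, hcR⟩ := NN_formula τ S
  have hpoly : ∑ σ : Equiv.Perm (Fin (n+1)), (if Des (σ⁻¹ * τ) ⊆ S then P σ else 0) = R := by
    apply Polynomial.eq_of_infinite_eval_eq
    refine Set.Infinite.mono ?_ (Set.infinite_range_of_injective (Nat.cast_injective (R := ℚ)))
    rintro _ ⟨k, rfl⟩
    simp only [Set.mem_ofPred_eq]
    rw [← hR, ← NN_sum, Polynomial.eval_finsetSum]
    refine Finset.sum_congr rfl fun σ _ => ?_
    split_ifs <;> simp [hP]
  unfold aa
  rw [← hcR, ← hpoly, Polynomial.finsetSum_coeff, Finset.mul_sum]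
  refine Finset.sum_congr rfl fun σ _ => ?_
  have := hc σ
  rw [if_pos rfl] at this
  split_ifs
  · exact this.symm
  · simp

lemma pow_maj {n : ℕ} (ρ : Equiv.Perm (Fin (n + 1))) (x : RatFunc ℚ) :
    x ^ maj ρ = ∑ S : Finset (Fin n), (∏ i ∈ S, x^((i:ℕ)+1)) *
      (∏ i ∈ Sᶜ, (1 - x^((i:ℕ)+1))) * (if Des ρ ⊆ S then 1 else 0) := by
  have h : x ^ maj ρ = ∏ i : Fin n, (x^((i:ℕ)+1) +
      (1 - x^((i:ℕ)+1)) * (if i ∉ Des ρ then 1 else 0)) := by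
    unfold maj
    rw [← Finset.prod_pow_eq_pow_sum, ← Finset.prod_filter_mul_prod_filter_not Finset.univ (· ∈ Des ρ),
      Finset.filter_mem_eq_inter, Finset.univ_inter]
    rw [Finset.prod_eq_one (s := Finset.univ.filter (· ∉ Des ρ)), mul_one]
    · refine Finset.prod_congr rfl fun i hi => ?_
      simp [hi]
    · intro i hi
      rw [Finset.mem_filter] at hi
      simp [hi.2]
  rw [h, Finset.prod_add, Finset.powerset_univ]
  refine Finset.sum_congr rfl fun S _ => ?_
  rw [← Finset.compl_eq_univ_sdiff, Finset.prod_mul_distrib, mul_assoc, Finset.prod_boole]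
  congr 2
  by_cases h : Des ρ ⊆ S
  · rw [if_pos h, if_pos]
    intro i hi hd
    exact (Finset.mem_compl.1 hi) (h hd)
  · rw [if_neg h, if_neg]
    intro h'
    apply h
    intro i hi
    by_contra hn
    exact h' i (by simpa using hn) hi

/-- Group-algebra form of the internal-product identity `K_n(q) ∗ Φ_n = (q)_{n−1} Φ_n`:
in `ℚ(q)[S_{n+1}]`, `φ·κ = (∏_{i=1}^{n} (1 − qⁱ))·φ`. -/
theorem phi_kappa_product (n : ℕ) :
    phi n * kappa n = (∏ i ∈ Finset.range n, (1 - (RatFunc.X : RatFunc ℚ) ^ (i + 1))) • phi n := by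
  classical
  set x : RatFunc ℚ := RatFunc.X with hx
  have hphi : phi n = ∑ σ : Equiv.Perm (Fin (n + 1)),
      MonoidAlgebra.single σ (algebraMap ℚ (RatFunc ℚ) (aa σ)) := by
    unfold phi aa
    refine Finset.sum_congr rfl fun σ _ => ?_
    simp
  have hk : kappa n = ∑ σ : Equiv.Perm (Fin (n + 1)), MonoidAlgebra.single σ (x ^ maj σ) := by
    unfold kappa
    refine Finset.sum_congr rfl fun σ _ => ?_
    simp [hx]
  have hmul : phi n * kappa n = ∑ τ : Equiv.Perm (Fin (n + 1)), MonoidAlgebra.single τ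
      (∑ σ : Equiv.Perm (Fin (n + 1)),
        algebraMap ℚ (RatFunc ℚ) (aa σ) * x ^ maj (σ⁻¹ * τ)) := by
    rw [hphi, hk, Finset.sum_mul_sum]
    simp only [MonoidAlgebra.single_mul_single]
    have : ∀ τ : Equiv.Perm (Fin (n + 1)), MonoidAlgebra.single τ
      (∑ σ : Equiv.Perm (Fin (n + 1)),
        algebraMap ℚ (RatFunc ℚ) (aa σ) * x ^ maj (σ⁻¹ * τ)) =
        ∑ σ : Equiv.Perm (Fin (n + 1)), MonoidAlgebra.single τ
        (algebraMap ℚ (RatFunc ℚ) (aa σ) * x ^ maj (σ⁻¹ * τ)) := fun τ =>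
      map_sum (MonoidAlgebra.singleAddHom τ) _ _
    simp only [this]
    rw [Finset.sum_comm (s := Finset.univ) (t := Finset.univ) (f := fun τ σ =>
      MonoidAlgebra.single τ (algebraMap ℚ (RatFunc ℚ) (aa σ) * x ^ maj (σ⁻¹ * τ)))]
    refine Finset.sum_congr rfl fun σ _ => ?_
    refine Fintype.sum_equiv (Equiv.mulLeft σ) _ _ fun ρ => ?_
    simp
  rw [hmul, hphi, Finset.smul_sum]
  refine Finset.sum_congr rfl fun τ _ => ?_
  rw [MonoidAlgebra.smul_single, smul_eq_mul]
  congr 1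
  simp only [pow_maj, Finset.mul_sum]
  rw [Finset.sum_comm]
  have hS : ∀ S : Finset (Fin n), ∑ σ : Equiv.Perm (Fin (n + 1)),
      algebraMap ℚ (RatFunc ℚ) (aa σ) * ((∏ i ∈ S, x^((i:ℕ)+1)) *
      (∏ i ∈ Sᶜ, (1 - x^((i:ℕ)+1))) * (if Des (σ⁻¹ * τ) ⊆ S then 1 else 0)) =
      (∏ i ∈ S, x^((i:ℕ)+1)) * (∏ i ∈ Sᶜ, (1 - x^((i:ℕ)+1))) *
        algebraMap ℚ (RatFunc ℚ) (if S = ∅ then aa τ else 0) := by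
    intro S
    rw [← aa_sum, map_sum, Finset.mul_sum]
    refine Finset.sum_congr rfl fun σ _ => ?_
    split_ifs
    · ring
    · simp
  simp only [hS]
  rw [Finset.sum_eq_single ∅]
  · simp only [Finset.prod_empty, one_mul, Finset.compl_empty, if_true]
    rw [Fin.prod_univ_eq_prod_range (fun i => 1 - x^(i+1))]
  · intro S _ h
    simp [h]
  · simp

end

end Descents14
end

section
/- Work in the free associative algebra over the polynomial ring ℚ[q] on the generators S_n. For a composition I = (i₁,…,i_r) let maj(I) := Σ_{k=1}^{r−1} (i₁+⋯+i_k) and let PS(I) := {i₁, i₁+i₂, …, i₁+⋯+i_r} be the set of its partial sums. Then for every n ≥ 1: Σ_{|I|=n} q^{maj(I)} R_I = Σ_{|I|=n} q^{maj(I)} ( Π_{m ∈ {1,…,n} \ PS(I)} (1 − q^m) ) S^I. (This is the weight-n component of the factorization k(q) = ⋯σ(q²)σ(q)σ(1) of the generating series of the functions K_n(q) = Σ_{|I|=n} q^{maj(I)} R_I, i.e. of K_n(q)/(q)_n.) -/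
open Finset Polynomial

namespace NCSF15

noncomputable section

/-- The free associative algebra `ℚ[q]⟨S₁,S₂,S₃,…⟩` (scalars extended to `ℚ[q]`),
the generator of index `n : ℕ` representing `S (n+1)`. -/
abbrev SymQ : Type := FreeAlgebra (Polynomial ℚ) ℕ

/-- The complete homogeneous noncommutative symmetric functions. -/
def S : ℕ → SymQ
  | 0 => 1
  | n + 1 => FreeAlgebra.ι (Polynomial ℚ) n

/-- `S^I = S_{i₁} ⋯ S_{i_r}`. -/
def SProd (L : List ℕ) : SymQ := (L.map S).prod

/-- The set `PS(I)` of partial sums `i₁ + ⋯ + i_k` (`1 ≤ k ≤ length`) of a list. -/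
def psums (L : List ℕ) : Finset ℕ :=
  (Finset.range L.length).image fun k => (L.take (k + 1)).sum

/-- The noncommutative ribbon Schur function `R_I = ∑_{J ⪯ I} (−1)^{ℓ(I)−ℓ(J)} S^J`. -/
def Ribbon (L : List ℕ) : SymQ :=
  ∑ J : Composition L.sum,
    if psums J.blocks ⊆ psums L then
      (((-1 : Polynomial ℚ) ^ (L.length - J.length))) • SProd J.blocks
    else 0

/-- The major index `maj(I) = ∑_{k=1}^{r−1} (i₁+⋯+i_k)` of a composition. -/
def majC (L : List ℕ) : ℕ :=
  ∑ k ∈ Finset.range (L.length - 1), (L.take (k + 1)).sum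

theorem Ribbon_eq {n : ℕ} (L : List ℕ) (h : L.sum = n) :
    Ribbon L = ∑ J : Composition n,
      if psums J.blocks ⊆ psums L then
        (((-1 : Polynomial ℚ) ^ (L.length - J.length))) • SProd J.blocks
      else 0 := by
  subst h; rfl

theorem psums_append (L : List ℕ) (a : ℕ) :
    psums (L ++ [a]) = insert (L.sum + a) (psums L) := by
  unfold psums
  rw [List.length_append, List.length_singleton, Finset.range_add_one, Finset.image_insert]
  congr 1
  · rw [List.take_of_length_le (by simp)]; simp
  · apply Finset.image_congr
    intro k hk
    have hk' : k < L.length := by simpa using hk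
    have : k + 1 ≤ L.length := hk'
    simp only [List.take_append_of_le_length this]

theorem majC_append (L : List ℕ) (a : ℕ) :
    majC (L ++ [a]) = ∑ k ∈ Finset.range L.length, (L.take (k + 1)).sum := by
  unfold majC
  rw [List.length_append, List.length_singleton, Nat.add_sub_cancel]
  apply Finset.sum_congr rfl
  intro k hk
  have hk' : k + 1 ≤ L.length := by simpa using hk
  rw [List.take_append_of_le_length hk']

theorem psums_facts (L : List ℕ) : (∀ x ∈ L, 0 < x) →
    psums L ⊆ Finset.Icc 1 L.sum ∧ (psums L).card = L.length ∧
    ∑ m ∈ psums L, m = ∑ k ∈ Finset.range L.length, (L.take (k + 1)).sum := by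
  induction L using List.reverseRecOn with
  | nil => intro _; simp [psums]
  | append_singleton L a ih =>
    intro h
    obtain ⟨h1, h2, h3⟩ := ih (fun x hx => h x (by simp [hx]))
    have ha : 0 < a := h a (by simp)
    have hn : L.sum + a ∉ psums L := by
      intro hm
      have := Finset.mem_Icc.1 (h1 hm)
      omega
    refine ⟨?_, ?_, ?_⟩
    · rw [psums_append]
      intro x hx
      rw [Finset.mem_insert] at hx
      simp only [List.sum_append, List.sum_singleton, Finset.mem_Icc]
      rcases hx with rfl | hx
      · omega
      · have := Finset.mem_Icc.1 (h1 hx)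
        omega
    · rw [psums_append, Finset.card_insert_of_notMem hn, h2]; simp
    · rw [psums_append, Finset.sum_insert hn, h3, List.length_append, List.length_singleton,
        Finset.sum_range_succ, List.take_of_length_le (by simp), add_comm]
      congr 1
      · apply Finset.sum_congr rfl
        intro k hk
        have hk' : k + 1 ≤ L.length := by simpa using hk
        rw [List.take_append_of_le_length hk']
      · simp

theorem exists_list (n : ℕ) : ∀ T : Finset ℕ, 1 ≤ n → T ⊆ Finset.Ico 1 n →
    ∃ L : List ℕ, (∀ x ∈ L, 0 < x) ∧ L.sum = n ∧ psums L = insert n T := by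
  induction n using Nat.strong_induction_on with
  | _ n ih =>
    intro T hn hT
    rcases T.eq_empty_or_nonempty with rfl | hne
    · refine ⟨[n], ?_, ?_, ?_⟩
      · simp; omega
      · simp
      · simp [psums]
    · have hm := T.max'_mem hne
      set m := T.max' hne with hmdef
      have hm2 := Finset.mem_Ico.1 (hT hm)
      obtain ⟨L, h1, h2, h3⟩ := ih m hm2.2 (T.erase m) hm2.1 (by
        intro x hx
        rw [Finset.mem_erase] at hx
        have hx1 := Finset.mem_Ico.1 (hT hx.2)
        have hx2 := T.le_max' x hx.2
        rw [Finset.mem_Ico]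
        have := hx.1
        omega)
      refine ⟨L ++ [n - m], ?_, ?_, ?_⟩
      · intro x hx
        simp only [List.mem_append, List.mem_singleton] at hx
        rcases hx with hx | rfl
        · exact h1 x hx
        · omega
      · simp [h2]; omega
      · rw [psums_append, h2, h3, Finset.insert_erase hm]
        congr 1; omega

theorem comp_facts {n : ℕ} (hn : 1 ≤ n) (I : Composition n) :
    ∃ T ⊆ Finset.Ico 1 n, psums I.blocks = insert n T ∧ I.length = T.card + 1 ∧
      majC I.blocks = ∑ m ∈ T, m := by
  obtain ⟨L, hp, hs⟩ := I
  change ∃ T ⊆ Finset.Ico 1 n, psums L = insert n T ∧ L.length = T.card + 1 ∧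
      majC L = ∑ m ∈ T, m
  induction L using List.reverseRecOn with
  | nil => simp at hs; omega
  | append_singleton L a _ =>
    obtain ⟨h1, h2, h3⟩ := psums_facts L (fun x hx => hp (by simp [hx]))
    have ha : 0 < a := hp (by simp)
    simp only [List.sum_append, List.sum_singleton] at hs
    refine ⟨psums L, ?_, ?_, ?_, ?_⟩
    · intro x hx
      have := Finset.mem_Icc.1 (h1 hx)
      rw [Finset.mem_Ico]; omega
    · rw [psums_append, hs]
    · rw [h2]; simp
    · rw [majC_append, h3]

def D {n : ℕ} (hn : 1 ≤ n) (I : Composition n) : Finset ℕ := (comp_facts hn I).choose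

theorem D_spec {n : ℕ} (hn : 1 ≤ n) (I : Composition n) :
    D hn I ⊆ Finset.Ico 1 n ∧ psums I.blocks = insert n (D hn I) ∧
      I.length = (D hn I).card + 1 ∧ majC I.blocks = ∑ m ∈ D hn I, m :=
  (comp_facts hn I).choose_spec

theorem insert_sub {n : ℕ} {T U : Finset ℕ} (hT : T ⊆ Finset.Ico 1 n)
    (h : insert n T ⊆ insert n U) : T ⊆ U := by
  intro x hx
  have h1 := Finset.mem_Ico.1 (hT hx)
  have h2 := h (Finset.mem_insert_of_mem hx)
  rw [Finset.mem_insert] at h2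
  rcases h2 with h2 | h2
  · omega
  · exact h2

theorem D_bij {n : ℕ} (hn : 1 ≤ n) : Function.Bijective
    (fun I : Composition n => (⟨D hn I, Finset.mem_powerset.2 (D_spec hn I).1⟩ :
      {T // T ∈ (Finset.Ico 1 n).powerset})) := by
  rw [Fintype.bijective_iff_surjective_and_card]
  constructor
  · rintro ⟨T, hT⟩
    have hT' := Finset.mem_powerset.1 hT
    obtain ⟨L, h1, h2, h3⟩ := exists_list n T hn hT'
    refine ⟨⟨L, fun {x} hx => h1 x hx, h2⟩, ?_⟩
    apply Subtype.ext
    have h := D_spec hn ⟨L, fun {x} hx => h1 x hx, h2⟩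
    have h4 := h.2.1
    change psums L = _ at h4
    rw [h3] at h4
    exact (insert_sub h.1 h4.ge).antisymm (insert_sub hT' h4.le)
  · rw [composition_card, Fintype.card_coe, Finset.card_powerset, Nat.card_Ico]

theorem sum_comp {n : ℕ} (hn : 1 ≤ n) (F : Finset ℕ → Polynomial ℚ) :
    ∑ I : Composition n, F (D hn I) = ∑ T ∈ (Finset.Ico 1 n).powerset, F T := by
  rw [← Finset.sum_coe_sort _ F]
  exact Fintype.sum_bijective _ (D_bij hn) _ _ (fun _ => rfl)

theorem key (A B : Finset ℕ) (hB : B ⊆ A) :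
    ∑ T ∈ A.powerset, (if B ⊆ T then
      (X : Polynomial ℚ) ^ (∑ m ∈ T, m) * (-1) ^ (T.card - B.card) else 0) =
    X ^ (∑ m ∈ B, m) * ∏ m ∈ A \ B, (1 - (X : Polynomial ℚ) ^ m) := by
  have h := Finset.prod_add (fun m => if m ∈ B then (X : Polynomial ℚ) ^ m else - X ^ m)
    (fun m => if m ∈ B then (0 : Polynomial ℚ) else 1) A
  trans ∏ m ∈ A, ((if m ∈ B then (X : Polynomial ℚ) ^ m else - X ^ m) +
    (if m ∈ B then (0 : Polynomial ℚ) else 1))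
  · rw [h]
    apply Finset.sum_congr rfl
    intro T hT
    by_cases hBT : B ⊆ T
    · rw [if_pos hBT]
      have e1 : ∏ m ∈ A \ T, (if m ∈ B then (0 : Polynomial ℚ) else 1) = 1 := by
        apply Finset.prod_eq_one
        intro m hm
        rw [if_neg]
        intro hmB
        exact (Finset.mem_sdiff.1 hm).2 (hBT hmB)
      have e2 : ∏ m ∈ B, (if m ∈ B then (X : Polynomial ℚ) ^ m else - X ^ m)
          = ∏ m ∈ B, X ^ m := Finset.prod_congr rfl (fun m hm => by rw [if_pos hm])
      have e3 : ∏ m ∈ T \ B, (if m ∈ B then (X : Polynomial ℚ) ^ m else - X ^ m)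
          = ∏ m ∈ T \ B, ((-1) * X ^ m) :=
        Finset.prod_congr rfl (fun m hm => by
          rw [if_neg (Finset.mem_sdiff.1 hm).2, neg_one_mul])
      rw [e1, mul_one, ← Finset.prod_sdiff hBT, e2, e3, Finset.prod_mul_distrib,
        Finset.prod_const, Finset.card_sdiff_of_subset hBT, mul_assoc, Finset.prod_sdiff hBT,
        Finset.prod_pow_eq_pow_sum, mul_comm]
    · rw [if_neg hBT]
      obtain ⟨b, hb, hbT⟩ := Finset.not_subset.1 hBT
      rw [Finset.prod_eq_zero (s := A \ T) (i := b)
        (Finset.mem_sdiff.2 ⟨hB hb, hbT⟩) (by rw [if_pos hb]), mul_zero]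
  · rw [← Finset.prod_sdiff hB, mul_comm]
    congr 1
    · rw [← Finset.prod_pow_eq_pow_sum]
      exact Finset.prod_congr rfl (fun m hm => by rw [if_pos hm, if_pos hm, add_zero])
    · exact Finset.prod_congr rfl (fun m hm => by
        have := (Finset.mem_sdiff.1 hm).2
        rw [if_neg this, if_neg this]; ring)

/-- **Weight-`n` component of the factorization `k(q) = ⋯σ(q²)σ(q)σ(1)`** of the
generating series of `K_n(q)/(q)_n`: for every `n ≥ 1`,
`∑_{|I|=n} q^{maj(I)} R_I
  = ∑_{|I|=n} q^{maj(I)} (∏_{m ∈ {1,…,n} ∖ PS(I)} (1 − q^m)) S^I`. -/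
theorem K_n_factorization :
    ∀ n : ℕ, 1 ≤ n →
      (∑ I : Composition n, ((X : Polynomial ℚ) ^ majC I.blocks) • Ribbon I.blocks) =
        ∑ I : Composition n,
          (((X : Polynomial ℚ) ^ majC I.blocks) *
              ∏ m ∈ Finset.Icc 1 n \ psums I.blocks, (1 - (X : Polynomial ℚ) ^ m)) •
            SProd I.blocks := by
  intro n hn
  have h1 : ∀ I : Composition n, ((X : Polynomial ℚ) ^ majC I.blocks) • Ribbon I.blocks =
      ∑ J : Composition n, (if D hn J ⊆ D hn I then
        (X : Polynomial ℚ) ^ (∑ m ∈ D hn I, m) * (-1) ^ ((D hn I).card - (D hn J).card) else 0) •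
          SProd J.blocks := by
    intro I
    rw [Ribbon_eq I.blocks I.blocks_sum, Finset.smul_sum]
    apply Finset.sum_congr rfl
    intro J _
    obtain ⟨i1, i2, i3, i4⟩ := D_spec hn I
    obtain ⟨j1, j2, j3, j4⟩ := D_spec hn J
    have hl : I.blocks.length = (D hn I).card + 1 := i3
    rw [i2, j2, hl, j3, i4, Nat.add_sub_add_right]
    by_cases h : D hn J ⊆ D hn I
    · rw [if_pos h, if_pos (Finset.insert_subset_insert n h), smul_smul]
    · rw [if_neg h, if_neg (fun h' => h (insert_sub j1 h')), smul_zero, zero_smul]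
  rw [Finset.sum_congr rfl (fun I _ => h1 I), Finset.sum_comm]
  apply Finset.sum_congr rfl
  intro J _
  obtain ⟨j1, j2, j3, j4⟩ := D_spec hn J
  rw [← Finset.sum_smul, sum_comp hn (fun T => if D hn J ⊆ T then
        (X : Polynomial ℚ) ^ (∑ m ∈ T, m) * (-1) ^ (T.card - (D hn J).card) else 0),
    key _ _ j1, j4, j2]
  congr 3
  ext x
  simp only [Finset.mem_sdiff, Finset.mem_Ico, Finset.mem_Icc, Finset.mem_insert, not_or]
  constructor
  · rintro ⟨⟨a, b⟩, c⟩
    exact ⟨⟨a, b.le⟩, b.ne, c⟩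
  · rintro ⟨⟨a, b⟩, c, d⟩
    exact ⟨⟨a, lt_of_le_of_ne b c⟩, d⟩

end

end NCSF15
end

section
/- Let Sym[t] denote polynomials in a central (commuting) variable t with coefficients in Sym. For every n ≥ 1: Σ_{|I|=n} t^{ℓ(I)} R_I = Σ_{|I|=n} (1−t)^{n−ℓ(I)} t^{ℓ(I)} S^I, the sums being over all compositions I of n. (This identity is the weight-n component of the generating-series identity A(t) = (1−t)(1 − tσ(1−t))^{−1} for the noncommutative Eulerian polynomials Aₙ(t) = Σ_k t^k A(n,k), where A(n,k) = Σ_{|I|=n, ℓ(I)=k} R_I.) -/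
open Finset

namespace NCSF

noncomputable section

/-- `Sym = ℚ⟨S₁,S₂,S₃,…⟩`, the free associative algebra over `ℚ` on countably many
noncommuting generators, the generator of index `n : ℕ` representing `S (n+1)`. -/
abbrev Sym : Type := FreeAlgebra ℚ ℕ

/-- The complete homogeneous noncommutative symmetric functions: `S 0 = 1` and
`S (n+1)` is the `n`-th generator of the free algebra. -/
def S : ℕ → Sym
  | 0 => 1
  | n + 1 => FreeAlgebra.ι ℚ n

/-- `S^I = S_{i₁} ⋯ S_{i_r}` for a list `I = [i₁, …, i_r]`. -/
def SProd (L : List ℕ) : Sym := (L.map S).prod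

/-- The set of partial sums `i₁ + ⋯ + i_k` (`1 ≤ k ≤ length`) of a list. -/
def psums (L : List ℕ) : Finset ℕ :=
  (Finset.range L.length).image fun k => (L.take (k + 1)).sum

/-- The noncommutative ribbon Schur function
`R_I = ∑_{J ⪯ I} (−1)^{ℓ(I)−ℓ(J)} S^J`, the sum being over the compositions `J`
of `|I|` that are coarser than `I` (every partial sum of `J` is a partial sum of `I`). -/
def Ribbon (L : List ℕ) : Sym :=
  ∑ J : Composition L.sum,
    if psums J.blocks ⊆ psums L then ((-1 : ℚ) ^ (L.length - J.length)) • SProd J.blocks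
    else 0



theorem ribbon_eq (L : List ℕ) (n : ℕ) (h : L.sum = n) :
    Ribbon L = ∑ J : Composition n,
      if psums J.blocks ⊆ psums L then ((-1 : ℚ) ^ (L.length - J.length)) • SProd J.blocks
      else 0 := by
  subst h; rfl

theorem mem_psums {n : ℕ} (c : Composition n) (j : ℕ) :
    j ∈ psums c.blocks ↔ ∃ k < c.length, c.sizeUpTo (k + 1) = j := by
  simp [psums, Composition.sizeUpTo]

theorem psums_pos {n : ℕ} (c : Composition n) {j : ℕ} (h : j ∈ psums c.blocks) : 1 ≤ j := by
  obtain ⟨k, hk, rfl⟩ := (mem_psums c j).1 h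
  have := c.sizeUpTo_strict_mono hk
  omega

theorem psums_sub {n : ℕ} (c : Composition n) : psums c.blocks ⊆ Finset.Icc 1 n := by
  intro j hj
  have h1 := psums_pos c hj
  obtain ⟨k, hk, rfl⟩ := (mem_psums c j).1 hj
  exact Finset.mem_Icc.2 ⟨h1, c.sizeUpTo_le _⟩

theorem mem_psums_self {n : ℕ} (hn : 1 ≤ n) (c : Composition n) : n ∈ psums c.blocks := by
  have h := c.length_pos_iff.2 hn
  refine (mem_psums c n).2 ⟨c.length - 1, by omega, ?_⟩
  rw [Nat.sub_add_cancel h, c.sizeUpTo_length]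

theorem mem_bd {n : ℕ} (c : Composition n) (j : Fin (n + 1)) :
    j ∈ c.boundaries ↔ (j = 0 ∨ j.val ∈ psums c.blocks) := by
  rw [mem_psums]
  simp only [Composition.boundaries, Finset.mem_map, Finset.mem_univ, true_and]
  constructor
  · rintro ⟨i, rfl⟩
    refine Fin.cases ?_ (fun k => ?_) i
    · left; exact c.boundary_zero
    · right; exact ⟨k, k.2, rfl⟩
  · rintro (rfl | ⟨k, hk, h⟩)
    · exact ⟨0, c.boundary_zero⟩
    · exact ⟨⟨k + 1, by omega⟩, Fin.ext h⟩

theorem psums_card {n : ℕ} (c : Composition n) : (psums c.blocks).card = c.length := by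
  have h : c.boundaries.map Fin.valEmbedding = insert 0 (psums c.blocks) := by
    ext j
    simp only [Finset.mem_map, Finset.mem_insert, Fin.valEmbedding_apply]
    constructor
    · rintro ⟨i, hi, rfl⟩
      rcases (mem_bd c i).1 hi with rfl | h
      · left; rfl
      · right; exact h
    · rintro (rfl | h)
      · exact ⟨0, (mem_bd c 0).2 (Or.inl rfl), rfl⟩
      · have := Finset.mem_Icc.1 (psums_sub c h)
        exact ⟨⟨j, by omega⟩, (mem_bd c _).2 (Or.inr h), rfl⟩
  have h2 := congrArg Finset.card h
  rw [Finset.card_map, c.card_boundaries_eq_succ_length, Finset.card_insert_of_notMem] at h2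
  · omega
  · intro h0
    have := psums_pos c h0
    omega

theorem psums_inj {n : ℕ} (c d : Composition n) (h : psums c.blocks = psums d.blocks) : c = d := by
  apply (compositionEquiv n).injective
  apply CompositionAsSet.ext
  change c.boundaries = d.boundaries
  ext j
  rw [mem_bd, mem_bd, h]

theorem psums_surj {n : ℕ} (A : Finset ℕ) (hA : A ⊆ Finset.Icc 1 n) (hn : n ∈ A) :
    ∃ c : Composition n, psums c.blocks = A := by
  let a : CompositionAsSet n :=
    { boundaries := Finset.univ.filter (fun i : Fin (n + 1) => i = 0 ∨ i.val ∈ A)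
      zero_mem := by simp
      getLast_mem := by simp [hn] }
  refine ⟨a.toComposition, ?_⟩
  have hb : a.toComposition.boundaries = a.boundaries := a.toComposition_boundaries
  have key : ∀ j : Fin (n + 1), (j = 0 ∨ j.val ∈ psums a.toComposition.blocks) ↔
      (j = 0 ∨ j.val ∈ A) := by
    intro j
    rw [← mem_bd, hb]
    simp [a]
  ext j
  constructor
  · intro h
    have h1 := Finset.mem_Icc.1 (psums_sub _ h)
    rcases (key ⟨j, by omega⟩).1 (Or.inr h) with h2 | h2
    · have := congrArg Fin.val h2
      simp at this; omega
    · exact h2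
  · intro h
    have h1 := Finset.mem_Icc.1 (hA h)
    rcases (key ⟨j, by omega⟩).2 (Or.inr h) with h2 | h2
    · have := congrArg Fin.val h2
      simp at this; omega
    · exact h2

theorem coeff_comm {n : ℕ} (hn : 1 ≤ n) (J : Composition n) :
    (∑ I : Composition n, if psums J.blocks ⊆ psums I.blocks then
      (Polynomial.X : Polynomial ℚ) ^ I.length * Polynomial.C ((-1 : ℚ) ^ (I.length - J.length))
      else 0) = (1 - Polynomial.X) ^ (n - J.length) * Polynomial.X ^ J.length := by
  have h1 := Finset.sum_pow_mul_eq_add_pow (-Polynomial.X : Polynomial ℚ) 1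
    (Finset.Icc 1 n \ psums J.blocks)
  have hc : (Finset.Icc 1 n \ psums J.blocks).card = n - J.length := by
    rw [Finset.card_sdiff_of_subset (psums_sub J), psums_card]; simp
  rw [hc, neg_add_eq_sub] at h1
  rw [← h1, Finset.sum_mul, ← Finset.sum_filter]
  refine Finset.sum_bij (fun I _ => psums I.blocks \ psums J.blocks) ?_ ?_ ?_ ?_
  · intro I _
    exact Finset.mem_powerset.2 (Finset.sdiff_subset_sdiff (psums_sub I) subset_rfl)
  · intro I hI K hK h
    have hI' := (Finset.mem_filter.1 hI).2
    have hK' := (Finset.mem_filter.1 hK).2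
    apply psums_inj
    rw [← Finset.sdiff_union_of_subset hI', ← Finset.sdiff_union_of_subset hK', h]
  · intro B hB
    rw [Finset.mem_powerset, Finset.subset_sdiff] at hB
    obtain ⟨c, hc⟩ := psums_surj (psums J.blocks ∪ B)
      (Finset.union_subset (psums_sub J) hB.1) (Finset.mem_union_left _ (mem_psums_self hn J))
    refine ⟨c, ?_, ?_⟩
    · simp [hc]
    · rw [hc, Finset.union_sdiff_left, Finset.sdiff_eq_self_of_disjoint hB.2]
  · intro I hI
    have hI' := (Finset.mem_filter.1 hI).2
    have hle := Finset.card_le_card hI'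
    rw [Finset.card_sdiff_of_subset hI', psums_card, psums_card]
    rw [psums_card, psums_card] at hle
    obtain ⟨d, hd⟩ := Nat.exists_eq_add_of_le hle
    rw [hd, Nat.add_sub_cancel_left, neg_pow (Polynomial.X : Polynomial ℚ), one_pow]
    have hC : (Polynomial.C ((-1 : ℚ) ^ d)) = (-1 : Polynomial ℚ) ^ d := by
      rw [Polynomial.C_pow, Polynomial.C_neg, Polynomial.C_1]
    rw [hC]
    ring

/-- **Weight-`n` component of the generating identity
`A(t) = (1−t)(1 − tσ(1−t))⁻¹` for the noncommutative Eulerian polynomials**: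
in `Sym[t]` (polynomials in a central variable `t` with coefficients in `Sym`),
for every `n ≥ 1`,
`∑_{|I|=n} t^{ℓ(I)} R_I = ∑_{|I|=n} (1−t)^{n−ℓ(I)} t^{ℓ(I)} S^I`. -/
theorem eulerian_generating_identity :
    ∀ n : ℕ, 1 ≤ n →
      (∑ I : Composition n,
          (Polynomial.X : Polynomial Sym) ^ I.length * Polynomial.C (Ribbon I.blocks)) =
        ∑ I : Composition n,
          (1 - (Polynomial.X : Polynomial Sym)) ^ (n - I.length) *
            (Polynomial.X : Polynomial Sym) ^ I.length * Polynomial.C (SProd I.blocks) := by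
  intro n hn
  have hsw : ∀ I : Composition n,
      (Polynomial.X : Polynomial Sym) ^ I.length * Polynomial.C (Ribbon I.blocks) =
      ∑ J : Composition n, (Polynomial.mapRingHom (algebraMap ℚ Sym)
        (if psums J.blocks ⊆ psums I.blocks then
          (Polynomial.X : Polynomial ℚ) ^ I.length *
            Polynomial.C ((-1 : ℚ) ^ (I.length - J.length)) else 0)) *
        Polynomial.C (SProd J.blocks) := by
    intro I
    rw [ribbon_eq I.blocks n I.blocks_sum, map_sum, Finset.mul_sum]
    refine Finset.sum_congr rfl fun J _ => ?_
    split_ifs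
    · rw [Algebra.smul_def, Polynomial.C_mul, ← mul_assoc]
      simp [Polynomial.map_mul]
    · simp
  rw [Finset.sum_congr rfl fun I _ => hsw I, Finset.sum_comm]
  refine Finset.sum_congr rfl fun J _ => ?_
  rw [← Finset.sum_mul, ← map_sum, coeff_comm hn J]
  simp [Polynomial.map_mul]

end

end NCSF
end

section
/- In Sym, let (2^j) denote the composition with j parts equal to 2 and (1,2^j) the composition consisting of a part 1 followed by j parts equal to 2, with the conventions R_{(2^0)} := 1 and R_{(1,2^0)} = S₁. Then: (i) for every n ≥ 1, Σ_{i=0}^{n} (−1)^i S_{2i} · R_{(2^{n−i})} = 0 (equivalently, the noncommutative secant SEC := COS^{−1}, where COS := Σ_{i≥0} (−1)^i S_{2i} t^{2i}, equals 1 + Σ_{n≥1} R_{(2^n)} t^{2n}); and (ii) for every n ≥ 0, Σ_{i=0}^{n} (−1)^i R_{(1,2^{n−i})} · S_{2i} = (−1)^n S_{2n+1} (equivalently, the noncommutative right tangent TAN_r := SIN·COS^{−1}, where SIN := Σ_{i≥0} (−1)^i S_{2i+1} t^{2i+1}, equals Σ_{n≥0} R_{(1,2^n)} t^{2n+1}).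 -/
open Finset

namespace NCSF

noncomputable section

theorem psums_nil : psums [] = ∅ := by simp [psums]

theorem mem_psums_cons (a : ℕ) (L : List ℕ) (x : ℕ) :
    x ∈ psums (a :: L) ↔ x = a ∨ ∃ y ∈ psums L, x = a + y := by
  simp only [psums, Finset.mem_image, Finset.mem_range, List.length_cons]
  constructor
  · rintro ⟨k, hk, rfl⟩
    cases k with
    | zero => left; simp
    | succ k => right; exact ⟨_, ⟨k, by omega, rfl⟩, by simp⟩
  · rintro (rfl | ⟨y, ⟨k, hk, rfl⟩, rfl⟩)
    · exact ⟨0, by omega, by simp⟩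
    · exact ⟨k + 1, by omega, by simp⟩

theorem psums_pos_s17 (L : List ℕ) (hL : ∀ i ∈ L, 0 < i) (x : ℕ) (hx : x ∈ psums L) : 0 < x := by
  cases L with
  | nil => simp [psums_nil] at hx
  | cons a L =>
    have := hL a (by simp)
    rw [mem_psums_cons] at hx
    rcases hx with rfl | ⟨y, _, rfl⟩ <;> omega

/-- Coarser compositions as lists. -/
def T (L : List ℕ) : Finset (List ℕ) :=
  ((Finset.univ : Finset (Composition L.sum)).image Composition.blocks).filter
    fun J => psums J ⊆ psums L

theorem mem_T (L J : List ℕ) :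
    J ∈ T L ↔ (∀ i ∈ J, 0 < i) ∧ J.sum = L.sum ∧ psums J ⊆ psums L := by
  simp only [T, Finset.mem_filter, Finset.mem_image, Finset.mem_univ, true_and]
  constructor
  · rintro ⟨⟨c, rfl⟩, h⟩
    exact ⟨fun i hi => c.blocks_pos hi, c.blocks_sum, h⟩
  · rintro ⟨h1, h2, h3⟩
    exact ⟨⟨⟨J, fun {i} hi => h1 i hi, h2⟩, rfl⟩, h3⟩

theorem ribbon_eq_s17 (L : List ℕ) :
    Ribbon L = ∑ J ∈ T L, ((-1 : ℚ) ^ (L.length - J.length)) • SProd J := by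
  rw [T, Finset.sum_filter, Finset.sum_image]
  · rfl
  · intro a _ b _ h
    exact Composition.ext h

theorem T_nil : T [] = {[]} := by
  ext J
  rw [mem_T, Finset.mem_singleton]
  constructor
  · rintro ⟨h1, h2, -⟩
    cases J with
    | nil => rfl
    | cons c J =>
      have := h1 c (by simp)
      simp at h2; omega
  · rintro rfl; simp

theorem T_single (a : ℕ) (ha : 0 < a) : T [a] = {[a]} := by
  ext J
  rw [mem_T, Finset.mem_singleton]
  constructor
  · rintro ⟨h1, h2, h3⟩
    cases J with
    | nil => simp at h2; omega
    | cons c J =>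
      have hc := h3 ((mem_psums_cons c J c).2 (Or.inl rfl))
      simp [mem_psums_cons, psums_nil] at hc
      subst hc
      cases J with
      | nil => rfl
      | cons d J =>
        have := h1 d (by simp)
        simp at h2; omega
  · rintro rfl; simpa using ha

theorem T_cons_cons (a b : ℕ) (L : List ℕ) (ha : 0 < a) (hb : 0 < b) :
    T (a :: b :: L) = (T (b :: L)).image (List.cons a) ∪ T ((a + b) :: L) := by
  ext J
  simp only [Finset.mem_union, Finset.mem_image, mem_T]
  constructor
  · rintro ⟨h1, h2, h3⟩
    cases J with
    | nil => simp at h2; omega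
    | cons c J =>
      by_cases hca : c = a
      · subst hca
        left
        have h1' : ∀ i ∈ J, 0 < i := fun i hi => h1 i (by simp [hi])
        refine ⟨J, ⟨h1', by simpa using h2, ?_⟩, rfl⟩
        intro y hy
        have := h3 ((mem_psums_cons c J (c + y)).2 (Or.inr ⟨y, hy, rfl⟩))
        have hp := psums_pos_s17 J h1' y hy
        rw [mem_psums_cons] at this
        rcases this with h | ⟨z, hz, h⟩
        · omega
        · have : y = z := by omega
          exact this ▸ hz
      · right
        refine ⟨h1, by simp at h2 ⊢; omega, ?_⟩
        have hc := h3 ((mem_psums_cons c J c).2 (Or.inl rfl))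
        have hcb : a < c := by
          simp only [mem_psums_cons] at hc
          rcases hc with h | ⟨y, h | ⟨z, _, h⟩, h'⟩ <;> omega
        intro x hx
        have hx' := h3 hx
        have hxc : c ≤ x := by
          rw [mem_psums_cons] at hx
          rcases hx with h | ⟨y, _, h⟩ <;> omega
        simp only [mem_psums_cons] at hx' ⊢
        rcases hx' with h | ⟨y, h | ⟨z, hz, h⟩, h'⟩
        · omega
        · left; omega
        · right; exact ⟨z, hz, by omega⟩
  · rintro (⟨J, ⟨h1, h2, h3⟩, rfl⟩ | ⟨h1, h2, h3⟩)
    · refine ⟨?_, by simpa using h2, ?_⟩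
      · intro i hi
        rcases List.mem_cons.1 hi with rfl | hi
        · exact ha
        · exact h1 i hi
      · intro x hx
        rw [mem_psums_cons] at hx ⊢
        rcases hx with h | ⟨y, hy, h⟩
        · exact Or.inl h
        · exact Or.inr ⟨y, h3 hy, h⟩
    · refine ⟨h1, by simp at h2 ⊢; omega, ?_⟩
      intro x hx
      have := h3 hx
      simp only [mem_psums_cons] at this ⊢
      rcases this with h | ⟨y, hy, h⟩
      · exact Or.inr ⟨b, Or.inl rfl, h⟩
      · exact Or.inr ⟨b + y, Or.inr ⟨y, hy, rfl⟩, by omega⟩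

theorem T_disj (a b : ℕ) (L : List ℕ) (hb : 0 < b) :
    Disjoint ((T (b :: L)).image (List.cons a)) (T ((a + b) :: L)) := by
  rw [Finset.disjoint_left]
  intro J hJ hJ'
  obtain ⟨J, _, rfl⟩ := Finset.mem_image.1 hJ
  have := ((mem_T _ _).1 hJ').2.2 ((mem_psums_cons a J a).2 (Or.inl rfl))
  rw [mem_psums_cons] at this
  rcases this with h | ⟨y, _, h⟩ <;> omega

theorem T_length (L : List ℕ) : ∀ a : ℕ, 0 < a → (∀ i ∈ L, 0 < i) →
    ∀ J ∈ T (a :: L), J.length ≤ L.length + 1 := by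
  induction L with
  | nil =>
    intro a ha _ J hJ
    rw [T_single a ha, Finset.mem_singleton] at hJ
    simp [hJ]
  | cons b L ih =>
    intro a ha hL J hJ
    have hb := hL b (by simp)
    have hL' : ∀ i ∈ L, 0 < i := fun i hi => hL i (by simp [hi])
    rw [T_cons_cons a b L ha hb, Finset.mem_union] at hJ
    rcases hJ with hJ | hJ
    · obtain ⟨K, hK, rfl⟩ := Finset.mem_image.1 hJ
      have := ih b hb hL' K hK
      simpa using this
    · have := ih (a + b) (by omega) hL' J hJ
      simp; omega

theorem ribbon_nil : Ribbon [] = 1 := by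
  simp [ribbon_eq_s17, T_nil, SProd]

theorem ribbon_single (a : ℕ) (ha : 0 < a) : Ribbon [a] = S a := by
  simp [ribbon_eq_s17, T_single a ha, SProd]

theorem ribbon_cons_cons (a b : ℕ) (L : List ℕ) (ha : 0 < a) (hb : 0 < b)
    (hL : ∀ i ∈ L, 0 < i) :
    Ribbon (a :: b :: L) = S a * Ribbon (b :: L) - Ribbon ((a + b) :: L) := by
  rw [ribbon_eq_s17, T_cons_cons a b L ha hb, Finset.sum_union (T_disj a b L hb),
    Finset.sum_image (by intro x _ y _ h; exact (List.cons.inj h).2), sub_eq_add_neg]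
  congr 1
  · rw [ribbon_eq_s17, Finset.mul_sum]
    refine Finset.sum_congr rfl fun J _ => ?_
    simp [SProd]
  · rw [ribbon_eq_s17, ← Finset.sum_neg_distrib]
    refine Finset.sum_congr rfl fun J hJ => ?_
    have h := T_length L (a + b) (by omega) hL J hJ
    have : (a :: b :: L).length - J.length = ((a + b) :: L).length - J.length + 1 := by
      simp; omega
    rw [this, pow_succ, mul_neg_one, neg_smul]

theorem ribbon_two (m : ℕ) : ∀ a : ℕ, 0 < a → Ribbon (a :: List.replicate m 2) =
    ∑ k ∈ Finset.range (m + 1),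
      ((-1 : ℚ) ^ k) • (S (a + 2 * k) * Ribbon (List.replicate (m - k) 2)) := by
  induction m with
  | zero => intro a ha; simp [ribbon_single a ha, ribbon_nil]
  | succ m ih =>
    intro a ha
    rw [List.replicate_succ, ribbon_cons_cons a 2 _ ha (by omega)
      (by intro i hi; rw [List.eq_of_mem_replicate hi]; omega), ih (a + 2) (by omega),
      Finset.sum_range_succ' _ (m + 1), sub_eq_add_neg, add_comm, ← Finset.sum_neg_distrib]
    congr 1
    · refine Finset.sum_congr rfl fun k _ => ?_
      rw [pow_succ, mul_neg_one, neg_smul, Nat.add_sub_add_right,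
        show a + 2 + 2 * k = a + 2 * (k + 1) by ring]
    · simp [List.replicate_succ]

theorem secant_aux (n : ℕ) (hn : 1 ≤ n) : ∑ i ∈ Finset.range (n + 1),
        ((-1 : ℚ) ^ i) • (S (2 * i) * Ribbon (List.replicate (n - i) 2)) = 0 := by
  obtain ⟨m, rfl⟩ : ∃ m, n = m + 1 := ⟨n - 1, by omega⟩
  rw [Finset.sum_range_succ']
  have h := ribbon_two m 2 (by omega)
  simp only [Nat.sub_zero, List.replicate_succ, h, mul_zero, pow_zero, one_smul, S, one_mul]
  rw [← Finset.sum_add_distrib]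
  refine Finset.sum_eq_zero fun k _ => ?_
  rw [pow_succ, mul_neg_one, neg_smul, Nat.add_sub_add_right,
    show 2 + 2 * k = 2 * (k + 1) by ring, neg_add_cancel]

/-- cosine series -/
def cosS : PowerSeries Sym := PowerSeries.mk fun i => ((-1 : ℚ) ^ i) • S (2 * i)
/-- sine series -/
def sinS : PowerSeries Sym := PowerSeries.mk fun i => ((-1 : ℚ) ^ i) • S (2 * i + 1)
/-- secant series -/
def secS : PowerSeries Sym := PowerSeries.mk fun i => Ribbon (List.replicate i 2)
/-- tangent series -/
def tanS : PowerSeries Sym := PowerSeries.mk fun i => Ribbon (1 :: List.replicate i 2)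

theorem cos_sec : cosS * secS = 1 := by
  ext n
  rw [PowerSeries.coeff_mul, Finset.Nat.sum_antidiagonal_eq_sum_range_succ_mk,
    PowerSeries.coeff_one]
  simp only [cosS, secS, PowerSeries.coeff_mk, smul_mul_assoc]
  split_ifs with h
  · subst h; simp [S, ribbon_nil]
  · exact secant_aux n (by omega)

theorem sec_cos : secS * cosS = 1 := by
  have h : PowerSeries.invOfUnit cosS 1 * cosS = 1 :=
    PowerSeries.invOfUnit_mul _ _ (by
      rw [← PowerSeries.coeff_zero_eq_constantCoeff_apply]; simp [cosS, S])
  rw [← left_inv_eq_right_inv h cos_sec, h]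

theorem sin_sec : sinS * secS = tanS := by
  ext n
  rw [PowerSeries.coeff_mul, Finset.Nat.sum_antidiagonal_eq_sum_range_succ_mk]
  simp only [sinS, secS, tanS, PowerSeries.coeff_mk, smul_mul_assoc]
  rw [ribbon_two n 1 one_pos]
  simp only [add_comm]

theorem tan_cos : tanS * cosS = sinS := by
  rw [← sin_sec, mul_assoc, sec_cos, mul_one]

/-- **Noncommutative secant and tangent** (here `(2^j)` is the composition with `j`
parts equal to `2` and `(1,2^j)` has a part `1` followed by `j` parts `2`;
`R_{(2^0)} = 1` and `R_{(1,2^0)} = S₁`):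
(i) for every `n ≥ 1`, `∑_{i=0}^{n} (−1)^i S_{2i} R_{(2^{n−i})} = 0`, which expresses
that `SEC = COS⁻¹` equals `1 + ∑_{n≥1} R_{(2^n)} t^{2n}`;
(ii) for every `n ≥ 0`, `∑_{i=0}^{n} (−1)^i R_{(1,2^{n−i})} S_{2i} = (−1)^n S_{2n+1}`,
which expresses that `TAN_r = SIN·COS⁻¹` equals `∑_{n≥0} R_{(1,2^n)} t^{2n+1}`. -/
theorem secant_and_tangent :
    (∀ n : ℕ, 1 ≤ n →
      ∑ i ∈ Finset.range (n + 1),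
        ((-1 : ℚ) ^ i) • (S (2 * i) * Ribbon (List.replicate (n - i) 2)) = 0) ∧
    (∀ n : ℕ,
      ∑ i ∈ Finset.range (n + 1),
        ((-1 : ℚ) ^ i) • (Ribbon (1 :: List.replicate (n - i) 2) * S (2 * i)) =
          ((-1 : ℚ) ^ n) • S (2 * n + 1)) := by
  refine ⟨secant_aux, fun n => ?_⟩
  have h := congrArg (PowerSeries.coeff n) tan_cos
  rw [PowerSeries.coeff_mul, ← Finset.Nat.sum_antidiagonal_swap,
    Finset.Nat.sum_antidiagonal_eq_sum_range_succ_mk] at h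
  simpa only [sinS, cosS, tanS, PowerSeries.coeff_mk, mul_smul_comm, Prod.fst_swap,
    Prod.snd_swap] using h

end

end NCSF
end

section
/- Let n ≥ 1 and let U(glₙ) be the universal enveloping algebra over ℚ of the Lie algebra of n×n matrices over ℚ, and let e_{ij} ∈ U(glₙ) be the image of the elementary matrix unit E_{ij}. For 1 ≤ m ≤ n set f^{(m)}_{ij} := e_{ij} − (m−1)δ_{ij}·1 and, for k ≥ 1, Λ_k(ε_m) := (−1)^{k−1} Σ_{i₁,…,i_{k−1} ∈ {1,…,m−1}} f^{(m)}_{m i₁} f^{(m)}_{i₁ i₂} ⋯ f^{(m)}_{i_{k−1} m} (so for k = 1, Λ₁(ε_m) = e_{mm} − (m−1), and Λ_k(ε_m) = 0 for k > m). Then all these elements commute pairwise: Λ_k(ε_m)·Λ_{k'}(ε_{m'}) = Λ_{k'}(ε_{m'})·Λ_k(ε_m) for all k, k' ≥ 1 and all 1 ≤ m, m' ≤ n; that is, they generate a commutative subalgebra of U(glₙ) (the Gelfand–Zetlin subalgebra). -/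
open Finset

namespace GZ

noncomputable section

attribute [local instance 100] LieRing.ofAssociativeRing

variable (n : ℕ)

/-- `U(glₙ)`: the universal enveloping algebra over `ℚ` of the Lie algebra of `n×n`
matrices over `ℚ` (with bracket `[X,Y] = XY − YX`). -/
abbrev Ugl : Type := UniversalEnvelopingAlgebra ℚ (Matrix (Fin n) (Fin n) ℚ)

/-- The image `e_{ij}` in `U(glₙ)` of the elementary matrix unit `E_{ij}`. -/
def e (i j : Fin n) : Ugl n :=
  UniversalEnvelopingAlgebra.ι ℚ (Matrix.single i j (1 : ℚ))

/-- `f^{(m)}_{ij} = e_{ij} − (m−1)δ_{ij}`, where the paper's index `m ∈ {1,…,n}` is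
represented by `m : Fin n` (so that the paper's `m` is `(m : ℕ) + 1`). -/
def f (m : Fin n) (i j : Fin n) : Ugl n :=
  e n i j - if i = j then ((m : ℕ) : ℚ) • (1 : Ugl n) else 0

/-- The product `f_{c₀c₁} f_{c₁c₂} ⋯ f_{c_{k−1}c_k}` along a chain of indices. -/
def chainProd (m : Fin n) : List (Fin n) → Ugl n
  | [] => 1
  | [_] => 1
  | a :: b :: rest => f n m a b * chainProd m (b :: rest)

/-- The elementary symmetric function
`Λ_k(ε_m) = (−1)^{k−1} ∑_{i₁,…,i_{k−1} ∈ {1,…,m−1}} f_{m i₁} f_{i₁ i₂} ⋯ f_{i_{k−1} m}`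
(with `f = f^{(m)}`), the paper's index `m` being `(m : ℕ) + 1`; for `k = 1` this is
`e_{mm} − (m−1)`. -/
def Lam (k : ℕ) (m : Fin n) : Ugl n :=
  ((-1 : ℚ) ^ (k - 1)) •
    ∑ v ∈ (Finset.univ : Finset (Fin (k - 1) → Fin n)).filter
        (fun v => ∀ t, (v t : ℕ) < (m : ℕ)),
      chainProd n m (m :: (List.ofFn v ++ [m]))

section abstract_part

variable {U : Type*} [Ring U] {ι : Type*} [Fintype ι] [DecidableEq ι]

/-- The commutation relations of `gl`. -/
def GlRel (A : Matrix ι ι U) : Prop :=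
  ∀ i j p q, A i j * A p q - A p q * A i j =
    (if j = p then A i q else 0) - (if i = q then A p j else 0)

theorem GlRel.pow {A : Matrix ι ι U} (hA : GlRel A) (l : ℕ) : ∀ i j p q,
    A i j * (A ^ l) p q - (A ^ l) p q * A i j =
    (if j = p then (A ^ l) i q else 0) - (if i = q then (A ^ l) p j else 0) := by
  induction l with
  | zero =>
    intro i j p q
    simp only [pow_zero, Matrix.one_apply]
    by_cases h1 : j = p <;> by_cases h2 : i = q <;> by_cases h3 : p = q <;>
      by_cases h4 : p = j <;> simp_all
  | succ l ih =>
    intro i j p q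
    have key : A i j * (A ^ (l+1)) p q - (A ^ (l+1)) p q * A i j =
        ∑ a, ((A i j * (A ^ l) p a - (A ^ l) p a * A i j) * A a q
          + (A ^ l) p a * (A i j * A a q - A a q * A i j)) := by
      simp only [pow_succ, Matrix.mul_apply, Finset.mul_sum, Finset.sum_mul]
      rw [← Finset.sum_sub_distrib]
      refine Finset.sum_congr rfl fun a _ => ?_
      noncomm_ring
    rw [key]
    have h2 : ∀ a, (A i j * (A ^ l) p a - (A ^ l) p a * A i j) * A a q
          + (A ^ l) p a * (A i j * A a q - A a q * A i j) =
        (if j = p then (A ^ l) i a * A a q else 0)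
          - (if i = a then (A ^ l) p j * A a q else 0)
          + ((if j = a then (A ^ l) p a * A i q else 0)
          - (if i = q then (A ^ l) p a * A a j else 0)) := by
      intro a
      rw [ih, hA]
      simp only [sub_mul, mul_sub, ite_mul, mul_ite, zero_mul, mul_zero]
    rw [Finset.sum_congr rfl fun a _ => h2 a]
    simp only [Finset.sum_add_distrib, Finset.sum_sub_distrib, Finset.sum_ite_eq,
      Finset.mem_univ, if_true]
    have e1 : ∀ r s, (A ^ (l+1)) r s = ∑ a, (A ^ l) r a * A a s := fun r s => by
      rw [pow_succ, Matrix.mul_apply]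
    rw [e1, e1]
    split_ifs <;> (try rw [Finset.sum_const_zero]) <;> (try rw [Finset.sum_const_zero]) <;> abel

theorem GlRel.pow_pow {A : Matrix ι ι U} (hA : GlRel A) (k l : ℕ) : ∀ i j p q,
    (A ^ k) i j * (A ^ l) p q - (A ^ l) p q * (A ^ k) i j =
    ∑ s ∈ range k, ((A ^ (s + l)) i q * (A ^ (k - 1 - s)) p j
      - (A ^ s) i q * (A ^ (l + (k - 1 - s))) p j) := by
  induction k with
  | zero =>
    intro i j p q
    simp [Matrix.one_apply]
  | succ k ih =>
    intro i j p q
    have key : (A ^ (k+1)) i j * (A ^ l) p q - (A ^ l) p q * (A ^ (k+1)) i j =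
        ∑ a, (((A ^ k) i a * (A ^ l) p q - (A ^ l) p q * (A ^ k) i a) * A a j
          + (A ^ k) i a * (A a j * (A ^ l) p q - (A ^ l) p q * A a j)) := by
      simp only [pow_succ _ k, Matrix.mul_apply, Finset.mul_sum, Finset.sum_mul]
      rw [← Finset.sum_sub_distrib]
      refine Finset.sum_congr rfl fun a _ => ?_
      noncomm_ring
    rw [key, Finset.sum_add_distrib, Finset.sum_range_succ]
    congr 1
    · simp only [ih, Finset.sum_mul]
      rw [Finset.sum_comm]
      refine Finset.sum_congr rfl fun s hs => ?_
      have hs' : s < k := Finset.mem_range.1 hs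
      have e1 : k + 1 - 1 - s = (k - 1 - s) + 1 := by omega
      rw [e1, ← add_assoc, pow_succ _ (k - 1 - s), pow_succ _ (l + (k-1-s)), Matrix.mul_apply,
        Matrix.mul_apply, Finset.mul_sum, Finset.mul_sum, ← Finset.sum_sub_distrib]
      refine Finset.sum_congr rfl fun a _ => ?_
      noncomm_ring
    · simp only [hA.pow, mul_sub, mul_ite, mul_zero, Finset.sum_sub_distrib, Finset.sum_ite_eq',
        Finset.mem_univ, if_true]
      have e1 : k + 1 - 1 - k = 0 := by omega
      rw [e1, pow_add, Matrix.mul_apply]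
      simp only [pow_zero, Matrix.one_apply, add_zero]
      by_cases h : j = p
      · subst h; simp
      · simp [h, Ne.symm h]

theorem GlRel.diag_commute {A : Matrix ι ι U} (hA : GlRel A) (x : ι) : ∀ N k l : ℕ, k + l = N →
    (A ^ k) x x * (A ^ l) x x - (A ^ l) x x * (A ^ k) x x = 0 := by
  intro N
  induction N with
  | zero =>
    intro k l h
    obtain ⟨rfl, rfl⟩ : k = 0 ∧ l = 0 := by omega
    simp
  | succ N ih =>
    intro k l h
    rw [hA.pow_pow, Finset.sum_sub_distrib, ← Finset.sum_range_reflect, ← Finset.sum_sub_distrib]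
    refine Finset.sum_eq_zero fun s hs => ?_
    have hs' : s < k := Finset.mem_range.1 hs
    have e1 : k - 1 - (k - 1 - s) = s := by omega
    have e2 : l + (k - 1 - s) = k - 1 - s + l := by omega
    rw [e1, e2]
    exact ih _ _ (by omega)

/-- `A` with column `x` removed. -/
def cut (A : Matrix ι ι U) (x : ι) : Matrix ι ι U :=
  Matrix.of fun i j => if j = x then 0 else A i j

theorem cut_mul (A B C : Matrix ι ι U) (x : ι) (i : ι) :
    (C * (cut A x * B)) i x = (C * (A * B)) i x - (C * A) i x * B x x := by
  have h : ∀ r, (cut A x * B) r x = (A * B) r x - A r x * B x x := by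
    intro r
    rw [eq_sub_iff_add_eq]
    have : A r x * B x x = ∑ j, if j = x then A r j * B j x else 0 := by simp
    rw [this, Matrix.mul_apply, Matrix.mul_apply, ← Finset.sum_add_distrib]
    refine Finset.sum_congr rfl fun j _ => ?_
    by_cases hj : j = x <;> simp [cut, hj]
  rw [Matrix.mul_apply, Matrix.mul_apply (M := C) (N := A * B), Matrix.mul_apply (M := C) (N := A)]
  simp only [h, mul_sub, Finset.sum_sub_distrib, Finset.sum_mul, mul_assoc]

theorem cut_mem (A : Matrix ι ι U) (x : ι) (R : Subring U) (hR : ∀ k, (A ^ k) x x ∈ R) (k : ℕ) :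
    ∀ j, (cut A x ^ k * A ^ (j + 1)) x x ∈ R := by
  induction k with
  | zero => intro j; simpa using hR (j + 1)
  | succ k ih =>
    intro j
    rw [pow_succ, mul_assoc, cut_mul, ← pow_succ']
    refine R.sub_mem (ih _) (R.mul_mem ?_ (hR _))
    simpa using ih 0

theorem cut_commute {A : Matrix ι ι U} (hA : GlRel A) (x : ι) (k l : ℕ) :
    Commute ((cut A x ^ k * A) x x) ((cut A x ^ l * A) x x) := by
  have h1 : ∀ j, Commute ((A ^ j) x x) ((cut A x ^ l * A) x x) := by
    intro j
    have := cut_mem A x (Subring.centralizer {(A ^ j) x x}) (fun k => by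
      rw [Subring.mem_centralizer_iff]
      rintro _ rfl
      exact sub_eq_zero.1 (hA.diag_commute x _ j k rfl)) l 0
    rw [Subring.mem_centralizer_iff] at this
    have := this _ rfl
    simp only [zero_add, pow_one] at this
    exact this
  have := cut_mem A x (Subring.centralizer {(cut A x ^ l * A) x x}) (fun k => by
      rw [Subring.mem_centralizer_iff]
      rintro _ rfl
      exact (h1 k).symm) k 0
  rw [Subring.mem_centralizer_iff] at this
  have := this _ rfl
  simp only [zero_add, pow_one] at this
  exact this.symm

theorem cut_commute_entry {A : Matrix ι ι U} (hA : GlRel A) (x : ι) (k : ℕ) (a b : ι)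
    (ha : a ≠ x) (hb : b ≠ x) :
    Commute ((cut A x ^ k * A) x x) (A a b) := by
  have := cut_mem A x (Subring.centralizer {A a b}) (fun k => by
      rw [Subring.mem_centralizer_iff]
      rintro _ rfl
      have := hA.pow k a b x x
      rw [if_neg ha, if_neg hb, sub_zero] at this
      exact sub_eq_zero.1 this) k 0
  rw [Subring.mem_centralizer_iff] at this
  have := this _ rfl
  simp only [zero_add, pow_one] at this
  exact this.symm

end abstract_part

theorem e_rel (i j p q : Fin n) : e n i j * e n p q - e n p q * e n i j =
    (if j = p then e n i q else 0) - (if i = q then e n p j else 0) := by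
  have h := LieHom.map_lie (UniversalEnvelopingAlgebra.ι ℚ : Matrix (Fin n) (Fin n) ℚ →ₗ⁅ℚ⁆ Ugl n)
    (Matrix.single i j (1 : ℚ)) (Matrix.single p q (1 : ℚ))
  rw [LieRing.of_associative_ring_bracket, LieRing.of_associative_ring_bracket] at h
  unfold e
  rw [← h, map_sub]
  congr 1
  · by_cases hh : j = p
    · subst hh; simp
    · simp [hh]
  · by_cases hh : i = q
    · subst hh; simp
    · simp [hh, Ne.symm hh]

theorem f_eq (m i j : Fin n) : f n m i j = e n i j - algebraMap ℚ (Ugl n) (if i = j then ((m : ℕ) : ℚ) else 0) := by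
  unfold f
  split_ifs
  · rw [Algebra.algebraMap_eq_smul_one]
  · rw [map_zero]

theorem f_rel (m : Fin n) : GlRel (U := Ugl n) (Matrix.of (f n m)) := by
  intro i j p q
  simp only [Matrix.of_apply]
  have h : f n m i j * f n m p q - f n m p q * f n m i j
      = e n i j * e n p q - e n p q * e n i j := by
    rw [f_eq, f_eq]
    have c1 := Algebra.commutes (if i = j then ((m : ℕ) : ℚ) else 0) (e n p q)
    have c2 := Algebra.commutes (if p = q then ((m : ℕ) : ℚ) else 0) (e n i j)
    have c3 := Algebra.commutes (A := Ugl n) (if i = j then ((m : ℕ) : ℚ) else 0)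
      (algebraMap ℚ (Ugl n) (if p = q then ((m : ℕ) : ℚ) else 0))
    simp only [sub_mul, mul_sub]
    rw [c1, c2, c3]
    abel
  rw [h, e_rel]
  unfold f
  by_cases h1 : j = p <;> by_cases h2 : i = q
  · subst h1; subst h2
    simp
  · subst h1
    simp [h2]
  · subst h2
    simp [h1, Ne.symm h1]
  · simp [h1, h2]

/-- Index set `{0,…,m}`. -/
abbrev Idx (m : Fin n) : Type := {i : Fin n // i ≤ m}

/-- The truncated matrix. -/
def Am (m : Fin n) : Matrix (Idx n m) (Idx n m) (Ugl n) := Matrix.of fun i j => f n m i j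

theorem Am_rel (m : Fin n) : GlRel (Am n m) := by
  intro i j p q
  have := f_rel n m i j p q
  simpa [Am, Subtype.ext_iff] using this

/-- The chain sum started at `i`. -/
def chainSum (m : Fin n) (k : ℕ) (i : Fin n) : Ugl n :=
  ∑ v ∈ (Finset.univ : Finset (Fin k → Fin n)).filter
        (fun v => ∀ t, (v t : ℕ) < (m : ℕ)),
      chainProd n m (i :: (List.ofFn v ++ [m]))

theorem chainSum_succ (m : Fin n) (k : ℕ) (i : Fin n) :
    chainSum n m (k + 1) i = ∑ j, if j < m then f n m i j * chainSum n m k j else 0 := by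
  unfold chainSum
  rw [Finset.sum_filter, ← (Fin.consEquiv fun _ => Fin n).sum_comp, Fintype.sum_prod_type]
  refine Finset.sum_congr rfl fun j _ => ?_
  split_ifs with hj
  · rw [Finset.mul_sum, Finset.sum_filter]
    refine Finset.sum_congr rfl fun v _ => ?_
    simp [Fin.consEquiv, Fin.forall_fin_succ, hj, List.ofFn_succ, chainProd]
  · refine Finset.sum_eq_zero fun v _ => ?_
    have hj' : ¬ (j : ℕ) < m := hj
    simp only [Fin.consEquiv, Fin.forall_fin_succ]
    simp [hj']

theorem chainSum_eq (m : Fin n) (k : ℕ) : ∀ i : Idx n m,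
    chainSum n m k i = (cut (Am n m) ⟨m, le_refl m⟩ ^ k * Am n m) i ⟨m, le_refl m⟩ := by
  induction k with
  | zero =>
    intro i
    simp [chainSum, chainProd, Am]
  | succ k ih =>
    intro i
    rw [chainSum_succ, pow_succ', mul_assoc, Matrix.mul_apply]
    have h : ∀ j : Fin n, (if j < m then f n m i j * chainSum n m k j else 0) =
        if j ≤ m then (if j < m then f n m i j * chainSum n m k j else 0) else 0 := by
      intro j
      by_cases h1 : j < m
      · simp [h1, h1.le]
      · simp [h1]
    rw [Finset.sum_congr rfl fun j _ => h j, ← Finset.sum_filter,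
      Finset.sum_subtype (p := fun j => j ≤ m) _ (by simp)]
    refine Finset.sum_congr rfl fun j _ => ?_
    rw [← ih]
    by_cases h1 : (j : Fin n) = m
    · simp [cut, Subtype.ext_iff, h1]
    · have : (j : Fin n) < m := lt_of_le_of_ne j.2 h1
      simp [cut, Subtype.ext_iff, h1, this, Am]

theorem Lam_eq (k : ℕ) (m : Fin n) :
    Lam n k m = ((-1 : ℚ) ^ (k - 1)) • chainSum n m (k - 1) m := rfl

theorem chainProd_commute (m : Fin n) (z : Ugl n) (S : Fin n → Prop)
    (hz : ∀ a b, S a → S b → Commute z (f n m a b)) :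
    ∀ L : List (Fin n), (∀ a ∈ L, S a) → Commute z (chainProd n m L)
  | [], _ => by simp [chainProd]
  | [_], _ => by simp [chainProd]
  | a :: b :: rest, h => by
    rw [chainProd]
    refine (hz a b (h a (by simp)) (h b (by simp))).mul_right ?_
    exact chainProd_commute m z S hz (b :: rest) fun c hc => h c (List.mem_cons_of_mem _ hc)

theorem chainSum_commute_lt (m m' : Fin n) (hm : m' < m) (k k' : ℕ) :
    Commute (chainSum n m k m) (chainSum n m' k' m') := by
  have hf : ∀ a b, a ≤ m' → b ≤ m' → Commute (chainSum n m k m) (f n m' a b) := by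
    intro a b ha hb
    have ha' := lt_of_le_of_lt ha hm
    have hb' := lt_of_le_of_lt hb hm
    have h1 := cut_commute_entry (Am_rel n m) ⟨m, le_refl m⟩ k ⟨a, ha'.le⟩ ⟨b, hb'.le⟩
      (by simpa using ha'.ne) (by simpa using hb'.ne)
    rw [← chainSum_eq n m k ⟨m, le_refl m⟩] at h1
    have h2 : f n m' a b = f n m a b + algebraMap ℚ (Ugl n)
        ((if a = b then ((m : ℕ) : ℚ) else 0) - (if a = b then ((m' : ℕ) : ℚ) else 0)) := by
      rw [f_eq, f_eq, map_sub]
      abel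
    rw [h2]
    exact Commute.add_right h1 (Algebra.commutes _ _).symm
  conv => arg 2; unfold chainSum
  refine Commute.sum_right _ _ _ fun v hv => ?_
  refine chainProd_commute n m' _ (fun a => a ≤ m') hf _ ?_
  intro a ha
  simp only [Finset.mem_filter, Finset.mem_univ, true_and] at hv
  simp only [List.mem_cons, List.mem_append, List.mem_ofFn, List.not_mem_nil, or_false] at ha
  rcases ha with rfl | ⟨t, rfl⟩ | rfl
  · exact le_refl _
  · exact (show v t < m' from hv t).le
  · exact le_refl _

theorem chainSum_commute (m m' : Fin n) (k k' : ℕ) :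
    Commute (chainSum n m k m) (chainSum n m' k' m') := by
  rcases lt_trichotomy m m' with h | rfl | h
  · exact (chainSum_commute_lt n m' m h k' k).symm
  · have := cut_commute (Am_rel n m) ⟨m, le_refl m⟩ k k'
    rwa [← chainSum_eq n m k ⟨m, le_refl m⟩, ← chainSum_eq n m k' ⟨m, le_refl m⟩] at this
  · exact chainSum_commute_lt n m m' h k k'

/-- **The Gelfand–Zetlin subalgebra is commutative**: the elementary symmetric functions
`Λ_k(ε_m)` associated with the matrices `E₁, E₂−I, …, Eₙ−(n−1)I` of generators of
`U(glₙ)` commute pairwise. -/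
theorem gelfand_zetlin_commute :
    ∀ (k k' : ℕ), 1 ≤ k → 1 ≤ k' → ∀ (m m' : Fin n),
      Lam n k m * Lam n k' m' = Lam n k' m' * Lam n k m := by
  intro k k' _ _ m m'
  rw [Lam_eq, Lam_eq]
  exact ((chainSum_commute n m m' (k - 1) (k' - 1)).smul_left _).smul_right _

end

end GZ
end
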